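/- For every integer K > 1 there exists a C^K diffeomorphism T of the torus 𝕋² preserving the Haar–Lebesgue probability measure λ such that T is weakly mixing with respect to λ and the upper topological slow entropy of T with respect to the polynomial scaling family a^{pol}_m(t) = m^t satisfies 1/K⁵ ≤ ent̄^top_{a^{pol}}(T) < 1/(K⁵−2). -/

import Mathlib

open MeasureTheory Filter Set
open scoped Topology ENNReal NNReal

noncomputable section

/-- The Bowen metric `d_n^T(x,y) = max_{0 ≤ i ≤ n-1} d(T^i x, T^i y)`. -/
def bowenDist {X : Type*} [PseudoMetricSpace X] (T : X → X) (n : ℕ) (x y : X) : ℝ :=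
  (((Finset.range n).sup fun i => nndist (T^[i] x) (T^[i] y)) : ℝ≥0)

/-- `N_{d_n^T}(ε)`: the minimal number of `(ε,n)`-Bowen balls of `T` needed to cover the
whole space. -/
def bowenCoverNum {X : Type*} [PseudoMetricSpace X] (T : X → X) (n : ℕ) (ε : ℝ) : ℕ :=
  sInf {N : ℕ | ∃ F : Finset X, F.card = N ∧ ∀ y : X, ∃ x ∈ F, bowenDist T n x y < ε}

/-- `N(ε)`: the supremum (`0` if the set is empty, by the `Real.sSup` convention) of all
`t > 0` such that `limsup_n N_{d_n^T}(ε) / a_n(t) > 0`. -/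
def topSlowEntFun {X : Type*} [PseudoMetricSpace X] (T : X → X) (a : ℕ → ℝ → ℝ) (ε : ℝ) : ℝ :=
  sSup {t : ℝ | 0 < t ∧
    0 < Filter.atTop.limsup fun n => (bowenCoverNum T n ε : ℝ≥0∞) / ENNReal.ofReal (a n t)}

/-- The upper topological slow entropy of `T` with respect to the scaling family `a`
equals `E`, i.e. `N(ε) → E` as `ε → 0⁺`. -/
def HasUpperTopSlowEntropy {X : Type*} [PseudoMetricSpace X] (T : X → X)
    (a : ℕ → ℝ → ℝ) (E : ℝ) : Prop :=
  Filter.Tendsto (topSlowEntFun T a) (𝓝[>] (0 : ℝ)) (𝓝 E)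

/-- The circle `𝕋¹ = ℝ/ℤ` with its quotient metric and Haar–Lebesgue probability
measure `volume`. -/
abbrev Torus1 : Type := AddCircle (1 : ℝ)

/-- The 2-torus `𝕋² = ℝ²/ℤ²`, with its quotient (flat) metric, its Borel σ-algebra and
its Haar–Lebesgue probability measure `volume`. -/
abbrev Torus2 : Type := AddCircle (1 : ℝ) × AddCircle (1 : ℝ)

/-- Canonical projection `ℝ² → 𝕋²`. -/
def torusProj : ℝ × ℝ → Torus2 := fun p => ((p.1 : Torus1), (p.2 : Torus1))

/-- `F : ℝ² → ℝ²` is a lift of `T : 𝕋² → 𝕋²`. -/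
def IsLiftOf (F : ℝ × ℝ → ℝ × ℝ) (T : Torus2 → Torus2) : Prop :=
  ∀ p, torusProj (F p) = T (torusProj p)

/-- `T` is a `C^k` diffeomorphism of the torus: it is a bijection and both `T` and `T⁻¹`
admit `C^k` lifts to the universal cover `ℝ²`. -/
def IsCkTorusDiffeo (k : ℕ∞) (T : Torus2 → Torus2) : Prop :=
  Function.Bijective T ∧
  (∃ F : ℝ × ℝ → ℝ × ℝ, ContDiff ℝ k F ∧ IsLiftOf F T) ∧
  (∃ G : ℝ × ℝ → ℝ × ℝ, ContDiff ℝ k G ∧ IsLiftOf G (Function.invFun T))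

/-- `T` is weakly mixing w.r.t. the measure `μ`: `T × T` is ergodic for `μ × μ`. -/
def WeaklyMixing {X : Type*} [MeasurableSpace X] (T : X → X) (μ : Measure X) : Prop :=
  Ergodic (fun p : X × X => (T p.1, T p.2)) (μ.prod μ)

/-- `T` is uniquely ergodic with the Haar–Lebesgue measure `volume` as its unique
invariant Borel probability measure. -/
def UniquelyErgodicWithVolume (T : Torus2 → Torus2) : Prop :=
  MeasurePreserving T volume volume ∧
  ∀ μ : Measure Torus2, IsProbabilityMeasure μ → MeasurePreserving T μ μ → μ = volume

/-- `T` (preserving the Haar measure `volume` on `𝕋²`) is measure-theoretically isomorphic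
to the rotation of the circle `𝕋¹ = ℝ/ℤ` by some irrational number `α`. -/
def IsoToIrrationalRotation (T : Torus2 → Torus2) : Prop :=
  ∃ α : ℝ, Irrational α ∧
    ∃ (A : Set Torus2) (B : Set Torus1) (ψ : Torus2 → Torus1) (φ : Torus1 → Torus2),
      MeasurableSet A ∧ MeasurableSet B ∧
      volume Aᶜ = 0 ∧ volume Bᶜ = 0 ∧
      Set.MapsTo T A A ∧ Set.MapsTo (fun y : Torus1 => y + (α : Torus1)) B B ∧
      Measurable ψ ∧ Measurable φ ∧
      Set.MapsTo ψ A B ∧ Set.MapsTo φ B A ∧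
      (∀ x ∈ A, φ (ψ x) = x) ∧ (∀ y ∈ B, ψ (φ y) = y) ∧
      Measure.map ψ volume = volume ∧
      (∀ x ∈ A, ψ (T x) = ψ x + (α : Torus1))

/-- A finite measurable partition of `X`. -/
structure FinMeasPartition (X : Type*) [MeasurableSpace X] where
  card : ℕ
  piece : Fin card → Set X
  measurable : ∀ i, MeasurableSet (piece i)
  disjoint : Pairwise fun i j => Disjoint (piece i) (piece j)
  cover : (⋃ i, piece i) = Set.univ

open Classical in
/-- The normalized Hamming distance between the length-`n` `P`-codings of the `T`-orbits
of `x` and `y` (the codings differ at time `k` iff `T^k x` and `T^k y` lie in different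
pieces of `P`). -/
def codeHammingDist {X : Type*} [MeasurableSpace X] (T : X → X) (P : FinMeasPartition X)
    (n : ℕ) (x y : X) : ℝ :=
  (((Finset.range n).filter fun k =>
      ¬ ∃ i, T^[k] x ∈ P.piece i ∧ T^[k] y ∈ P.piece i).card : ℝ) / n

/-- `S^H_P(T,n,ε)`: the minimal number of `(ε,n)`-Hamming balls whose union has
`μ`-measure greater than `1 - ε`. -/
def hammingCoverNum {X : Type*} [MeasurableSpace X] (μ : Measure X) (T : X → X)
    (P : FinMeasPartition X) (n : ℕ) (ε : ℝ) : ℕ :=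
  sInf {N : ℕ | ∃ F : Finset X, F.card = N ∧
    ENNReal.ofReal (1 - ε) < μ (⋃ x ∈ F, {y | codeHammingDist T P n x y < ε})}

/-- For a fixed partition `P` and `ε > 0`: the supremum (with the `Real.sSup` convention,
`0` if the set is empty) of all `t > 0` with `limsup_n S^H_P(T,n,ε)/a_n(t) > 0`. -/
def measSlowEntFun {X : Type*} [MeasurableSpace X] (μ : Measure X) (T : X → X)
    (a : ℕ → ℝ → ℝ) (P : FinMeasPartition X) (ε : ℝ) : ℝ :=
  sSup {t : ℝ | 0 < t ∧
    0 < Filter.atTop.limsup fun n =>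
      (hammingCoverNum μ T P n ε : ℝ≥0∞) / ENNReal.ofReal (a n t)}

/-- The upper measure-theoretic slow entropy of `(T,μ)` w.r.t. the scaling family `a`
equals `E`: for every finite measurable partition the limit as `ε → 0⁺` exists, and the
least upper bound over all partitions of these limits is `E`. -/
def HasUpperMeasSlowEntropy {X : Type*} [MeasurableSpace X] (μ : Measure X) (T : X → X)
    (a : ℕ → ℝ → ℝ) (E : ℝ) : Prop :=
  (∀ P : FinMeasPartition X, ∃ e : ℝ,
      Filter.Tendsto (measSlowEntFun μ T a P) (𝓝[>] (0 : ℝ)) (𝓝 e)) ∧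
  IsLUB {e : ℝ | ∃ P : FinMeasPartition X,
      Filter.Tendsto (measSlowEntFun μ T a P) (𝓝[>] (0 : ℝ)) (𝓝 e)} E

/-- `Γ_r(x) = (Γ(x^{1/r} + 1))^r`, where `Γ` is the Euler Gamma function. -/
def GammaR (r : ℕ) (x : ℝ) : ℝ := (Real.Gamma (x ^ ((r : ℝ)⁻¹) + 1)) ^ r

/-- The inverse of `Γ_r` on `[1,∞)` (where `Γ_r` is strictly increasing with `Γ_r 1 = 1`). -/
def GammaRInv (r : ℕ) (y : ℝ) : ℝ := sSup {x : ℝ | 1 ≤ x ∧ GammaR r x ≤ y}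

/-- The intermediate scaling family `a^{int1,r}_m(t) = m^(t / Γ_r⁻¹(ln m / ln q₁))`. -/
def intScale1 (r q₁ : ℕ) (m : ℕ) (t : ℝ) : ℝ :=
  (m : ℝ) ^ (t / GammaRInv r (Real.log m / Real.log q₁))

/-- The intermediate scaling family
`a^{int2,r}_m(t) = m^(t / (Γ_r⁻¹(ln m / ln q₁))^((r-2)/r))`. -/
def intScale2 (r q₁ : ℕ) (m : ℕ) (t : ℝ) : ℝ :=
  (m : ℝ) ^ (t / GammaRInv r (Real.log m / Real.log q₁) ^ (((r : ℝ) - 2) / (r : ℝ)))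

/-- The logarithmic scaling family `a^{ln}_m(t) = (ln m)^t`. -/
def logScale (m : ℕ) (t : ℝ) : ℝ := Real.log m ^ t

/-- The polynomial scaling family `a^{pol}_m(t) = m^t`. -/
def polScale (m : ℕ) (t : ℝ) : ℝ := (m : ℝ) ^ t

end

noncomputable section SlowTSec1

namespace SlowT

/-- Arithmetic data on which the construction depends. -/
structure Data (t : ℝ) where
  q : ℕ → ℕ
  r : ℕ → ℕ
  α : ℝ
  β : ℕ → ℝ
  c : ℕ → ℝ
  t_pos : 0 < t
  t_le : t ≤ 1 / 2
  q_pos : ∀ k, 0 < q k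
  r_pos : ∀ k, 0 < r k
  r_le : ∀ k, r k ≤ 2 * q k
  α_nonneg : 0 ≤ α
  α_le : α ≤ 2
  α_irr : Irrational α
  hβ : ∀ k, β k = q k * α - r k
  β_pos : ∀ k, 0 < β k
  β_le : ∀ k, β k ≤ 1
  β_lim : Tendsto β atTop (𝓝 0)
  hc : ∀ k, c k = β k ^ (1 - t)
  c_summable : Summable c
  c_tsum : ∑' k, c k ≤ 1 / 10
  c_smooth : ∀ M : ℕ, Summable fun k => c k * (q k : ℝ) ^ M
  qβ_summable : ∀ δ : ℝ, 0 < δ → Summable fun k => (q k : ℝ) * β k ^ δ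
  tail : ∀ k, ∑' j, c (j + (k + 1)) ≤ β k ^ 2
  q_lim : Tendsto (fun k => (q k : ℝ)) atTop atTop
  low1 : Tendsto (fun k => (∑ j ∈ Finset.range k, c j / β j * q j) / q k) atTop (𝓝 0)
  low2 : Tendsto (fun k => (∑ j ∈ Finset.range k, c j / β j) / (c k / β k)) atTop (𝓝 0)

/-- sine on the circle -/
def sn (θ : Torus1) : ℝ := ((AddCircle.toCircle θ : Circle) : ℂ).im
/-- cosine on the circle -/
def cs (θ : Torus1) : ℝ := ((AddCircle.toCircle θ : Circle) : ℂ).re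

lemma sn_coe (x : ℝ) : sn (x : Torus1) = Real.sin (2 * Real.pi * x) := by
  simp only [sn, AddCircle.toCircle_apply_mk, Circle.coe_exp, div_one]
  exact Complex.exp_ofReal_mul_I_im _

lemma cs_coe (x : ℝ) : cs (x : Torus1) = Real.cos (2 * Real.pi * x) := by
  simp only [cs, AddCircle.toCircle_apply_mk, Circle.coe_exp, div_one]
  exact Complex.exp_ofReal_mul_I_re _

lemma continuous_sn : Continuous sn :=
  Complex.continuous_im.comp (continuous_subtype_val.comp AddCircle.continuous_toCircle)

lemma continuous_cs : Continuous cs :=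
  Complex.continuous_re.comp (continuous_subtype_val.comp AddCircle.continuous_toCircle)

lemma exists_rep (θ : Torus1) : ∃ x : ℝ, (x : Torus1) = θ := QuotientAddGroup.mk_surjective θ

lemma abs_sn_le (θ : Torus1) : |sn θ| ≤ 1 := by
  obtain ⟨x, rfl⟩ := exists_rep θ
  rw [sn_coe]; exact Real.abs_sin_le_one _

lemma abs_cs_le (θ : Torus1) : |cs θ| ≤ 1 := by
  obtain ⟨x, rfl⟩ := exists_rep θ
  rw [cs_coe]; exact Real.abs_cos_le_one _

lemma exists_norm_rep (θ : Torus1) : ∃ x : ℝ, (x : Torus1) = θ ∧ |x| = ‖θ‖ := by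
  obtain ⟨x, rfl⟩ := exists_rep θ
  refine ⟨x - round x, ?_, ?_⟩
  · rw [AddCircle.coe_sub, sub_eq_self, AddCircle.coe_eq_zero_iff]
    exact ⟨round x, by simp⟩
  · rw [AddCircle.norm_eq]; simp

lemma norm_coe_le (x : ℝ) : ‖(x : Torus1)‖ ≤ |x| := by
  rw [AddCircle.norm_eq]
  simpa using round_le x 0

lemma norm_coe_eq {x : ℝ} (h : |x| ≤ 1 / 2) : ‖(x : Torus1)‖ = |x| := by
  rw [AddCircle.norm_coe_eq_abs_iff]
  · simpa using h
  · norm_num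

lemma sin_sub_sin_le (a b : ℝ) : |Real.sin a - Real.sin b| ≤ |a - b| := by
  have h := Real.sin_sub_sin a b
  rw [h, abs_mul, abs_mul, abs_two]
  have h1 := Real.abs_cos_le_one ((a + b) / 2)
  have h2 : |Real.sin ((a - b) / 2)| ≤ |(a - b) / 2| := Real.abs_sin_le_abs
  rw [abs_div, abs_two] at h2
  have := abs_nonneg (Real.sin ((a - b) / 2))
  have := abs_nonneg (Real.cos ((a + b) / 2))
  nlinarith

lemma sn_sub_le (θ θ' : Torus1) : |sn θ - sn θ'| ≤ 2 * Real.pi * ‖θ - θ'‖ := by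
  obtain ⟨x, rfl⟩ := exists_rep θ'
  obtain ⟨y, hy, hy'⟩ := exists_norm_rep (θ - x)
  have : θ = ((x + y : ℝ) : Torus1) := by
    rw [AddCircle.coe_add, hy]; abel
  rw [← hy', this, sn_coe, sn_coe]
  refine (sin_sub_sin_le _ _).trans (le_of_eq ?_)
  rw [← mul_sub, abs_mul, abs_of_pos Real.two_pi_pos]; simp

/-- `sn (θ + u) - sn θ` second order difference -/
lemma sn_diff (θ : Torus1) (u w : ℝ) :
    |sn (θ + u) - sn (θ + w)| ≤ 2 * Real.pi * |u - w| := by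
  refine (sn_sub_le _ _).trans ?_
  gcongr
  rw [show θ + (u : Torus1) - (θ + (w : Torus1)) = ((u - w : ℝ) : Torus1) by
    rw [AddCircle.coe_sub]; abel]
  exact norm_coe_le _

variable {t : ℝ} (D : Data t)

/-- the phases -/
def th (k : ℕ) : Torus2 →+ Torus1 where
  toFun p := D.q k • p.1 - D.r k • p.2
  map_zero' := by simp
  map_add' a b := by simp only [Prod.fst_add, Prod.snd_add, smul_add]; abel

lemma th_apply (k : ℕ) (p : Torus2) : th D k p = D.q k • p.1 - D.r k • p.2 := rfl

lemma continuous_th (k : ℕ) : Continuous (th D k) := by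
  change Continuous fun p : Torus2 => D.q k • p.1 - D.r k • p.2
  fun_prop

/-- the linear flow -/
def vv (τ : ℝ) : Torus2 := (((D.α * τ : ℝ) : Torus1), (τ : Torus1))

lemma vv_add (a b : ℝ) : vv D (a + b) = vv D a + vv D b := by
  simp only [vv, mul_add, AddCircle.coe_add, Prod.mk_add_mk]

lemma vv_zero : vv D 0 = 0 := by simp [vv]

lemma continuous_vv : Continuous (vv D) := by
  unfold vv
  refine Continuous.prodMk ?_ ?_
  · exact (AddCircle.continuous_mk' 1).comp (by fun_prop)
  · exact (AddCircle.continuous_mk' 1)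

lemma norm_vv_le (τ : ℝ) : ‖vv D τ‖ ≤ 2 * |τ| := by
  rw [Prod.norm_def]
  refine max_le ?_ ?_
  · refine (norm_coe_le _).trans ?_
    rw [abs_mul, abs_of_nonneg D.α_nonneg]
    gcongr; exact D.α_le
  · refine (norm_coe_le _).trans ?_
    have := abs_nonneg τ; linarith

lemma th_vv (k : ℕ) (τ : ℝ) : th D k (vv D τ) = ((D.β k * τ : ℝ) : Torus1) := by
  rw [th_apply, vv]
  simp only
  rw [← AddCircle.coe_nsmul, ← AddCircle.coe_nsmul, ← AddCircle.coe_sub]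
  congr 1
  rw [D.hβ]; simp only [nsmul_eq_mul]; ring

lemma c_pos (k : ℕ) : 0 < D.c k := by rw [D.hc]; exact Real.rpow_pos_of_pos (D.β_pos k) _

/-- the `k`-th term of the cocycle -/
def gk (k : ℕ) (p : Torus2) (τ : ℝ) : ℝ :=
  D.c k / (2 * Real.pi * D.β k) * (sn (th D k p + ((D.β k * τ : ℝ) : Torus1)) - sn (th D k p))

/-- coefficient of gk -/
lemma coef_pos (k : ℕ) : 0 < D.c k / (2 * Real.pi * D.β k) :=
  div_pos (c_pos D k) (mul_pos Real.two_pi_pos (D.β_pos k))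

lemma gk_zero (k : ℕ) (p : Torus2) : gk D k p 0 = 0 := by simp [gk]

lemma gk_add (k : ℕ) (p : Torus2) (τ σ : ℝ) :
    gk D k p (τ + σ) = gk D k p τ + gk D k (p + vv D τ) σ := by
  simp only [gk, map_add, th_vv, mul_add, AddCircle.coe_add, add_assoc]; ring

lemma gk_lip (k : ℕ) (p : Torus2) (τ σ : ℝ) : |gk D k p τ - gk D k p σ| ≤ D.c k * |τ - σ| := by
  unfold gk
  rw [← mul_sub, sub_sub_sub_cancel_right, abs_mul, abs_of_pos (coef_pos D k)]
  calc _ ≤ D.c k / (2 * Real.pi * D.β k) * (2 * Real.pi * |D.β k * τ - D.β k * σ|) := by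
        have := (coef_pos D k).le
        gcongr
        exact sn_diff _ _ _
    _ = _ := by
        rw [← mul_sub, abs_mul, abs_of_pos (D.β_pos k)]
        have := D.β_pos k; have := Real.pi_pos
        field_simp

lemma gk_bound (k : ℕ) (p : Torus2) (τ : ℝ) : |gk D k p τ| ≤ D.c k * |τ| := by
  simpa [gk_zero] using gk_lip D k p τ 0

lemma gk_bound2 (k : ℕ) (p : Torus2) (τ : ℝ) : |gk D k p τ| ≤ D.c k / D.β k := by
  unfold gk
  rw [abs_mul, abs_of_pos (coef_pos D k)]
  calc _ ≤ D.c k / (2 * Real.pi * D.β k) * 2 := by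
        have := (coef_pos D k).le
        gcongr
        refine (abs_sub _ _).trans ?_
        linarith [abs_sn_le (th D k p + ((D.β k * τ : ℝ) : Torus1)), abs_sn_le (th D k p)]
    _ = D.c k / D.β k / Real.pi := by
        have := D.β_pos k; have := Real.pi_pos
        field_simp
    _ ≤ _ := div_le_self (div_pos (c_pos D k) (D.β_pos k)).le (by linarith [Real.pi_gt_three])

lemma summable_gk (p : Torus2) (τ : ℝ) : Summable fun k => gk D k p τ :=
  Summable.of_norm_bounded (D.c_summable.mul_right |τ|) fun k => by
    rw [Real.norm_eq_abs]; exact gk_bound D k p τ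

/-- the cocycle -/
def GG (p : Torus2) (τ : ℝ) : ℝ := τ + ∑' k, gk D k p τ

lemma GG_zero (p : Torus2) : GG D p 0 = 0 := by simp [GG, gk_zero]

lemma GG_add (p : Torus2) (τ σ : ℝ) : GG D p (τ + σ) = GG D p τ + GG D (p + vv D τ) σ := by
  simp only [GG, gk_add]
  rw [(summable_gk D p τ).tsum_add (summable_gk D _ σ)]; ring

lemma GG_lip (p : Torus2) (τ σ : ℝ) :
    |(GG D p τ - GG D p σ) - (τ - σ)| ≤ |τ - σ| / 10 := by
  have h : (GG D p τ - GG D p σ) - (τ - σ) = ∑' k, (gk D k p τ - gk D k p σ) := by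
    rw [(summable_gk D p τ).tsum_sub (summable_gk D p σ)]; simp only [GG]; ring
  rw [h, ← Real.norm_eq_abs]
  refine (tsum_of_norm_bounded (D.c_summable.mul_right |τ - σ|).hasSum
    (fun k => by rw [Real.norm_eq_abs]; exact gk_lip D k p τ σ)).trans ?_
  rw [tsum_mul_right]
  have := D.c_tsum
  have := abs_nonneg (τ - σ)
  nlinarith

lemma continuous_GG (τ : ℝ) : Continuous fun p => GG D p τ := by
  unfold GG
  refine continuous_const.add (continuous_tsum (u := fun k => D.c k * |τ|) ?_
    (D.c_summable.mul_right |τ|) fun k p => by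
      rw [Real.norm_eq_abs]; exact gk_bound D k p τ)
  intro k
  unfold gk
  have := continuous_th D k
  have := continuous_sn
  fun_prop

/-- perturbations of the identity of the line are bijective -/
lemma exists_solution {g : ℝ → ℝ} (hg : ∀ a b, |(g a - g b) - (a - b)| ≤ |a - b| / 10) (s : ℝ) :
    ∃ τ, g τ = s := by
  have hc : Continuous g := by
    have : LipschitzWith 2 g := LipschitzWith.of_dist_le_mul fun a b => by
      rw [Real.dist_eq, Real.dist_eq]
      have h1 := hg a b
      have h2 := abs_add_le ((g a - g b) - (a - b)) (a - b)
      simp only [sub_add_cancel] at h2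
      have := abs_nonneg (a - b)
      norm_num; linarith
    exact this.continuous
  have key : ∀ a, 0 ≤ a → g 0 + a / 2 ≤ g a ∧ g (-a) ≤ g 0 - a / 2 := by
    intro a ha
    have h1 := abs_le.1 (hg a 0)
    have h2 := abs_le.1 (hg (-a) 0)
    simp only [sub_zero, abs_neg, abs_of_nonneg ha] at h1 h2
    constructor <;> linarith
  set a := 2 * |s - g 0| with ha
  have ha0 : 0 ≤ a := by positivity
  obtain ⟨h1, h2⟩ := key a ha0
  have h3 := abs_le.1 (le_refl |s - g 0|)
  have := intermediate_value_Icc (by linarith : -a ≤ a) hc.continuousOn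
  obtain ⟨τ, -, h⟩ := this (show s ∈ Icc (g (-a)) (g a) from ⟨by linarith, by linarith⟩)
  exact ⟨τ, h⟩

lemma pert_lower {g : ℝ → ℝ} (hg : ∀ a b, |(g a - g b) - (a - b)| ≤ |a - b| / 10) (a b : ℝ) :
    |a - b| ≤ 10 / 9 * |g a - g b| := by
  have h1 := hg a b
  have h2 := abs_sub_abs_le_abs_sub (a - b) (g a - g b)
  rw [abs_sub_comm (a - b)] at h2
  linarith

lemma pert_upper {g : ℝ → ℝ} (hg : ∀ a b, |(g a - g b) - (a - b)| ≤ |a - b| / 10) (a b : ℝ) :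
    |g a - g b| ≤ 11 / 10 * |a - b| := by
  have h1 := hg a b
  have h2 := abs_sub_abs_le_abs_sub (g a - g b) (a - b)
  linarith

/-- inverse of the cocycle -/
def tau (p : Torus2) (s : ℝ) : ℝ := (exists_solution (GG_lip D p) s).choose

lemma GG_tau (p : Torus2) (s : ℝ) : GG D p (tau D p s) = s :=
  (exists_solution (GG_lip D p) s).choose_spec

lemma GG_inj {p : Torus2} {a b : ℝ} (h : GG D p a = GG D p b) : a = b := by
  have := pert_lower (GG_lip D p) a b
  rw [h, sub_self, abs_zero, mul_zero] at this
  exact sub_eq_zero.1 (abs_nonpos_iff.1 this)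

lemma tau_GG (p : Torus2) (τ : ℝ) : tau D p (GG D p τ) = τ := GG_inj D (GG_tau D _ _)

lemma tau_zero (p : Torus2) : tau D p 0 = 0 := by
  have := tau_GG D p 0; rwa [GG_zero] at this

lemma tau_diff (p p' : Torus2) (s s' : ℝ) :
    |tau D p s - tau D p' s'| ≤
      10 / 9 * (|s - s'| + |GG D p (tau D p' s') - GG D p' (tau D p' s')|) := by
  refine (pert_lower (GG_lip D p) _ _).trans ?_
  rw [GG_tau, GG_tau]
  gcongr
  rw [show s - GG D p (tau D p' s') = (s - s') - (GG D p (tau D p' s') - s') by ring]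
  exact abs_sub _ _

lemma continuous_tau : Continuous fun x : Torus2 × ℝ => tau D x.1 x.2 := by
  rw [continuous_iff_continuousAt]
  rintro ⟨p', s'⟩
  rw [ContinuousAt, tendsto_iff_dist_tendsto_zero]
  refine squeeze_zero (g := fun x : Torus2 × ℝ =>
    10 / 9 * (|x.2 - s'| + |GG D x.1 (tau D p' s') - GG D p' (tau D p' s')|))
    (fun _ => dist_nonneg) (fun x => ?_) ?_
  · rw [Real.dist_eq]; exact tau_diff D x.1 p' x.2 s'
  · have h := continuous_GG D (tau D p' s')
    have : Continuous fun x : Torus2 × ℝ =>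
      10 / 9 * (|x.2 - s'| + |GG D x.1 (tau D p' s') - GG D p' (tau D p' s')|) := by fun_prop
    have := this.tendsto (p', s')
    simpa using this

attribute [irreducible] sn cs gk GG tau vv

lemma cont_tau_comp {Y : Type*} [TopologicalSpace Y] {f : Y → Torus2} {g : Y → ℝ}
    (hf : Continuous f) (hg : Continuous g) : Continuous fun y => tau D (f y) (g y) := by
  have h1 : Continuous fun y => (f y, g y) := hf.prodMk hg
  have h2 := continuous_tau D
  have := h2.comp h1
  exact this

lemma cont_vv_comp {Y : Type*} [TopologicalSpace Y] {g : Y → ℝ}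
    (hg : Continuous g) : Continuous fun y => vv D (g y) := by
  have := (continuous_vv D).comp hg
  exact this

/-- the reparametrized flow -/
def fl (s : ℝ) (p : Torus2) : Torus2 := p + vv D (tau D p s)

lemma continuous_fl2 : Continuous fun x : ℝ × Torus2 => fl D x.1 x.2 := by
  unfold fl
  exact Continuous.add continuous_snd (cont_vv_comp D (cont_tau_comp D continuous_snd continuous_fst))

lemma cont_fl_comp {Y : Type*} [TopologicalSpace Y] {f : Y → Torus2} {g : Y → ℝ}
    (hf : Continuous f) (hg : Continuous g) : Continuous fun y => fl D (g y) (f y) := by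
  unfold fl
  exact Continuous.add hf (cont_vv_comp D (cont_tau_comp D hf hg))

lemma continuous_fl (s : ℝ) : Continuous (fl D s) :=
  cont_fl_comp D continuous_id continuous_const

lemma tau_add (p : Torus2) (s u : ℝ) : tau D p (s + u) = tau D p s + tau D (fl D s p) u := by
  apply GG_inj D (p := p)
  rw [GG_tau, GG_add, GG_tau]
  change _ = s + GG D (fl D s p) _
  rw [GG_tau]

lemma fl_add (s u : ℝ) (p : Torus2) : fl D (s + u) p = fl D u (fl D s p) := by
  conv_lhs => rw [fl, tau_add, vv_add, ← add_assoc]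
  rfl

lemma fl_zero (p : Torus2) : fl D 0 p = p := by simp [fl, tau_zero, vv_zero]

lemma fl_GG (p : Torus2) (τ : ℝ) : fl D (GG D p τ) p = p + vv D τ := by simp [fl, tau_GG]

lemma fl_neg (s : ℝ) (p : Torus2) : fl D (-s) (fl D s p) = p := by
  rw [← fl_add, add_neg_cancel, fl_zero]

lemma fl_neg' (s : ℝ) (p : Torus2) : fl D s (fl D (-s) p) = p := by
  rw [← fl_add, neg_add_cancel, fl_zero]

lemma fl_iter (n : ℕ) : (fl D 1)^[n] = fl D n := by
  induction n with
  | zero => ext1 p; simp [fl_zero]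
  | succ n ih => 
    rw [Function.iterate_succ', ih]; ext1 p
    rw [Function.comp_apply, ← fl_add]; simp

lemma tau_bounds (p : Torus2) (s : ℝ) (hs : 0 ≤ s) :
    10 / 11 * s ≤ tau D p s ∧ tau D p s ≤ 10 / 9 * s := by
  have h := GG_lip D p (tau D p s) 0
  rw [GG_tau, GG_zero, sub_zero, sub_zero, abs_le] at h
  have hp : 0 ≤ tau D p s := by
    by_contra hn
    rw [not_le] at hn
    rw [abs_of_neg hn] at h
    linarith
  rw [abs_of_nonneg hp] at h
  constructor <;> linarith

attribute [irreducible] fl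

end SlowT

end SlowTSec1

noncomputable section SlowTSec2

namespace SlowT

/-- denominators -/
def aq (k : ℕ) : ℕ := 2 ^ (k + 10).factorial
/-- numerators -/
def ar (k : ℕ) : ℕ := (LiouvilleNumber.partialSum_eq_rat (m := 2) two_pos (k + 10)).choose
/-- the distances -/
def ab (k : ℕ) : ℝ := aq k * LiouvilleNumber.remainder 2 (k + 10)

lemma ar_spec (k : ℕ) : LiouvilleNumber.partialSum 2 (k + 10) = ar k / aq k := by
  have := (LiouvilleNumber.partialSum_eq_rat (m := 2) two_pos (k + 10)).choose_spec
  simpa [ar, aq] using this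

lemma aq_pos (k : ℕ) : (0 : ℝ) < aq k := by simp [aq]

lemma ab_eq (k : ℕ) : ab k = aq k * liouvilleNumber 2 - ar k := by
  rw [← LiouvilleNumber.partialSum_add_remainder (m := 2) (by norm_num) (k + 10), ar_spec, ab]
  have := aq_pos k
  field_simp; ring

lemma ab_pos (k : ℕ) : 0 < ab k :=
  mul_pos (aq_pos k) (LiouvilleNumber.remainder_pos (by norm_num) _)

lemma aq_succ (k : ℕ) : (aq (k + 1) : ℝ) = (aq k : ℝ) ^ (k + 11) := by
  simp only [aq, Nat.cast_pow, Nat.cast_ofNat, ← pow_mul]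
  congr 1
  rw [show k + 1 + 10 = (k + 10) + 1 by ring, Nat.factorial_succ]; ring

lemma le_aq (k : ℕ) : (2 : ℝ) ^ (k + 10) ≤ aq k := by
  simp only [aq, Nat.cast_pow, Nat.cast_ofNat]
  exact pow_le_pow_right₀ (by norm_num) (Nat.self_le_factorial _)

lemma aq_ge (k : ℕ) : (2 : ℝ) ≤ aq k := by
  refine le_trans ?_ (le_aq k)
  calc (2 : ℝ) = 2 ^ 1 := by norm_num
    _ ≤ _ := pow_le_pow_right₀ (by norm_num) (by omega)

lemma ab_upper (k : ℕ) : ab k ≤ ((aq k : ℝ) ^ (k + 9))⁻¹ := by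
  have h := LiouvilleNumber.remainder_lt' (k + 10) (m := 2) (by norm_num)
  have h2 : ab k ≤ aq k * (2 * (1 / aq (k + 1))) := by
    unfold ab
    have := aq_pos k
    gcongr
    refine h.le.trans (le_of_eq ?_)
    norm_num
    simp only [aq]; push_cast
    rw [show k + 1 + 10 = k + 10 + 1 by ring]
  refine h2.trans ?_
  rw [aq_succ]
  have h3 := aq_ge k
  have := aq_pos k
  rw [show k + 11 = (k + 9) + 1 + 1 by ring, pow_succ, pow_succ]
  have h4 : (0 : ℝ) < (aq k : ℝ) ^ (k + 9) := by positivity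
  rw [← one_div, mul_one_div, mul_div_assoc', div_le_div_iff₀ (by positivity) (by positivity)]
  nlinarith [mul_pos h4 this]

lemma ab_lower (k : ℕ) : ((aq (k + 1) : ℝ))⁻¹ ≤ ab k := by
  have h : (1 : ℝ) / 2 ^ (k + 10 + 1).factorial ≤ LiouvilleNumber.remainder 2 (k + 10) := by
    unfold LiouvilleNumber.remainder
    have := (LiouvilleNumber.remainder_summable (m := 2) (by norm_num) (k + 10)).le_tsum 0
      (fun j _ => by positivity)
    simpa using this
  unfold ab
  have h2 := aq_ge k
  have : ((aq (k + 1) : ℝ))⁻¹ = 1 / 2 ^ (k + 10 + 1).factorial := by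
    simp only [aq]; push_cast
    rw [show k + 1 + 10 = k + 10 + 1 by ring, one_div]
  rw [this]
  have h3 := LiouvilleNumber.remainder_pos (m := 2) (by norm_num) (k + 10)
  nlinarith

lemma ab_le_one (k : ℕ) : ab k ≤ 1 := by
  refine (ab_upper k).trans (inv_le_one_of_one_le₀ (one_le_pow₀ ?_))
  linarith [aq_ge k]

lemma half_pow_bound (k : ℕ) : ((aq k : ℝ))⁻¹ ≤ (1 / 2) ^ (k + 10) := by
  rw [one_div, inv_pow]
  exact inv_anti₀ (by positivity) (le_aq k)

lemma ab_rpow_upper (k : ℕ) {δ : ℝ} (hδ : 0 ≤ δ) :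
    ab k ^ δ ≤ (aq k : ℝ) ^ (-(δ * (k + 9))) := by
  refine (Real.rpow_le_rpow (ab_pos k).le (ab_upper k) hδ).trans (le_of_eq ?_)
  have := aq_pos k
  rw [← Real.rpow_natCast, ← Real.rpow_neg this.le, ← Real.rpow_mul this.le]
  congr 1; push_cast; ring

lemma master (M : ℕ) {δ : ℝ} (hδ : 0 < δ) : Summable fun k => (aq k : ℝ) ^ M * ab k ^ δ := by
  refine Summable.of_norm_bounded_eventually_nat (g := fun k => (1 / 2 : ℝ) ^ (k + 10)) ?_ ?_
  · exact (summable_nat_add_iff 10).2 (summable_geometric_of_lt_one (by norm_num) (by norm_num))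
  · obtain ⟨N, hN⟩ := exists_nat_ge ((M + 1) / δ)
    filter_upwards [eventually_ge_atTop N] with k hk
    have hq := aq_pos k
    have hb := ab_pos k
    rw [Real.norm_of_nonneg (by positivity)]
    refine le_trans ?_ (half_pow_bound k)
    calc (aq k : ℝ) ^ M * ab k ^ δ ≤ (aq k : ℝ) ^ (M : ℝ) * (aq k : ℝ) ^ (-(δ * (k + 9))) := by
          rw [Real.rpow_natCast]; gcongr; exact ab_rpow_upper k hδ.le
      _ = (aq k : ℝ) ^ ((M : ℝ) - δ * (k + 9)) := by rw [← Real.rpow_add hq]; rfl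
      _ ≤ (aq k : ℝ) ^ (-1 : ℝ) := by
          apply Real.rpow_le_rpow_of_exponent_le
          · linarith [aq_ge k]
          · have : (N : ℝ) ≤ k := by exact_mod_cast hk
            have h1 : (M + 1) / δ ≤ k + 9 := by linarith
            rw [div_le_iff₀ hδ] at h1
            linarith
      _ = _ := Real.rpow_neg_one _

variable {t : ℝ} 

lemma ac_bound (ht : t ≤ 1 / 2) (k : ℕ) : ab k ^ (1 - t) ≤ ((aq k : ℝ) ^ 4)⁻¹ := by
  calc ab k ^ (1 - t) ≤ ab k ^ (1 / 2 : ℝ) :=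
        Real.rpow_le_rpow_of_exponent_ge (ab_pos k) (ab_le_one k) (by linarith)
    _ ≤ (aq k : ℝ) ^ (-((1 / 2 : ℝ) * (k + 9))) := ab_rpow_upper k (by norm_num)
    _ ≤ (aq k : ℝ) ^ (-(4 : ℕ) : ℝ) := by
        apply Real.rpow_le_rpow_of_exponent_le
        · linarith [aq_ge k]
        · have : (0 : ℝ) ≤ k := Nat.cast_nonneg k
          push_cast; linarith
    _ = _ := by rw [Real.rpow_neg (aq_pos k).le, Real.rpow_natCast]

lemma aq_mono : Monotone aq := fun a b h =>
  Nat.pow_le_pow_right (by norm_num) (Nat.factorial_le (by omega))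

lemma aq_monoR {a b : ℕ} (h : a ≤ b) : (aq a : ℝ) ≤ aq b := by exact_mod_cast aq_mono h

lemma ac_bound2 (ht : t ≤ 1 / 2) (k : ℕ) :
    ab k ^ (1 - t) ≤ ((aq k : ℝ) ^ 3)⁻¹ * (1 / 2) ^ (k + 10) := by
  refine (ac_bound ht k).trans ?_
  rw [pow_succ, mul_inv]
  have := aq_pos k
  gcongr
  exact half_pow_bound k

lemma geo_tsum (n : ℕ) : ∑' k, (1 / 2 : ℝ) ^ (k + n) = 2 * (1 / 2) ^ n := by
  simp_rw [pow_add]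
  rw [tsum_mul_right, tsum_geometric_two]

lemma geo_summable (n : ℕ) : Summable fun k => (1 / 2 : ℝ) ^ (k + n) :=
  (summable_nat_add_iff n).2 (summable_geometric_of_lt_one (by norm_num) (by norm_num))

lemma ac_summable (ht : t ≤ 1 / 2) : Summable fun k => ab k ^ (1 - t) := by
  simpa using master 0 (δ := 1 - t) (by linarith)

lemma ac_tsum (ht : t ≤ 1 / 2) : ∑' k, ab k ^ (1 - t) ≤ 1 / 10 := by
  have h : ∀ k, ab k ^ (1 - t) ≤ (1 / 2) ^ (k + 10) := fun k => by
    refine (ac_bound2 ht k).trans ?_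
    have : ((aq k : ℝ) ^ 3)⁻¹ ≤ 1 :=
      inv_le_one_of_one_le₀ (one_le_pow₀ (by linarith [aq_ge k]))
    have h2 : (0 : ℝ) ≤ (1 / 2) ^ (k + 10) := by positivity
    nlinarith
  refine ((ac_summable ht).tsum_le_tsum h (geo_summable 10)).trans ?_
  rw [geo_tsum]; norm_num

lemma ac_tail (ht : t ≤ 1 / 2) (k : ℕ) : ∑' j, ab (j + (k + 1)) ^ (1 - t) ≤ ab k ^ 2 := by
  have h : ∀ j, ab (j + (k + 1)) ^ (1 - t) ≤ ((aq (k + 1) : ℝ) ^ 2)⁻¹ * (1 / 2) ^ (j + 10) := by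
    intro j
    refine (ac_bound2 ht _).trans ?_
    have h1 := aq_pos (k + 1)
    have h2 : (aq (k + 1) : ℝ) ≤ aq (j + (k + 1)) := aq_monoR (by omega)
    have h3 := aq_ge (j + (k + 1))
    apply mul_le_mul
    · apply inv_anti₀ (by positivity)
      calc (aq (k + 1) : ℝ) ^ 2 ≤ (aq (j + (k + 1)) : ℝ) ^ 2 := by gcongr
        _ ≤ _ := pow_le_pow_right₀ (by linarith) (by norm_num)
    · exact pow_le_pow_of_le_one (by norm_num) (by norm_num) (by omega)
    · positivity
    · positivity
  refine (((summable_nat_add_iff (k + 1)).2 (ac_summable ht)).tsum_le_tsum h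
    ((geo_summable 10).mul_left _)).trans ?_
  rw [tsum_mul_left, geo_tsum]
  have h4 := ab_lower k
  have h1 := aq_pos (k + 1)
  have h5 : ((aq (k + 1) : ℝ) ^ 2)⁻¹ ≤ ab k ^ 2 := by
    rw [← inv_pow]; gcongr
  have : (0 : ℝ) ≤ ((aq (k + 1) : ℝ) ^ 2)⁻¹ := by positivity
  refine le_trans ?_ h5
  norm_num; nlinarith

lemma ac_div (k : ℕ) : ab k ^ (1 - t) / ab k = ab k ^ (-t) := by
  have := ab_pos k
  rw [sub_eq_add_neg, Real.rpow_add this, Real.rpow_one]; field_simp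

lemma ac_div_le (ht0 : 0 < t) (ht : t ≤ 1 / 2) {j k : ℕ} (hjk : j < k) :
    ab j ^ (1 - t) / ab j * aq j ≤ (aq k : ℝ) ^ (3 / 4 : ℝ) := by
  rw [ac_div]
  have hb := ab_pos j
  have h1 : ab j ^ (-t) ≤ (aq (j + 1) : ℝ) ^ (1 / 2 : ℝ) := by
    rw [Real.rpow_neg hb.le, ← Real.inv_rpow hb.le]
    have h2 : (ab j)⁻¹ ≤ aq (j + 1) := inv_le_of_inv_le₀ (aq_pos _) (ab_lower j)
    have h3 : 1 ≤ (ab j)⁻¹ := (one_le_inv₀ hb).2 (ab_le_one j)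
    calc (ab j)⁻¹ ^ t ≤ (ab j)⁻¹ ^ (1 / 2 : ℝ) := Real.rpow_le_rpow_of_exponent_le h3 ht
      _ ≤ _ := Real.rpow_le_rpow (by positivity) h2 (by norm_num)
  have h4 : (aq j : ℝ) ≤ (aq (j + 1) : ℝ) ^ (1 / 4 : ℝ) := by
    rw [aq_succ, ← Real.rpow_natCast, ← Real.rpow_mul (aq_pos j).le]
    have : (0 : ℝ) ≤ j := Nat.cast_nonneg j
    nth_rewrite 1 [← Real.rpow_one (aq j : ℝ)]
    apply Real.rpow_le_rpow_of_exponent_le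
    · linarith [aq_ge j]
    · push_cast; linarith
  have h5 := aq_pos (j + 1)
  calc ab j ^ (-t) * aq j ≤ (aq (j + 1) : ℝ) ^ (1 / 2 : ℝ) * (aq (j + 1) : ℝ) ^ (1 / 4 : ℝ) := by
        have := aq_pos j
        gcongr
    _ = (aq (j + 1) : ℝ) ^ (3 / 4 : ℝ) := by rw [← Real.rpow_add h5]; norm_num
    _ ≤ _ := by
        apply Real.rpow_le_rpow h5.le (aq_monoR hjk) (by norm_num)

lemma sum_bound (ht0 : 0 < t) (ht : t ≤ 1 / 2) (k : ℕ) :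
    ∑ j ∈ Finset.range k, ab j ^ (1 - t) / ab j * aq j ≤ k * (aq k : ℝ) ^ (3 / 4 : ℝ) := by
  refine (Finset.sum_le_card_nsmul _ _ _ fun j hj =>
    ac_div_le ht0 ht (Finset.mem_range.1 hj)).trans ?_
  simp

lemma k_bound (k : ℕ) : (k : ℝ) ≤ aq k := by
  refine le_trans ?_ (le_aq k)
  have : k < 2 ^ k := Nat.lt_two_pow_self
  have h : (k : ℝ) ≤ 2 ^ k := by exact_mod_cast this.le
  exact h.trans (pow_le_pow_right₀ (by norm_num) (by omega))

lemma ac_low1 (ht0 : 0 < t) (ht : t ≤ 1 / 2) :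
    Tendsto (fun k => (∑ j ∈ Finset.range k, ab j ^ (1 - t) / ab j * aq j) / aq k) atTop (𝓝 0) := by
  refine squeeze_zero (g := fun k : ℕ => (k : ℝ) ^ 1 * (1 / 2) ^ k) (fun k => ?_) (fun k => ?_) ?_
  · refine div_nonneg (Finset.sum_nonneg fun j _ => ?_) (aq_pos k).le
    have := ab_pos j; have := aq_pos j; positivity
  · have hq := aq_pos k
    rw [div_le_iff₀ hq]
    refine (sum_bound ht0 ht k).trans ?_
    rw [pow_one, mul_assoc]
    gcongr
    have h1 : (aq k : ℝ) ^ (3 / 4 : ℝ) * (aq k : ℝ) ^ (1 / 4 : ℝ) = aq k := by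
      rw [← Real.rpow_add hq]; norm_num
    have h2 : (2 : ℝ) ^ k ≤ (aq k : ℝ) ^ (1 / 4 : ℝ) := by
      simp only [aq, Nat.cast_pow, Nat.cast_ofNat]
      rw [← Real.rpow_natCast, ← Real.rpow_natCast, ← Real.rpow_mul (by norm_num)]
      apply Real.rpow_le_rpow_of_exponent_le (by norm_num)
      have : 4 * k ≤ (k + 10).factorial := by
        calc 4 * k ≤ (k + 10) * (k + 9) := by nlinarith
          _ ≤ (k + 10) * (k + 9).factorial := Nat.mul_le_mul_left _ (Nat.self_le_factorial _)
          _ = _ := rfl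
      have : (4 : ℝ) * k ≤ (k + 10).factorial := by exact_mod_cast this
      linarith
    have h3 : (1 / 2 : ℝ) ^ k * 2 ^ k = 1 := by rw [← mul_pow]; norm_num
    have h4 : (0 : ℝ) ≤ (aq k : ℝ) ^ (3 / 4 : ℝ) := by positivity
    have h5 : (0 : ℝ) < (1 / 2 : ℝ) ^ k := by positivity
    calc (aq k : ℝ) ^ (3 / 4 : ℝ) = (1 / 2 : ℝ) ^ k * ((aq k : ℝ) ^ (3 / 4 : ℝ) * 2 ^ k) := by
          rw [mul_comm ((aq k : ℝ) ^ (3 / 4 : ℝ)), ← mul_assoc, h3, one_mul]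
      _ ≤ (1 / 2 : ℝ) ^ k * ((aq k : ℝ) ^ (3 / 4 : ℝ) * (aq k : ℝ) ^ (1 / 4 : ℝ)) := by gcongr
      _ = _ := by rw [h1]
  · exact tendsto_pow_const_mul_const_pow_of_abs_lt_one 1 (by rw [abs_of_pos] <;> norm_num)

lemma ac_low2 (ht0 : 0 < t) (ht : t ≤ 1 / 2) :
    Tendsto (fun k => (∑ j ∈ Finset.range k, ab j ^ (1 - t) / ab j) / (ab k ^ (1 - t) / ab k))
      atTop (𝓝 0) := by
  refine squeeze_zero (g := fun k : ℕ => (aq k : ℝ) ^ 2 * ab k ^ t) (fun k => ?_) (fun k => ?_) ?_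
  · have := ab_pos k
    refine div_nonneg (Finset.sum_nonneg fun j _ => ?_) (by positivity)
    have := ab_pos j; positivity
  · have hb := ab_pos k
    have hq := aq_pos k
    rw [ac_div k, Real.rpow_neg hb.le, div_inv_eq_mul]
    gcongr
    calc _ ≤ ∑ j ∈ Finset.range k, ab j ^ (1 - t) / ab j * aq j := by
          apply Finset.sum_le_sum
          intro j _
          have := ab_pos j
          apply le_mul_of_one_le_right (by positivity)
          linarith [aq_ge j]
      _ ≤ k * (aq k : ℝ) ^ (3 / 4 : ℝ) := sum_bound ht0 ht k
      _ ≤ aq k * aq k := by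
          gcongr
          · exact_mod_cast k_bound k
          · nth_rewrite 2 [← Real.rpow_one (aq k : ℝ)]
            apply Real.rpow_le_rpow_of_exponent_le
            · linarith [aq_ge k]
            · norm_num
      _ = _ := by ring
  · exact (master 2 ht0).tendsto_atTop_zero

lemma liou_bounds : 1 ≤ liouvilleNumber 2 ∧ liouvilleNumber 2 ≤ 2 := by
  have h := LiouvilleNumber.partialSum_add_remainder (m := 2) (by norm_num) 2
  have h1 := LiouvilleNumber.remainder_lt' 2 (m := 2) (by norm_num)
  have h2 := LiouvilleNumber.remainder_pos (m := 2) (by norm_num) 2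
  have h3 : LiouvilleNumber.partialSum 2 2 = 5 / 4 := by
    norm_num [LiouvilleNumber.partialSum, Finset.sum_range_succ, Nat.factorial]
  norm_num [Nat.factorial] at h1
  rw [h3] at h
  constructor <;> linarith

lemma ar_pos (k : ℕ) : 0 < ar k := by
  have h := ab_eq k
  have h1 := ab_le_one k
  have h2 := liou_bounds.1
  have h3 := aq_ge k
  have : (0 : ℝ) < ar k := by nlinarith
  exact_mod_cast this

lemma ar_le (k : ℕ) : ar k ≤ 2 * aq k := by
  have h := ab_eq k
  have h1 := ab_pos k
  have h2 := liou_bounds.2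
  have h3 := aq_pos k
  have : (ar k : ℝ) ≤ 2 * aq k := by nlinarith
  exact_mod_cast this

lemma ab_lim : Tendsto ab atTop (𝓝 0) :=
  ((master 0 (δ := 1) one_pos).congr (fun k => by
    rw [pow_zero, one_mul, Real.rpow_one])).tendsto_atTop_zero

lemma ac_smooth (ht : t ≤ 1 / 2) (M : ℕ) :
    Summable fun k => ab k ^ (1 - t) * (aq k : ℝ) ^ M :=
  (master M (δ := 1 - t) (by linarith)).congr (fun k => mul_comm _ _)

lemma aqb_summable {δ : ℝ} (hδ : 0 < δ) : Summable fun k => (aq k : ℝ) * ab k ^ δ :=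
  (master 1 hδ).congr (fun k => by rw [pow_one])

lemma aq_pos2 (k : ℕ) : 0 < aq k := by exact_mod_cast aq_pos k

lemma aq_lim : Tendsto (fun k => (aq k : ℝ)) atTop atTop :=
  tendsto_atTop_mono k_bound tendsto_natCast_atTop_atTop

lemma liou_irr : Irrational (liouvilleNumber 2) := by
  have := (liouville_liouvilleNumber (m := 2) le_rfl).irrational
  simpa using this

attribute [irreducible] aq ar ab

/-- the concrete data -/
def mkData (ht0 : 0 < t) (ht : t ≤ 1 / 2) : Data t where
  q := aq
  r := ar
  α := liouvilleNumber 2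
  β := ab
  c := fun k => ab k ^ (1 - t)
  t_pos := ht0
  t_le := ht
  q_pos := aq_pos2
  r_pos := ar_pos
  r_le := ar_le
  α_nonneg := zero_le_one.trans liou_bounds.1
  α_le := liou_bounds.2
  α_irr := liou_irr
  hβ := ab_eq
  β_pos := ab_pos
  β_le := ab_le_one
  β_lim := ab_lim
  hc := fun _ => rfl
  c_summable := ac_summable ht
  c_tsum := ac_tsum ht
  c_smooth := ac_smooth ht
  qβ_summable := fun _ hδ => aqb_summable hδ
  tail := ac_tail ht
  q_lim := aq_lim
  low1 := ac_low1 ht0 ht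
  low2 := ac_low2 ht0 ht

end SlowT

end SlowTSec2

noncomputable section SlowTSec3

namespace SlowT

/-- implicit function: the solution of a perturbation-of-identity equation is smooth -/
lemma implicit_contDiff {V : Type*} [NormedAddCommGroup V] [NormedSpace ℝ V]
    [FiniteDimensional ℝ V] {n : ℕ} (hn : n ≠ 0) {G : V × ℝ → ℝ} (hG : ContDiff ℝ n G)
    (hp : ∀ v a b, |(G (v, a) - G (v, b)) - (a - b)| ≤ |a - b| / 10)
    {T : V × ℝ → ℝ} (hT : ∀ v s, G (v, T (v, s)) = s) : ContDiff ℝ n T := by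
  have hTG : ∀ v a, T (v, G (v, a)) = a := by
    intro v a
    have h := pert_lower (g := fun a => G (v, a)) (hp v) (T (v, G (v, a))) a
    simp only [hT, sub_self, abs_zero, mul_zero] at h
    exact sub_eq_zero.1 (abs_nonpos_iff.1 h)
  have hGc : Continuous G := hG.continuous
  have hTc : Continuous T := by
    rw [continuous_iff_continuousAt]
    rintro ⟨v', s'⟩
    rw [ContinuousAt, tendsto_iff_dist_tendsto_zero]
    refine squeeze_zero (g := fun x : V × ℝ => 10 / 9 * (|x.2 - G (x.1, T (v', s'))|))
      (fun _ => dist_nonneg) (fun x => ?_) ?_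
    · rw [Real.dist_eq]
      have h := pert_lower (g := fun a => G (x.1, a)) (hp x.1) (T x) (T (v', s'))
      have e : G (x.1, T x) = x.2 := hT x.1 x.2
      simp only [e] at h
      exact h
    · have : Continuous fun x : V × ℝ => 10 / 9 * (|x.2 - G (x.1, T (v', s'))|) := by fun_prop
      have := this.tendsto (v', s')
      simpa [hT] using this
  let Φ : V × ℝ ≃ₜ V × ℝ :=
    { toFun := fun x => (x.1, G x)
      invFun := fun x => (x.1, T x)
      left_inv := fun x => by simp [hTG]
      right_inv := fun x => by simp [hT]
      continuous_toFun := by fun_prop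
      continuous_invFun := by fun_prop }
  have hd : ∀ x, HasFDerivAt G (fderiv ℝ G x) x := fun x =>
    (hG.differentiable (by exact_mod_cast hn) x).hasFDerivAt
  have hd1 : ∀ x : V × ℝ, |fderiv ℝ G x (0, 1) - 1| ≤ 1 / 10 := by
    rintro ⟨v, a⟩
    have h1 : HasDerivAt (fun u : ℝ => (v, u)) ((0 : V), (1 : ℝ)) a :=
      (hasDerivAt_const a v).prodMk (hasDerivAt_id a)
    have h2 : HasDerivAt (fun u : ℝ => G (v, u)) (fderiv ℝ G (v, a) (0, 1)) a :=
      (hd (v, a)).comp_hasDerivAt a h1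
    have h3 := h2.sub (hasDerivAt_id a)
    have h4 : LipschitzWith (1 / 10) ((fun u : ℝ => G (v, u)) - id) :=
      LipschitzWith.of_dist_le_mul fun c b => by
        rw [Real.dist_eq, Real.dist_eq]
        have := hp v c b
        simp only [Pi.sub_apply, id]
        rw [show G (v, c) - c - (G (v, b) - b) = (G (v, c) - G (v, b)) - (c - b) by ring]
        norm_num
        linarith
    have := h3.hasFDerivAt.le_of_lipschitz h4
    simpa using this
  have hinj : ∀ x : V × ℝ, Function.Injective
      ((ContinuousLinearMap.fst ℝ V ℝ).prod (fderiv ℝ G x) : V × ℝ →L[ℝ] V × ℝ) := by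
    intro x
    rw [injective_iff_map_eq_zero]
    rintro ⟨v, a⟩ h
    simp only [ContinuousLinearMap.prod_apply, ContinuousLinearMap.coe_fst', Prod.mk_eq_zero] at h
    obtain ⟨rfl, h⟩ := h
    have e : ((0 : V), a) = a • ((0 : V), (1 : ℝ)) := by simp
    rw [e, map_smul, smul_eq_mul, mul_eq_zero] at h
    have h1 := hd1 x
    rcases h with h | h
    · rw [h]; rfl
    · rw [h] at h1; norm_num at h1
  let f' : V × ℝ → ((V × ℝ) ≃L[ℝ] (V × ℝ)) := fun x =>
    ContinuousLinearEquiv.ofBijective _ (LinearMap.ker_eq_bot.2 (hinj x))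
      (LinearMap.range_eq_top.2 (LinearMap.injective_iff_surjective.1 (hinj x)))
  have key := Homeomorph.contDiff_symm (𝕜 := ℝ) (n := n) Φ (f₀' := f') (fun x => by
    have h := (hasFDerivAt_fst (𝕜 := ℝ) (p := x)).prodMk (hd x)
    exact h) (contDiff_fst.prodMk hG)
  exact contDiff_snd.comp key

variable {t : ℝ} (D : Data t)

abbrev E3 : Type := (ℝ × ℝ) × ℝ

/-- coordinate forms -/
def dx : E3 →L[ℝ] ℝ := (ContinuousLinearMap.fst ℝ ℝ ℝ).comp (ContinuousLinearMap.fst ℝ (ℝ × ℝ) ℝ)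
def dy : E3 →L[ℝ] ℝ := (ContinuousLinearMap.snd ℝ ℝ ℝ).comp (ContinuousLinearMap.fst ℝ (ℝ × ℝ) ℝ)
def dz : E3 →L[ℝ] ℝ := ContinuousLinearMap.snd ℝ (ℝ × ℝ) ℝ

lemma dx_apply (z : E3) : dx z = z.1.1 := rfl
lemma dy_apply (z : E3) : dy z = z.1.2 := rfl
lemma dz_apply (z : E3) : dz z = z.2 := rfl

lemma norm_d (u v w : ℝ) : ‖u • dx + v • dy + w • dz‖ ≤ |u| + |v| + |w| := by
  refine ContinuousLinearMap.opNorm_le_bound _ (by positivity) fun z => ?_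
  have h1 : |z.1.1| ≤ ‖z‖ := (norm_fst_le z.1).trans (norm_fst_le z)
  have h2 : |z.1.2| ≤ ‖z‖ := (norm_snd_le z.1).trans (norm_fst_le z)
  have h3 : |z.2| ≤ ‖z‖ := norm_snd_le z
  have e : (u • dx + v • dy + w • dz) z = u * z.1.1 + v * z.1.2 + w * z.2 := rfl
  rw [e, Real.norm_eq_abs]
  refine (abs_add_three _ _ _).trans ?_
  rw [abs_mul, abs_mul, abs_mul, add_mul, add_mul]
  gcongr

/-- termwise differentiation -/
lemma fderiv_sum {F u v w : ℕ → E3 → ℝ}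
    (hF : ∀ k z, HasFDerivAt (F k) (u k z • dx + v k z • dy + w k z • dz) z)
    (hF0 : Summable fun k => F k 0)
    (hb : ∀ R : ℝ, ∃ b : ℕ → ℝ, Summable b ∧ ∀ k (z : E3), |z.2| < R →
      |u k z| ≤ b k ∧ |v k z| ≤ b k ∧ |w k z| ≤ b k) (z : E3) :
    HasFDerivAt (fun z => ∑' k, F k z)
      ((∑' k, u k z) • dx + (∑' k, v k z) • dy + (∑' k, w k z) • dz) z := by
  obtain ⟨b, hbs, hb⟩ := hb (|z.2| + 1)
  have hz : |z.2| < |z.2| + 1 := by linarith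
  have hS : ∀ {g : ℕ → E3 → ℝ}, (∀ k, |g k z| ≤ b k) → Summable fun k => g k z := fun h =>
    Summable.of_norm_bounded hbs fun k => by rw [Real.norm_eq_abs]; exact h k
  have s1 : Summable fun k => u k z := hS fun k => (hb k z hz).1
  have s2 : Summable fun k => v k z := hS fun k => (hb k z hz).2.1
  have s3 : Summable fun k => w k z := hS fun k => (hb k z hz).2.2
  have hset : {z' : E3 | |z'.2| < |z.2| + 1} = univ ×ˢ Metric.ball (0 : ℝ) (|z.2| + 1) := by
    ext z'; simp
  have key := hasFDerivAt_tsum_of_isPreconnected (𝕜 := ℝ) (s := {z' : E3 | |z'.2| < |z.2| + 1})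
    (u := fun k => 3 * b k) (hbs.mul_left 3)
    (by rw [hset]; exact isOpen_univ.prod Metric.isOpen_ball)
    (by rw [hset]; exact isPreconnected_univ.prod (convex_ball _ _).isPreconnected)
    (fun k x _ => hF k x) (fun k x hx => by
      have h := hb k x hx
      linarith [norm_d (u k x) (v k x) (w k x), h.1, h.2.1, h.2.2])
    (x₀ := 0) (by simp; positivity) hF0 hz
  rw [(((s1.smul_const dx).add (s2.smul_const dy))).tsum_add (s3.smul_const dz),
    (s1.smul_const dx).tsum_add (s2.smul_const dy), s1.tsum_smul_const, s2.tsum_smul_const,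
    s3.tsum_smul_const] at key
  exact key

/-- rapidly decaying coefficients -/
def Rapid (a : ℕ → ℝ) : Prop := ∀ M : ℕ, Summable fun k => |a k| * (D.q k : ℝ) ^ M

variable {D}

lemma one_le_q (k : ℕ) : (1 : ℝ) ≤ D.q k := by exact_mod_cast D.q_pos k

lemma Rapid.of_le {a b : ℕ → ℝ} {C : ℝ} {N : ℕ} (h : Rapid D a)
    (hab : ∀ k, |b k| ≤ C * (|a k| * (D.q k : ℝ) ^ N)) : Rapid D b := by
  intro M
  refine Summable.of_nonneg_of_le (fun k => by positivity) (fun k => ?_)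
    ((h (N + M)).mul_left C)
  calc |b k| * (D.q k : ℝ) ^ M ≤ C * (|a k| * (D.q k : ℝ) ^ N) * (D.q k : ℝ) ^ M := by
        gcongr; exact hab k
    _ = _ := by rw [pow_add]; ring

lemma Rapid.q {a : ℕ → ℝ} (h : Rapid D a) : Rapid D fun k => 2 * Real.pi * D.q k * a k :=
  h.of_le (C := 2 * Real.pi) (N := 1) fun k => by
    rw [abs_mul, abs_of_nonneg (by positivity)]; apply le_of_eq; ring

lemma Rapid.r {a : ℕ → ℝ} (h : Rapid D a) : Rapid D fun k => -(2 * Real.pi * D.r k * a k) :=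
  h.of_le (C := 4 * Real.pi) (N := 1) fun k => by
    have : (D.r k : ℝ) ≤ 2 * D.q k := by exact_mod_cast D.r_le k
    rw [abs_neg, abs_mul, abs_of_nonneg (by positivity)]
    calc _ ≤ 2 * Real.pi * (2 * D.q k) * |a k| := by gcongr
      _ = _ := by ring

lemma Rapid.two_pi {a : ℕ → ℝ} (h : Rapid D a) : Rapid D fun k => 2 * Real.pi * a k :=
  h.of_le (C := 2 * Real.pi) (N := 0) fun k => by
    rw [abs_mul, abs_of_nonneg (by positivity)]; apply le_of_eq; ring

lemma Rapid.β {a : ℕ → ℝ} (h : Rapid D a) : Rapid D fun k => 2 * Real.pi * D.β k * a k :=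
  h.of_le (C := 2 * Real.pi) (N := 0) fun k => by
    have h1 := D.β_pos k
    have h2 := D.β_le k
    rw [abs_mul, abs_of_nonneg (by positivity)]
    calc _ ≤ 2 * Real.pi * 1 * |a k| := by gcongr
      _ = _ := by ring

lemma Rapid.summable {a : ℕ → ℝ} (h : Rapid D a) : Summable fun k => |a k| := by
  simpa using h 0

variable (D)

/-- phase -/
def ph (k : ℕ) (z : E3) : ℝ := 2 * Real.pi * (D.q k * z.1.1 - D.r k * z.1.2)

lemma ph_fderiv (k : ℕ) (z : E3) : HasFDerivAt (ph D k)
    ((2 * Real.pi * D.q k) • dx + (-(2 * Real.pi * D.r k)) • dy) z := by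
  have h := ((2 * Real.pi * D.q k) • dx + (-(2 * Real.pi * D.r k)) • dy).hasFDerivAt (x := z)
  refine h.congr_of_eventuallyEq (Eventually.of_forall fun z' => ?_)
  simp only [ph, add_apply, smul_apply, dx_apply, dy_apply,
    smul_eq_mul]
  ring

lemma dz_fderiv (b : ℝ) (z : E3) : HasFDerivAt (fun z : E3 => b * z.2) (b • dz) z :=
  (b • dz).hasFDerivAt (x := z)

/-- regular sums -/
def SS (a : ℕ → ℝ) (φ : ℝ) (z : E3) : ℝ :=
  ∑' k, a k * Real.sin (ph D k z + 2 * Real.pi * D.β k * z.2 + φ)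

/-- cocycle sums -/
def HH (a : ℕ → ℝ) (φ : ℝ) (z : E3) : ℝ :=
  ∑' k, a k / D.β k * (Real.sin (ph D k z + 2 * Real.pi * D.β k * z.2 + φ)
    - Real.sin (ph D k z + φ))

lemma sin_sub_bound (a : ℕ → ℝ) (k : ℕ) (A R : ℝ) {s : ℝ} (hs : |s| < R) (φ : ℝ) :
    |a k / D.β k * (Real.sin (A + 2 * Real.pi * D.β k * s + φ) - Real.sin (A + φ))| ≤
      |a k| * (2 * Real.pi * R) := by
  have hb := D.β_pos k
  rw [abs_mul, abs_div, abs_of_pos hb]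
  calc _ ≤ |a k| / D.β k * |(A + 2 * Real.pi * D.β k * s + φ) - (A + φ)| := by
        exact mul_le_mul_of_nonneg_left (sin_sub_sin_le _ _) (by positivity)
    _ = |a k| * (2 * Real.pi * |s|) := by
        rw [show (A + 2 * Real.pi * D.β k * s + φ) - (A + φ) = 2 * Real.pi * D.β k * s by ring,
          abs_mul (2 * Real.pi * D.β k), abs_of_nonneg (by positivity : 0 ≤ 2 * Real.pi * D.β k)]
        field_simp
    _ ≤ _ := by gcongr

lemma sin_bound (x y : ℝ) : |x * Real.sin y| ≤ |x| := by
  rw [abs_mul]; exact mul_le_of_le_one_right (abs_nonneg _) (Real.abs_sin_le_one _)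

lemma SS_fderiv {a : ℕ → ℝ} (ha : Rapid D a) (φ : ℝ) (z : E3) :
    HasFDerivAt (SS D a φ) (SS D (fun k => 2 * Real.pi * D.q k * a k) (φ + Real.pi / 2) z • dx
      + SS D (fun k => -(2 * Real.pi * D.r k * a k)) (φ + Real.pi / 2) z • dy
      + SS D (fun k => 2 * Real.pi * D.β k * a k) (φ + Real.pi / 2) z • dz) z := by
  refine fderiv_sum (F := fun k z => a k * Real.sin (ph D k z + 2 * Real.pi * D.β k * z.2 + φ))
    (u := fun k z => (2 * Real.pi * D.q k * a k) *
      Real.sin (ph D k z + 2 * Real.pi * D.β k * z.2 + (φ + Real.pi / 2)))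
    (v := fun k z => -(2 * Real.pi * D.r k * a k) *
      Real.sin (ph D k z + 2 * Real.pi * D.β k * z.2 + (φ + Real.pi / 2)))
    (w := fun k z => (2 * Real.pi * D.β k * a k) *
      Real.sin (ph D k z + 2 * Real.pi * D.β k * z.2 + (φ + Real.pi / 2))) ?_ ?_ ?_ z
  · intro k z
    have h := ((((ph_fderiv D k z).add (dz_fderiv (2 * Real.pi * D.β k) z)).add_const φ).sin).const_mul
      (a k)
    refine h.congr_fderiv ?_
    simp only [Pi.add_apply, ← add_assoc, Real.sin_add_pi_div_two]
    ext <;> simp <;> ring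
  · exact Summable.of_norm_bounded ha.summable fun k => by
      rw [Real.norm_eq_abs]; exact sin_bound _ _
  · intro R
    refine ⟨_, (ha.q.summable.add ha.r.summable).add ha.β.summable, fun k z _ => ?_⟩
    have h1 := abs_nonneg (2 * Real.pi * D.q k * a k)
    have h2 := abs_nonneg (-(2 * Real.pi * D.r k * a k))
    have h3 := abs_nonneg (2 * Real.pi * D.β k * a k)
    refine ⟨(sin_bound _ _).trans ?_, (sin_bound _ _).trans ?_, (sin_bound _ _).trans ?_⟩ <;>
      linarith

lemma HH_fderiv {a : ℕ → ℝ} (ha : Rapid D a) (φ : ℝ) (z : E3) :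
    HasFDerivAt (HH D a φ) (HH D (fun k => 2 * Real.pi * D.q k * a k) (φ + Real.pi / 2) z • dx
      + HH D (fun k => -(2 * Real.pi * D.r k * a k)) (φ + Real.pi / 2) z • dy
      + SS D (fun k => 2 * Real.pi * a k) (φ + Real.pi / 2) z • dz) z := by
  refine fderiv_sum
    (F := fun k z => a k / D.β k * (Real.sin (ph D k z + 2 * Real.pi * D.β k * z.2 + φ)
      - Real.sin (ph D k z + φ)))
    (u := fun k z => (2 * Real.pi * D.q k * a k) / D.β k *
      (Real.sin (ph D k z + 2 * Real.pi * D.β k * z.2 + (φ + Real.pi / 2))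
      - Real.sin (ph D k z + (φ + Real.pi / 2))))
    (v := fun k z => -(2 * Real.pi * D.r k * a k) / D.β k *
      (Real.sin (ph D k z + 2 * Real.pi * D.β k * z.2 + (φ + Real.pi / 2))
      - Real.sin (ph D k z + (φ + Real.pi / 2))))
    (w := fun k z => (2 * Real.pi * a k) *
      Real.sin (ph D k z + 2 * Real.pi * D.β k * z.2 + (φ + Real.pi / 2))) ?_ ?_ ?_ z
  · intro k z
    have hb := (D.β_pos k).ne'
    have h := (((((ph_fderiv D k z).add (dz_fderiv (2 * Real.pi * D.β k) z)).add_const φ).sin).sub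
      ((ph_fderiv D k z).add_const φ).sin).const_mul (a k / D.β k)
    refine h.congr_fderiv ?_
    simp only [Pi.add_apply, ← add_assoc, Real.sin_add_pi_div_two]
    ext <;> simp <;> field_simp <;> ring
  · simp
  · intro R
    refine ⟨_, ((ha.q.summable.mul_right (2 * Real.pi * |R|)).add
      (ha.r.summable.mul_right (2 * Real.pi * |R|))).add ha.two_pi.summable, fun k z hz => ?_⟩
    have h1 : 0 ≤ |2 * Real.pi * D.q k * a k| * (2 * Real.pi * |R|) := by positivity
    have h2 : 0 ≤ |-(2 * Real.pi * D.r k * a k)| * (2 * Real.pi * |R|) := by positivity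
    have h3 := abs_nonneg (2 * Real.pi * a k)
    have hz' := hz.trans_le (le_abs_self R)
    refine ⟨(sin_sub_bound D (fun k => 2 * Real.pi * D.q k * a k) k _ _ hz' _).trans ?_,
      (sin_sub_bound D (fun k => -(2 * Real.pi * D.r k * a k)) k _ _ hz' _).trans ?_,
      (sin_bound _ _).trans ?_⟩ <;> linarith

lemma SS_contDiff (n : ℕ) : ∀ {a : ℕ → ℝ} (_ : Rapid D a) (φ : ℝ), ContDiff ℝ n (SS D a φ) := by
  induction n with
  | zero =>
    intro a ha φ
    exact contDiff_zero.2 (continuous_iff_continuousAt.2 fun z => (SS_fderiv D ha φ z).continuousAt)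
  | succ n ih =>
    intro a ha φ
    refine contDiff_succ_iff_hasFDerivAt.2 ⟨_, ?_, SS_fderiv D ha φ⟩
    exact (((ih ha.q _).smul contDiff_const).add ((ih ha.r _).smul contDiff_const)).add
      ((ih ha.β _).smul contDiff_const)

lemma HH_contDiff (n : ℕ) : ∀ {a : ℕ → ℝ} (_ : Rapid D a) (φ : ℝ), ContDiff ℝ n (HH D a φ) := by
  induction n with
  | zero =>
    intro a ha φ
    exact contDiff_zero.2 (continuous_iff_continuousAt.2 fun z => (HH_fderiv D ha φ z).continuousAt)
  | succ n ih =>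
    intro a ha φ
    refine contDiff_succ_iff_hasFDerivAt.2 ⟨_, ?_, HH_fderiv D ha φ⟩
    exact (((ih ha.q _).smul contDiff_const).add ((ih ha.r _).smul contDiff_const)).add
      ((SS_contDiff D n ha.two_pi _).smul contDiff_const)

end SlowT

end SlowTSec3

noncomputable section SlowTSec4

namespace SlowT

variable {t : ℝ} (D : Data t)

/-- the speed function -/
def ff (p : Torus2) : ℝ := 1 + ∑' k, D.c k * cs (th D k p)

/-- vertical displacement -/
def ww (p : Torus2) : ℝ := ∑' k, -(D.c k / (2 * Real.pi * D.r k)) * sn (th D k p)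

lemma one_le_r (k : ℕ) : (1 : ℝ) ≤ D.r k := by exact_mod_cast D.r_pos k

lemma rapid_c : Rapid D D.c := fun M => (D.c_smooth M).congr fun k => by
  rw [abs_of_pos (c_pos D k)]

lemma rapid_ch : Rapid D fun k => D.c k / (2 * Real.pi) :=
  (rapid_c D).of_le (C := 1) (N := 0) fun k => by
    rw [abs_div, pow_zero, mul_one, one_mul, abs_of_pos Real.two_pi_pos]
    exact div_le_self (abs_nonneg _) (by linarith [Real.pi_gt_three])

lemma rapid_w : Rapid D fun k => -(D.c k / (2 * Real.pi * D.r k)) :=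
  (rapid_c D).of_le (C := 1) (N := 0) fun k => by
    have := one_le_r D k
    rw [abs_neg, abs_div, pow_zero, mul_one, one_mul]
    refine div_le_self (abs_nonneg _) ?_
    rw [abs_of_pos (by positivity)]
    nlinarith [Real.pi_gt_three]

lemma th_proj (k : ℕ) (p : ℝ × ℝ) :
    th D k (torusProj p) = ((D.q k * p.1 - D.r k * p.2 : ℝ) : Torus1) := by
  simp [th_apply, torusProj]

lemma ph_eq (k : ℕ) (p : ℝ × ℝ) (τ : ℝ) :
    ph D k (p, τ) = 2 * Real.pi * (D.q k * p.1 - D.r k * p.2) := rfl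

lemma ww_lift (p : ℝ × ℝ) :
    ww D (torusProj p) = SS D (fun k => -(D.c k / (2 * Real.pi * D.r k))) 0 (p, 0) := by
  unfold ww SS
  congr 1; ext1 k
  rw [th_proj, sn_coe, ph_eq]
  simp

lemma GG_lift (p : ℝ × ℝ) (τ : ℝ) :
    GG D (torusProj p) τ = τ + HH D (fun k => D.c k / (2 * Real.pi)) 0 (p, τ) := by
  unfold GG HH gk
  congr 2; ext1 k
  rw [th_proj, ← AddCircle.coe_add, sn_coe, sn_coe, ph_eq, add_zero, add_zero, div_div]
  congr 3
  ring

lemma ff_lift (p : ℝ × ℝ) (τ : ℝ) :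
    ff D (torusProj p + vv D τ) = 1 + SS D D.c (Real.pi / 2) (p, τ) := by
  unfold ff SS
  congr 2; ext1 k
  rw [map_add, th_vv, th_proj, ← AddCircle.coe_add, cs_coe, ph_eq, Real.sin_add_pi_div_two]
  congr 2; ring

lemma torusProj_surj (p : Torus2) : ∃ x, torusProj x = p := by
  obtain ⟨x, hx⟩ := exists_rep p.1
  obtain ⟨y, hy⟩ := exists_rep p.2
  exact ⟨(x, y), by ext1 <;> simpa [torusProj]⟩

lemma GG_hasDerivAt (p : Torus2) (τ : ℝ) : HasDerivAt (GG D p) (ff D (p + vv D τ)) τ := by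
  obtain ⟨x, rfl⟩ := torusProj_surj p
  have h1 : HasDerivAt (fun u : ℝ => (x, u)) ((0 : ℝ × ℝ), (1 : ℝ)) τ :=
    (hasDerivAt_const τ x).prodMk (hasDerivAt_id τ)
  have h2 := (HH_fderiv D (rapid_ch D) 0 (x, τ)).comp_hasDerivAt τ h1
  have h3 := (hasDerivAt_id τ).add h2
  have e : GG D (torusProj x) = id + (HH D (fun k => D.c k / (2 * Real.pi)) 0 ∘ fun u => (x, u)) := by
    ext u; rw [GG_lift]; rfl
  rw [e, ff_lift]
  refine h3.congr_deriv ?_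
  have e2 : (fun k => 2 * Real.pi * (D.c k / (2 * Real.pi))) = D.c := by
    ext k; have := Real.pi_pos; field_simp
  simp only [e2, zero_add, add_apply, smul_apply, dx_apply, dy_apply, dz_apply]
  simp

lemma continuous_ff : Continuous (ff D) := by
  unfold ff
  refine continuous_const.add (continuous_tsum (u := D.c) (fun k => ?_) D.c_summable fun k p => ?_)
  · have := continuous_cs.comp (continuous_th D k)
    exact continuous_const.mul this
  · rw [norm_mul, Real.norm_eq_abs, Real.norm_eq_abs, abs_of_pos (c_pos D k)]
    exact mul_le_of_le_one_right (c_pos D k).le (abs_cs_le _)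

lemma ff_bounds (p : Torus2) : 9 / 10 ≤ ff D p ∧ ff D p ≤ 11 / 10 := by
  have h : ‖∑' k, D.c k * cs (th D k p)‖ ≤ ∑' k, D.c k :=
    tsum_of_norm_bounded D.c_summable.hasSum fun k => by
      rw [norm_mul, Real.norm_eq_abs, Real.norm_eq_abs, abs_of_pos (c_pos D k)]
      exact mul_le_of_le_one_right (c_pos D k).le (abs_cs_le _)
  rw [Real.norm_eq_abs, abs_le] at h
  have := D.c_tsum
  unfold ff
  constructor <;> linarith

lemma ww_summable (p : Torus2) :
    Summable fun k => -(D.c k / (2 * Real.pi * D.r k)) * sn (th D k p) :=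
  Summable.of_norm_bounded (rapid_w D).summable fun k => by
    rw [norm_mul, Real.norm_eq_abs, Real.norm_eq_abs]
    exact mul_le_of_le_one_right (abs_nonneg _) (abs_sn_le _)

lemma ww_sub' (p p' : Torus2) {b : ℕ → ℝ} (hs : Summable fun k => D.c k * b k)
    (h : ∀ k, |sn (th D k p) - sn (th D k p')| ≤ 2 * Real.pi * D.r k * b k) :
    |ww D p - ww D p'| ≤ ∑' k, D.c k * b k := by
  unfold ww
  rw [← (ww_summable D p).tsum_sub (ww_summable D p'), ← Real.norm_eq_abs]
  refine tsum_of_norm_bounded hs.hasSum fun k => ?_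
  have := one_le_r D k
  have := c_pos D k
  have := Real.pi_pos
  rw [← mul_sub, norm_mul, norm_neg, Real.norm_eq_abs, Real.norm_eq_abs, abs_of_pos (by positivity)]
  calc _ ≤ D.c k / (2 * Real.pi * D.r k) * (2 * Real.pi * D.r k * b k) := 
        mul_le_mul_of_nonneg_left (h k) (by positivity)
    _ = _ := by field_simp

/-- vertical vector -/
def vert (a : ℝ) : Torus2 := (0, (a : Torus1))

lemma vert_add (a b : ℝ) : vert (a + b) = vert a + vert b := by simp [vert]
lemma vert_zero : vert 0 = 0 := by simp [vert]
lemma continuous_vert : Continuous vert := by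
  unfold vert
  exact continuous_const.prodMk (AddCircle.continuous_mk' 1)
lemma th_vert (k : ℕ) (a : ℝ) : th D k (vert a) = ((-(D.r k * a) : ℝ) : Torus1) := by
  simp [th_apply, vert]

lemma norm_vert_le (a : ℝ) : ‖vert a‖ ≤ |a| := by
  rw [vert, Prod.norm_def]
  simpa using norm_coe_le a

lemma ww_vert (p : Torus2) (a b : ℝ) :
    |ww D (p + vert a) - ww D (p + vert b)| ≤ |a - b| / 10 := by
  refine (ww_sub' D _ _ (b := fun _ => |a - b|) (D.c_summable.mul_right _) fun k => ?_).trans ?_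
  · rw [map_add, map_add, th_vert, th_vert]
    refine (sn_diff _ _ _).trans (le_of_eq ?_)
    rw [show -(D.r k * a) - -(D.r k * b) = -(D.r k * (a - b)) by ring, abs_neg, abs_mul,
      abs_of_nonneg (Nat.cast_nonneg _)]
    ring
  · rw [tsum_mul_right]
    nlinarith [D.c_tsum, abs_nonneg (a - b)]

lemma norm_th_le (k : ℕ) (p : Torus2) : ‖th D k p‖ ≤ 3 * D.q k * ‖p‖ := by
  have hr : (D.r k : ℝ) ≤ 2 * D.q k := by exact_mod_cast D.r_le k
  rw [th_apply]
  calc _ ≤ ‖D.q k • p.1‖ + ‖D.r k • p.2‖ := norm_sub_le _ _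
    _ ≤ D.q k * ‖p.1‖ + D.r k * ‖p.2‖ := add_le_add norm_nsmul_le norm_nsmul_le
    _ ≤ D.q k * ‖p‖ + 2 * D.q k * ‖p‖ := by
        gcongr
        · exact norm_fst_le p
        · exact norm_snd_le p
    _ = _ := by ring

lemma ww_lip : ∃ L : ℝ, 0 ≤ L ∧ ∀ p p', |ww D p - ww D p'| ≤ L * ‖p - p'‖ := by
  have hs : Summable fun k => D.c k * (3 * D.q k : ℝ) := by
    refine ((D.c_smooth 1).mul_left 3).congr fun k => by ring
  refine ⟨∑' k, D.c k * (3 * D.q k), tsum_nonneg fun k => mul_nonneg (c_pos D k).le (by positivity),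
    fun p p' => ?_⟩
  have hs' : Summable fun k => D.c k * (3 * D.q k * ‖p - p'‖) :=
    (hs.mul_right ‖p - p'‖).congr fun k => by ring
  refine (ww_sub' D p p' (b := fun k => 3 * D.q k * ‖p - p'‖) hs' fun k => ?_).trans (le_of_eq ?_)
  · have := one_le_r D k
    calc _ ≤ 2 * Real.pi * ‖th D k p - th D k p'‖ := sn_sub_le _ _
      _ ≤ 2 * Real.pi * (3 * D.q k * ‖p - p'‖) := by
          rw [← map_sub]; gcongr; exact norm_th_le D k _
      _ ≤ _ := by
          have : 2 * Real.pi * 1 ≤ 2 * Real.pi * D.r k := by gcongr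
          rw [mul_one] at this
          exact mul_le_mul_of_nonneg_right this (by positivity)
  · rw [← tsum_mul_right]; congr 1; ext k; ring

lemma continuous_ww : Continuous (ww D) := by
  obtain ⟨L, hL, h⟩ := ww_lip D
  refine (LipschitzWith.of_dist_le_mul (K := ⟨L, hL⟩) fun p p' => ?_).continuous
  rw [Real.dist_eq, dist_eq_norm]; exact h p p'

lemma hpert (P : Torus2) (a b : ℝ) :
    |((a + ww D (P + vert a)) - (b + ww D (P + vert b))) - (a - b)| ≤ |a - b| / 10 := by
  rw [show ((a + ww D (P + vert a)) - (b + ww D (P + vert b))) - (a - b) =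
    ww D (P + vert a) - ww D (P + vert b) by ring]
  exact ww_vert D P a b

/-- inverse vertical displacement -/
def hh (P : Torus2) : ℝ :=
  (exists_solution (g := fun a => a + ww D (P + vert a)) (hpert D P) 0).choose

lemma hh_spec (P : Torus2) : hh D P + ww D (P + vert (hh D P)) = 0 :=
  (exists_solution (g := fun a => a + ww D (P + vert a)) (hpert D P) 0).choose_spec

attribute [irreducible] hh ww ff vert

lemma hh_eq {P : Torus2} {a : ℝ} (h : a + ww D (P + vert a) = 0) : hh D P = a := by
  have h1 := pert_lower (g := fun a => a + ww D (P + vert a)) (hpert D P) (hh D P) a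
  simp only [hh_spec, h, sub_zero, abs_zero, mul_zero] at h1
  exact sub_eq_zero.1 (abs_nonpos_iff.1 h1)

/-- the conjugating map -/
def Psi (p : Torus2) : Torus2 := p + vert (ww D p)
/-- its inverse -/
def Psii (P : Torus2) : Torus2 := P + vert (hh D P)

lemma Psi_Psii (P : Torus2) : Psi D (Psii D P) = P := by
  unfold Psi Psii
  rw [add_assoc, ← vert_add, hh_spec, vert_zero, add_zero]

lemma vert_cancel (p : Torus2) (a : ℝ) : p + vert a + vert (-a) = p := by
  rw [add_assoc, ← vert_add, add_neg_cancel, vert_zero, add_zero]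

lemma Psii_Psi (p : Torus2) : Psii D (Psi D p) = p := by
  have : hh D (p + vert (ww D p)) = - ww D p := by
    apply hh_eq
    rw [vert_cancel]; ring
  unfold Psi Psii
  rw [this, vert_cancel]

lemma continuous_Psi : Continuous (Psi D) := by
  have h1 := continuous_ww D
  have h2 := continuous_vert.comp h1
  exact continuous_id.add h2

lemma Psi_lip : ∃ L : ℝ, 0 < L ∧ ∀ p p', ‖Psi D p - Psi D p'‖ ≤ L * ‖p - p'‖ := by
  obtain ⟨L, hL, h⟩ := ww_lip D
  refine ⟨1 + L, by linarith, fun p p' => ?_⟩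
  have e : Psi D p - Psi D p' = (p - p') + vert (ww D p - ww D p') := by
    unfold Psi
    have := vert_add (ww D p - ww D p') (ww D p')
    rw [sub_add_cancel] at this
    rw [this]; abel
  rw [e]
  calc _ ≤ ‖p - p'‖ + ‖vert (ww D p - ww D p')‖ := norm_add_le _ _
    _ ≤ ‖p - p'‖ + L * ‖p - p'‖ := by
        gcongr; exact (norm_vert_le _).trans (h p p')
    _ = _ := by ring

lemma Psii_lip : ∃ L : ℝ, 0 < L ∧ ∀ p p', ‖Psii D p - Psii D p'‖ ≤ L * ‖p - p'‖ := by
  obtain ⟨L, hL, h⟩ := ww_lip D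
  refine ⟨1 + 10 / 9 * L, by linarith, fun p p' => ?_⟩
  have hl : |hh D p - hh D p'| ≤ 10 / 9 * (L * ‖p - p'‖) := by
    refine (pert_lower (g := fun a => a + ww D (p + vert a)) (hpert D p) _ _).trans ?_
    simp only [hh_spec]
    rw [zero_sub, abs_neg]
    have e : hh D p' + ww D (p + vert (hh D p')) =
        ww D (p + vert (hh D p')) - ww D (p' + vert (hh D p')) := by
      linarith [hh_spec D p']
    rw [e]
    have := h (p + vert (hh D p')) (p' + vert (hh D p'))
    rw [add_sub_add_right_eq_sub] at this
    linarith
  have e : Psii D p - Psii D p' = (p - p') + vert (hh D p - hh D p') := by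
    unfold Psii
    have := vert_add (hh D p - hh D p') (hh D p')
    rw [sub_add_cancel] at this
    rw [this]; abel
  rw [e]
  calc _ ≤ ‖p - p'‖ + ‖vert (hh D p - hh D p')‖ := norm_add_le _ _
    _ ≤ ‖p - p'‖ + 10 / 9 * (L * ‖p - p'‖) := by
        gcongr; exact (norm_vert_le _).trans hl
    _ = _ := by ring

lemma continuous_Psii : Continuous (Psii D) := by
  obtain ⟨L, hL, h⟩ := Psii_lip D
  refine (LipschitzWith.of_dist_le_mul (K := ⟨L, hL.le⟩) fun p p' => ?_).continuous
  rw [dist_eq_norm, dist_eq_norm]; exact h p p'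

attribute [irreducible] Psi Psii

/-- conjugated flow -/
def Tm (s : ℝ) (P : Torus2) : Torus2 := Psi D (fl D s (Psii D P))

lemma Tm_add (s u : ℝ) (P : Torus2) : Tm D (s + u) P = Tm D u (Tm D s P) := by
  unfold Tm; rw [Psii_Psi, fl_add]

lemma Tm_neg (s : ℝ) (P : Torus2) : Tm D (-s) (Tm D s P) = P := by
  unfold Tm; rw [Psii_Psi, fl_neg, Psi_Psii]

lemma Tm_neg' (s : ℝ) (P : Torus2) : Tm D s (Tm D (-s) P) = P := by
  unfold Tm; rw [Psii_Psi, fl_neg', Psi_Psii]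

lemma continuous_Tm (s : ℝ) : Continuous (Tm D s) :=
  (continuous_Psi D).comp ((continuous_fl D s).comp (continuous_Psii D))

lemma Tm_iter (n : ℕ) : (Tm D 1)^[n] = Tm D n := by
  induction n with
  | zero => ext1 P; simp [Tm, fl_zero, Psi_Psii]
  | succ n ih =>
    rw [Function.iterate_succ', ih]; ext1 P
    rw [Function.comp_apply, ← Tm_add]; simp

lemma torusProj_add (p q : ℝ × ℝ) : torusProj (p + q) = torusProj p + torusProj q := by
  simp [torusProj]

lemma lift_fl (s : ℝ) {n : ℕ} (hn : n ≠ 0) : ∃ F : ℝ × ℝ → ℝ × ℝ, ContDiff ℝ n F ∧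
    IsLiftOf F (fl D s) := by
  have hT : ContDiff ℝ n fun z : E3 => tau D (torusProj z.1) z.2 := by
    refine implicit_contDiff hn (G := fun z : E3 => GG D (torusProj z.1) z.2) ?_
      (fun v a b => GG_lip D _ a b) (fun v s => GG_tau D _ _)
    have : (fun z : E3 => GG D (torusProj z.1) z.2) =
      fun z => z.2 + HH D (fun k => D.c k / (2 * Real.pi)) 0 z := by
      ext z; rw [GG_lift]
    rw [this]
    exact contDiff_snd.add (HH_contDiff D n (rapid_ch D) 0)
  have hT1 : ContDiff ℝ n fun p : ℝ × ℝ => tau D (torusProj p) s := by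
    have h1 : ContDiff ℝ n fun p : ℝ × ℝ => (p, s) := contDiff_id.prodMk contDiff_const
    have := hT.comp h1
    exact this
  refine ⟨fun p => p + (D.α * tau D (torusProj p) s, tau D (torusProj p) s),
    contDiff_id.add ((contDiff_const.mul hT1).prodMk hT1), fun p => ?_⟩
  rw [torusProj_add, fl, vv]
  rfl

lemma lift_Psi (n : ℕ) : ∃ F : ℝ × ℝ → ℝ × ℝ, ContDiff ℝ n F ∧ IsLiftOf F (Psi D) := by
  have h : ContDiff ℝ n fun p : ℝ × ℝ => ww D (torusProj p) := by
    have h1 : ContDiff ℝ n fun p : ℝ × ℝ => (p, (0 : ℝ)) := contDiff_id.prodMk contDiff_const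
    have h2 := (SS_contDiff D n (rapid_w D) 0).comp h1
    have e : (fun p : ℝ × ℝ => ww D (torusProj p)) = (SS D (fun k => -(D.c k / (2 * Real.pi * D.r k))) 0 ∘
        fun p => (p, 0)) := by
      ext p; exact ww_lift D p
    rw [e]; exact h2
  refine ⟨fun p => p + (0, ww D (torusProj p)), contDiff_id.add (contDiff_const.prodMk h),
    fun p => ?_⟩
  rw [torusProj_add, Psi, vert]
  rfl

lemma lift_Psii {n : ℕ} (hn : n ≠ 0) :
    ∃ F : ℝ × ℝ → ℝ × ℝ, ContDiff ℝ n F ∧ IsLiftOf F (Psii D) := by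
  have e2 : ∀ (p : ℝ × ℝ) (a : ℝ), torusProj (p + (0, a)) = torusProj p + vert a := by
    intro p a; rw [torusProj_add, vert]; rfl
  have e : (fun z : E3 => z.2 + ww D (torusProj z.1 + vert z.2)) =
      fun z => z.2 + SS D (fun k => -(D.c k / (2 * Real.pi * D.r k))) 0 (z.1 + (0, z.2), 0) := by
    ext z; rw [← e2, ww_lift]
  have hG : ContDiff ℝ n fun z : E3 => z.2 + ww D (torusProj z.1 + vert z.2) := by
    rw [e]
    have h1 : ContDiff ℝ n fun z : E3 => (z.1 + (0, z.2), (0 : ℝ)) := by fun_prop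
    exact contDiff_snd.add ((SS_contDiff D n (rapid_w D) 0).comp h1)
  let Tf : E3 → ℝ := fun z =>
    (exists_solution (g := fun a => a + ww D (torusProj z.1 + vert a)) (hpert D _) z.2).choose
  have hTf : ∀ v s, Tf (v, s) + ww D (torusProj v + vert (Tf (v, s))) = s := fun v s =>
    (exists_solution (g := fun a => a + ww D (torusProj v + vert a)) (hpert D _) s).choose_spec
  have hT := implicit_contDiff (T := Tf) hn hG (fun v a b => hpert D _ a b) hTf
  have hh1 : ∀ p, hh D (torusProj p) = Tf (p, 0) := fun p => hh_eq D (hTf p 0)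
  have hT1 : ContDiff ℝ n fun p : ℝ × ℝ => hh D (torusProj p) := by
    have h1 : ContDiff ℝ n fun p : ℝ × ℝ => (p, (0 : ℝ)) := contDiff_id.prodMk contDiff_const
    have h2 := hT.comp h1
    have e : (fun p : ℝ × ℝ => hh D (torusProj p)) = (Tf ∘ fun p => (p, 0)) := by
      ext p; exact hh1 p
    rw [e]; exact h2
  refine ⟨fun p => p + (0, hh D (torusProj p)), contDiff_id.add (contDiff_const.prodMk hT1),
    fun p => ?_⟩
  rw [e2, Psii]

lemma lift_Tm (s : ℝ) {n : ℕ} (hn : n ≠ 0) : ∃ F : ℝ × ℝ → ℝ × ℝ, ContDiff ℝ n F ∧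
    IsLiftOf F (Tm D s) := by
  obtain ⟨F1, h1, l1⟩ := lift_Psii D hn
  obtain ⟨F2, h2, l2⟩ := lift_fl D s hn
  obtain ⟨F3, h3, l3⟩ := lift_Psi D n
  refine ⟨F3 ∘ F2 ∘ F1, h3.comp (h2.comp h1), fun p => ?_⟩
  rw [Function.comp_apply, Function.comp_apply, l3, l2, l1]; rfl

lemma Tm_diffeo {n : ℕ} (hn : n ≠ 0) : IsCkTorusDiffeo (n : ℕ∞) (Tm D 1) := by
  have hi : Function.Injective (Tm D 1) := Function.LeftInverse.injective (Tm_neg D 1)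
  have e : Function.invFun (Tm D 1) = Tm D (-1) := by
    ext1 P
    apply hi
    rw [Tm_neg', Function.invFun_eq ⟨Tm D (-1) P, Tm_neg' D 1 P⟩]
  refine ⟨⟨hi, Function.RightInverse.surjective (Tm_neg' D 1)⟩, ?_, ?_⟩
  · obtain ⟨F, h, l⟩ := lift_Tm D 1 hn
    exact ⟨F, by exact_mod_cast h, l⟩
  · rw [e]
    obtain ⟨F, h, l⟩ := lift_Tm D (-1) hn
    exact ⟨F, by exact_mod_cast h, l⟩

end SlowT

end SlowTSec4

noncomputable section SlowTSec5

namespace SlowT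

instance instProb1 : IsProbabilityMeasure (volume : Measure Torus1) :=
  ⟨by rw [AddCircle.measure_univ]; simp⟩

instance instProb2 : IsProbabilityMeasure (volume : Measure Torus2) := by
  change IsProbabilityMeasure ((volume : Measure Torus1).prod (volume : Measure Torus1))
  infer_instance

instance instInv2 : (volume : Measure Torus2).IsAddLeftInvariant := by
  change ((volume : Measure Torus1).prod (volume : Measure Torus1)).IsAddLeftInvariant
  infer_instance

instance instInv2r : (volume : Measure Torus2).IsAddRightInvariant := by
  infer_instance

variable {t : ℝ} (D : Data t)

/-- the speed as a nonnegative real -/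
def ffn (p : Torus2) : ℝ≥0 := (ff D p).toNNReal

lemma continuous_ffn : Continuous (ffn D) := continuous_real_toNNReal.comp (continuous_ff D)

lemma ffn_coe (p : Torus2) : (ffn D p : ℝ) = ff D p :=
  Real.coe_toNNReal _ (by linarith [(ff_bounds D p).1])

/-- invariant measure of the flow -/
def mu : Measure Torus2 := volume.withDensity fun p => (ffn D p : ℝ≥0∞)

instance instFinMu : IsFiniteMeasure (mu D) := by
  refine isFiniteMeasure_withDensity (ne_of_lt ?_)
  calc ∫⁻ p, (ffn D p : ℝ≥0∞) ∂(volume : Measure Torus2)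
      ≤ ∫⁻ _, 2 ∂(volume : Measure Torus2) := by
        apply lintegral_mono
        intro p
        have : ffn D p ≤ 2 := by
          rw [← NNReal.coe_le_coe, ffn_coe]; norm_num; linarith [(ff_bounds D p).2]
        simpa using (ENNReal.coe_le_coe.2 this)
    _ < ⊤ := by simp

lemma integral_mu (g : Torus2 → ℝ) : ∫ p, g p ∂(mu D) = ∫ p, g p * ff D p := by
  unfold mu
  rw [integral_withDensity_eq_integral_smul (continuous_ffn D).measurable]
  congr 1; ext p
  rw [NNReal.smul_def, ffn_coe, smul_eq_mul, mul_comm]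

lemma bdd_of_cont {h : Torus2 → ℝ} (hc : Continuous h) : ∃ M : ℝ, 0 < M ∧ ∀ p, |h p| ≤ M := by
  obtain ⟨M, hM⟩ := isCompact_univ.exists_bound_of_continuousOn hc.continuousOn
  exact ⟨|M| + 1, by positivity, fun p => (hM p (mem_univ p)).trans (by linarith [le_abs_self M])⟩

lemma integral_flow_line {h : Torus2 → ℝ} (hc : Continuous h) (s N : ℝ) (p : Torus2) :
    ∫ u in (0 : ℝ)..N, h (fl D s (p + vv D u)) * ff D (p + vv D u) =
      ∫ σ in s..(GG D p N + s), h (fl D σ p) := by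
  have h1 := intervalIntegral.integral_comp_mul_deriv (a := 0) (b := N) (f := GG D p)
    (f' := fun u => ff D (p + vv D u)) (g := fun σ => h (fl D (σ + s) p))
    (fun u _ => GG_hasDerivAt D p u)
    ((continuous_ff D).comp (continuous_const.add (continuous_vv D))).continuousOn
    (hc.comp (cont_fl_comp D continuous_const (continuous_id.add continuous_const)))
  rw [GG_zero, intervalIntegral.integral_comp_add_right (fun σ => h (fl D σ p)), zero_add] at h1
  rw [← h1]
  congr 1; ext u
  rw [Function.comp_apply, fl_add, fl_GG]

lemma integral_swap_line {h : Torus2 → ℝ} (hc : Continuous h) {N : ℝ} (hN : 0 ≤ N) :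
    N * ∫ p, h p = ∫ p, ∫ u in (0 : ℝ)..N, h (p + vv D u) := by
  simp only [intervalIntegral.integral_of_le hN]
  rw [integral_integral_swap]
  · have : ∀ u : ℝ, ∫ p, h (p + vv D u) = ∫ p, h p := fun u => integral_add_right_eq_self h _
    simp only [this]
    simp [hN]
  · obtain ⟨M, -, hM⟩ := bdd_of_cont hc
    refine Integrable.of_bound (C := M) ?_ (Eventually.of_forall fun x => hM _)
    apply Continuous.aestronglyMeasurable
    have := hc.comp (continuous_fst.add ((continuous_vv D).comp continuous_snd) :
      Continuous fun x : Torus2 × ℝ => x.1 + vv D x.2)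
    exact this

lemma fl_preserves_integral {h : Torus2 → ℝ} (hc : Continuous h) (s : ℝ) :
    ∫ p, h (fl D s p) * ff D p = ∫ p, h p * ff D p := by
  obtain ⟨M, hM0, hM⟩ := bdd_of_cont hc
  have hf := continuous_ff D
  have c1 : Continuous fun p => h (fl D s p) * ff D p := (hc.comp (continuous_fl D s)).mul hf
  have c0 : Continuous fun p => h p * ff D p := hc.mul hf
  have hflow : ∀ p, Continuous fun σ => h (fl D σ p) := fun p =>
    hc.comp (cont_fl_comp D continuous_const continuous_id)
  have key : ∀ N : ℝ, 0 ≤ N →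
      N * |(∫ p, h (fl D s p) * ff D p) - ∫ p, h p * ff D p| ≤ 2 * M * |s| := by
    intro N hN
    have e1 := integral_swap_line D c1 hN
    have e0 := integral_swap_line D c0 hN
    have l1 : ∀ p, ∫ u in (0 : ℝ)..N, h (fl D s (p + vv D u)) * ff D (p + vv D u) =
      ∫ σ in s..(GG D p N + s), h (fl D σ p) := fun p => integral_flow_line D hc s N p
    have l0 : ∀ p, ∫ u in (0 : ℝ)..N, h (p + vv D u) * ff D (p + vv D u) =
        ∫ σ in (0 : ℝ)..(GG D p N), h (fl D σ p) := fun p => by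
      have := integral_flow_line D hc 0 N p
      simpa only [fl_zero, add_zero] using this
    have hcI : ∀ {g : Torus2 → ℝ}, Continuous g →
        Integrable fun p => ∫ u in (0 : ℝ)..N, g (p + vv D u) := by
      intro g hg
      apply Continuous.integrable_of_hasCompactSupport
      · apply intervalIntegral.continuous_parametric_intervalIntegral_of_continuous'
        have := hg.comp (continuous_fst.add ((continuous_vv D).comp continuous_snd) :
          Continuous fun x : Torus2 × ℝ => x.1 + vv D x.2)
        exact this
      · exact HasCompactSupport.of_compactSpace _
    rw [← abs_of_nonneg hN, ← abs_mul, mul_sub, e1, e0,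
      ← integral_sub (hcI c1) (hcI c0), ← Real.norm_eq_abs]
    refine (norm_integral_le_of_norm_le_const (C := 2 * M * |s|)
      (Eventually.of_forall fun p => ?_)).trans (by simp)
    rw [l1, l0]
    have ii : ∀ a b, IntervalIntegrable (fun σ => h (fl D σ p)) volume a b := fun a b =>
      (hflow p).intervalIntegrable a b
    have e : (∫ σ in s..(GG D p N + s), h (fl D σ p)) - ∫ σ in (0 : ℝ)..(GG D p N), h (fl D σ p)
        = (∫ σ in (GG D p N)..(GG D p N + s), h (fl D σ p)) - ∫ σ in (0 : ℝ)..s, h (fl D σ p) := by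
      have := intervalIntegral.integral_add_adjacent_intervals (ii 0 (GG D p N))
        (ii (GG D p N) (GG D p N + s))
      have := intervalIntegral.integral_add_adjacent_intervals (ii 0 s)
        (ii s (GG D p N + s))
      linarith
    rw [e]
    have b1 := intervalIntegral.norm_integral_le_of_norm_le_const (a := GG D p N)
      (b := GG D p N + s) (f := fun σ => h (fl D σ p)) (C := M) (fun σ _ => hM _)
    have b2 := intervalIntegral.norm_integral_le_of_norm_le_const (a := 0)
      (b := s) (f := fun σ => h (fl D σ p)) (C := M) (fun σ _ => hM _)
    rw [add_sub_cancel_left] at b1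
    rw [sub_zero] at b2
    refine (norm_sub_le _ _).trans ?_
    linarith
  by_contra hne
  have hpos : 0 < |(∫ p, h (fl D s p) * ff D p) - ∫ p, h p * ff D p| :=
    abs_pos.2 (sub_ne_zero.2 hne)
  have := key ((2 * M * |s| + 1) / |(∫ p, h (fl D s p) * ff D p) - ∫ p, h p * ff D p|)
    (by positivity)
  rw [div_mul_cancel₀ _ hpos.ne'] at this
  linarith

lemma fl_mp (s : ℝ) : MeasurePreserving (fl D s) (mu D) (mu D) := by
  refine ⟨(continuous_fl D s).measurable, ?_⟩
  have : IsFiniteMeasure (Measure.map (fl D s) (mu D)) := Measure.isFiniteMeasure_map _ _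
  refine ext_of_forall_integral_eq_of_IsFiniteMeasure fun g => ?_
  rw [integral_map (continuous_fl D s).measurable.aemeasurable
    g.continuous.aestronglyMeasurable, integral_mu, integral_mu]
  exact fl_preserves_integral D g.continuous s

lemma ww_hasDerivAt (x b : ℝ) :
    HasDerivAt (fun b : ℝ => b + ww D ((x : Torus1), (b : Torus1)))
      (ff D ((x : Torus1), (b : Torus1))) b := by
  have h1 : HasDerivAt (fun u : ℝ => (((x, u), 0) : E3)) (((0, 1), 0) : E3) b :=
    ((hasDerivAt_const b x).prodMk (hasDerivAt_id b)).prodMk (hasDerivAt_const b 0)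
  have h2 := (SS_fderiv D (rapid_w D) 0 ((x, b), 0)).comp_hasDerivAt b h1
  have h3 := (hasDerivAt_id b).add h2
  have e : (fun b : ℝ => b + ww D ((x : Torus1), (b : Torus1))) =
      id + (SS D (fun k => -(D.c k / (2 * Real.pi * D.r k))) 0 ∘ fun u => ((x, u), 0)) := by
    ext u
    have := ww_lift D (x, u)
    simp only [torusProj] at this
    rw [this]; rfl
  have e3 := ff_lift D (x, b) 0
  rw [vv_zero, add_zero] at e3
  simp only [torusProj] at e3
  rw [e, e3]
  refine h3.congr_deriv ?_
  have e2 : (fun k => -(2 * Real.pi * D.r k * -(D.c k / (2 * Real.pi * D.r k)))) = D.c := by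
    ext k; have := Real.pi_pos; have := one_le_r D k; field_simp
  simp only [e2, zero_add, add_apply, smul_apply, dx_apply, dy_apply, dz_apply]
  simp

lemma Psi_integral {h : Torus2 → ℝ} (hc : Continuous h) :
    ∫ p, h (Psi D p) * ff D p = ∫ p, h p := by
  have hf := continuous_ff D
  have c1 : Continuous fun p => h (Psi D p) * ff D p := (hc.comp (continuous_Psi D)).mul hf
  have int : ∀ {g : Torus2 → ℝ}, Continuous g → Integrable g ((volume : Measure Torus1).prod volume) :=
    fun hg => hg.integrable_of_hasCompactSupport (HasCompactSupport.of_compactSpace _)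
  change ∫ p, h (Psi D p) * ff D p ∂((volume : Measure Torus1).prod volume) =
    ∫ p, h p ∂((volume : Measure Torus1).prod volume)
  rw [integral_prod _ (int c1), integral_prod _ (int hc)]
  congr 1; ext X
  obtain ⟨x, rfl⟩ := exists_rep X
  rw [← AddCircle.intervalIntegral_preimage 1 0,
    ← AddCircle.intervalIntegral_preimage 1 (0 + ww D ((x : Torus1), ((0 : ℝ) : Torus1)))]
  have cmk : Continuous fun b : ℝ => (((x : Torus1), (b : Torus1)) : Torus2) :=
    continuous_const.prodMk (AddCircle.continuous_mk' 1)
  have h1 := intervalIntegral.integral_comp_mul_deriv (a := 0) (b := 0 + 1)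
    (f := fun b : ℝ => b + ww D ((x : Torus1), (b : Torus1)))
    (f' := fun b => ff D ((x : Torus1), (b : Torus1))) (g := fun σ => h ((x : Torus1), (σ : Torus1)))
    (fun u _ => ww_hasDerivAt D x u) (hf.comp cmk).continuousOn (hc.comp cmk)
  have e : ((0 + 1 : ℝ) : Torus1) = ((0 : ℝ) : Torus1) := by
    rw [AddCircle.coe_add_period]
  rw [show (0 : ℝ) + ww D ((x : Torus1), ((0 : ℝ) : Torus1)) + 1 =
    0 + 1 + ww D ((x : Torus1), ((0 + 1 : ℝ) : Torus1)) by rw [e]; ring, ← h1]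
  congr 1; ext b
  rw [Function.comp_apply, Psi, vert]
  congr 2
  ext1
  · simp
  · simp

lemma Psi_mp : MeasurePreserving (Psi D) (mu D) volume := by
  refine ⟨(continuous_Psi D).measurable, ?_⟩
  have : IsFiniteMeasure (Measure.map (Psi D) (mu D)) := Measure.isFiniteMeasure_map _ _
  refine ext_of_forall_integral_eq_of_IsFiniteMeasure fun g => ?_
  rw [integral_map (continuous_Psi D).measurable.aemeasurable
    g.continuous.aestronglyMeasurable, integral_mu]
  exact Psi_integral D g.continuous

lemma Psii_mp : MeasurePreserving (Psii D) volume (mu D) := by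
  refine ⟨(continuous_Psii D).measurable, ?_⟩
  rw [← (Psi_mp D).map_eq, Measure.map_map (continuous_Psii D).measurable
    (continuous_Psi D).measurable]
  have : Psii D ∘ Psi D = id := by ext1 p; exact Psii_Psi D p
  rw [this, Measure.map_id]

lemma Tm_mp (s : ℝ) : MeasurePreserving (Tm D s) volume volume :=
  (Psi_mp D).comp ((fl_mp D s).comp (Psii_mp D))

end SlowT

end SlowTSec5

noncomputable section SlowTSec6

namespace SlowT

variable {t : ℝ} (D : Data t)

lemma split_sum {h : ℕ → ℝ} (hs : Summable h) (k : ℕ) {A : ℕ → ℝ} (hA : ∀ j < k, |h j| ≤ A j)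
    {B : ℝ} (hB0 : 0 ≤ B) (hB : ∀ j, k < j → |h j| ≤ D.c j * B) :
    |∑' j, h j - h k| ≤ ∑ j ∈ Finset.range k, A j + B * D.β k ^ 2 := by
  have hcs : Summable fun j => D.c (j + (k + 1)) := (summable_nat_add_iff (k + 1)).2 D.c_summable
  rw [← hs.sum_add_tsum_nat_add (k + 1), Finset.sum_range_succ]
  have e : ∑ j ∈ Finset.range k, h j + h k + ∑' j, h (j + (k + 1)) - h k =
    ∑ j ∈ Finset.range k, h j + ∑' j, h (j + (k + 1)) := by ring
  rw [e]
  refine (abs_add_le _ _).trans (add_le_add ?_ ?_)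
  · exact (Finset.abs_sum_le_sum_abs _ _).trans
      (Finset.sum_le_sum fun j hj => hA j (Finset.mem_range.1 hj))
  · rw [← Real.norm_eq_abs]
    refine (tsum_of_norm_bounded (hcs.mul_right B).hasSum fun j => ?_).trans ?_
    · rw [Real.norm_eq_abs]; exact hB _ (by omega)
    · rw [tsum_mul_right, mul_comm]
      exact mul_le_mul_of_nonneg_left (D.tail k) hB0

lemma GG_main (p : Torus2) (τ : ℝ) (k : ℕ) :
    |GG D p τ - τ - gk D k p τ| ≤ ∑ j ∈ Finset.range k, D.c j / D.β j + |τ| * D.β k ^ 2 := by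
  have h := split_sum D (summable_gk D p τ) k (A := fun j => D.c j / D.β j)
    (fun j _ => gk_bound2 D j p τ) (B := |τ|) (abs_nonneg _) (fun j _ => gk_bound D j p τ)
  rw [GG, add_sub_cancel_left]
  exact h

lemma sin_taylor (a x : ℝ) : |Real.sin (a + x) - Real.sin a - x * Real.cos a| ≤ x ^ 2 := by
  have h : ∀ y ∈ uIcc 0 x, HasDerivWithinAt (fun y => Real.sin (a + y) - y * Real.cos a)
      (Real.cos (a + y) - Real.cos a) (uIcc 0 x) y := by
    intro y _
    have h1 := ((hasDerivAt_id y).const_add a).sin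
    have h2 := (hasDerivAt_id y).mul_const (Real.cos a)
    have := h1.sub h2
    simp only [id, mul_one, one_mul] at this
    exact this.hasDerivWithinAt
  have key := (convex_uIcc (0 : ℝ) x).norm_image_sub_le_of_norm_hasDerivWithin_le (C := |x|) h
    (fun y hy => ?_) left_mem_uIcc right_mem_uIcc
  · rw [Real.norm_eq_abs, Real.norm_eq_abs, sub_zero, add_zero, zero_mul, sub_zero, abs_mul_abs_self]
      at key
    rw [show Real.sin (a + x) - Real.sin a - x * Real.cos a =
      Real.sin (a + x) - x * Real.cos a - Real.sin a by ring, pow_two]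
    exact key
  · rw [Real.norm_eq_abs]
    have h1 := sin_sub_sin_le (a + y + Real.pi / 2) (a + Real.pi / 2)
    rw [Real.sin_add_pi_div_two, Real.sin_add_pi_div_two] at h1
    refine h1.trans ?_
    rw [show a + y + Real.pi / 2 - (a + Real.pi / 2) = y - 0 by ring]
    have := abs_sub_left_of_mem_uIcc hy
    simpa using this

lemma gk_taylor (k : ℕ) (p : Torus2) (τ : ℝ) :
    |gk D k p τ - D.c k * τ * cs (th D k p)| ≤ 8 * D.c k * D.β k * τ ^ 2 := by
  obtain ⟨x, hx⟩ := exists_rep (th D k p)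
  have hb := D.β_pos k
  have hc := c_pos D k
  have hpi := Real.pi_pos
  rw [gk, ← hx, ← AddCircle.coe_add, sn_coe, sn_coe, cs_coe]
  have h := sin_taylor (2 * Real.pi * x) (2 * Real.pi * D.β k * τ)
  have e : D.c k / (2 * Real.pi * D.β k) * (Real.sin (2 * Real.pi * (x + D.β k * τ)) -
      Real.sin (2 * Real.pi * x)) - D.c k * τ * Real.cos (2 * Real.pi * x) =
      D.c k / (2 * Real.pi * D.β k) * (Real.sin (2 * Real.pi * x + 2 * Real.pi * D.β k * τ) -
      Real.sin (2 * Real.pi * x) - 2 * Real.pi * D.β k * τ * Real.cos (2 * Real.pi * x)) := by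
    rw [show 2 * Real.pi * (x + D.β k * τ) = 2 * Real.pi * x + 2 * Real.pi * D.β k * τ by ring]
    field_simp
  rw [e, abs_mul, abs_of_pos (by positivity)]
  calc _ ≤ D.c k / (2 * Real.pi * D.β k) * (2 * Real.pi * D.β k * τ) ^ 2 :=
        mul_le_mul_of_nonneg_left h (by positivity)
    _ = 2 * Real.pi * (D.c k * D.β k * τ ^ 2) := by field_simp
    _ ≤ 8 * (D.c k * D.β k * τ ^ 2) := by
        have := Real.pi_lt_four
        gcongr; linarith
    _ = _ := by ring

lemma c_le_one (k : ℕ) : D.c k ≤ 1 := by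
  rw [D.hc]; exact Real.rpow_le_one (D.β_pos k).le (D.β_le k) (by linarith [D.t_le])

lemma c_lim : Tendsto D.c atTop (𝓝 0) := D.c_summable.tendsto_atTop_zero

lemma β_div_c (k : ℕ) : D.β k / D.c k = D.β k ^ t := by
  have hb := D.β_pos k
  rw [D.hc, div_eq_iff (Real.rpow_pos_of_pos hb _).ne', ← Real.rpow_add hb]
  simp

lemma β_div_c_lim : Tendsto (fun k => D.β k / D.c k) atTop (𝓝 0) := by
  simp only [β_div_c]
  have := D.β_lim.rpow_const (p := t) (Or.inr D.t_pos.le)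
  rwa [Real.zero_rpow D.t_pos.ne'] at this

lemma c_sq_le (k : ℕ) : D.c k ^ 2 ≤ D.β k := by
  have hb := D.β_pos k
  rw [D.hc, ← Real.rpow_natCast, ← Real.rpow_mul hb.le]
  calc D.β k ^ ((1 - t) * (2 : ℕ)) ≤ D.β k ^ (1 : ℝ) := by
        apply Real.rpow_le_rpow_of_exponent_ge hb (D.β_le k)
        push_cast; linarith [D.t_le]
    _ = _ := Real.rpow_one _

lemma low3 : Tendsto (fun k => D.c k * ∑ j ∈ Finset.range k, D.c j / D.β j) atTop (𝓝 0) := by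
  refine squeeze_zero (fun k => ?_) (fun k => ?_) D.low2
  · exact mul_nonneg (c_pos D k).le (Finset.sum_nonneg fun j _ => 
      (div_pos (c_pos D j) (D.β_pos j)).le)
  · have h0 : 0 ≤ ∑ j ∈ Finset.range k, D.c j / D.β j :=
      Finset.sum_nonneg fun j _ => (div_pos (c_pos D j) (D.β_pos j)).le
    rw [mul_comm, div_eq_mul_inv]
    apply mul_le_mul_of_nonneg_left _ h0
    have hb := D.β_pos k
    have hc := c_pos D k
    rw [inv_div, le_div_iff₀ hc, ← pow_two]
    exact c_sq_le D k

/-- the small horizontal translation -/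
def rho (k : ℕ) : Torus2 := (((1 / (2 * D.q k) : ℝ) : Torus1), 0)
/-- the integer time -/
def mm (k : ℕ) : ℕ := ⌊1 / D.c k⌋₊
/-- the displacement -/
def bb (k : ℕ) (p : Torus2) : ℝ :=
  GG D (p + rho D k) (tau D p (mm D k)) - GG D p (tau D p (mm D k))

lemma Xi_eq (k : ℕ) (p : Torus2) :
    fl D (-(mm D k : ℝ)) (fl D (mm D k) p + rho D k) = fl D (bb D k p) (p + rho D k) := by
  have e : fl D (mm D k) p + rho D k =
      fl D (GG D (p + rho D k) (tau D p (mm D k))) (p + rho D k) := by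
    rw [fl_GG]
    conv_lhs => rw [fl]
    abel
  rw [e, ← fl_add, bb, GG_tau]
  rfl

lemma th_rho (j k : ℕ) : th D j (rho D k) = ((D.q j / (2 * D.q k) : ℝ) : Torus1) := by
  rw [th_apply, rho]
  simp only [smul_zero, sub_zero]
  rw [← AddCircle.coe_nsmul, nsmul_eq_mul, mul_one_div]

lemma sn_half (θ : Torus1) : sn (θ + ((1 / 2 : ℝ) : Torus1)) = - sn θ := by
  obtain ⟨x, rfl⟩ := exists_rep θ
  rw [← AddCircle.coe_add, sn_coe, sn_coe, ← Real.sin_add_pi]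
  congr 1; ring

lemma gk_rho_self (k : ℕ) (p : Torus2) (τ : ℝ) : gk D k (p + rho D k) τ = - gk D k p τ := by
  have hq : (D.q k : ℝ) / (2 * D.q k) = 1 / 2 := by
    have := one_le_q (D := D) k; field_simp
  simp only [gk, map_add, th_rho, hq]
  rw [sn_half, add_right_comm, sn_half]; ring

lemma gk_rho_lt (j k : ℕ) (p : Torus2) (τ : ℝ) :
    |gk D j (p + rho D k) τ - gk D j p τ| ≤ D.c j / D.β j * D.q j / D.q k := by
  have hq := one_le_q (D := D) k
  have hb := D.β_pos j
  have hpi := Real.pi_pos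
  have hco := coef_pos D j
  have key : ∀ θ : Torus1, |sn (θ + ((D.q j / (2 * D.q k) : ℝ) : Torus1)) - sn θ| ≤
      Real.pi * D.q j / D.q k := by
    intro θ
    have := sn_diff θ (D.q j / (2 * D.q k)) 0
    rw [AddCircle.coe_zero, add_zero, sub_zero, abs_of_nonneg (by positivity : (0:ℝ) ≤ D.q j / (2 * D.q k))] at this
    refine this.trans (le_of_eq ?_)
    field_simp
  have h1 := key (th D j p + ((D.β j * τ : ℝ) : Torus1))
  have h2 := key (th D j p)
  simp only [gk, map_add, th_rho]
  rw [← mul_sub, abs_mul, abs_of_pos hco]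
  have h3 : |sn (th D j p + ((D.q j / (2 * D.q k) : ℝ) : Torus1) + ((D.β j * τ : ℝ) : Torus1)) -
      sn (th D j p + ((D.q j / (2 * D.q k) : ℝ) : Torus1)) -
      (sn (th D j p + ((D.β j * τ : ℝ) : Torus1)) - sn (th D j p))| ≤
      2 * (Real.pi * D.q j / D.q k) := by
    rw [add_right_comm (th D j p)]
    rw [abs_le] at h1 h2 ⊢
    constructor <;> linarith [h1.1, h1.2, h2.1, h2.2]
  calc _ ≤ D.c j / (2 * Real.pi * D.β j) * (2 * (Real.pi * D.q j / D.q k)) :=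
        mul_le_mul_of_nonneg_left h3 hco.le
    _ = _ := by field_simp

lemma tau_mm (k : ℕ) (p : Torus2) :
    0 ≤ tau D p (mm D k) ∧ D.c k * tau D p (mm D k) ≤ 10 / 9 := by
  have h := tau_bounds D p (mm D k) (Nat.cast_nonneg _)
  have hc := c_pos D k
  have hm : (mm D k : ℝ) ≤ 1 / D.c k := Nat.floor_le (by positivity)
  constructor
  · exact le_trans (by positivity) h.1
  · calc D.c k * tau D p (mm D k) ≤ D.c k * (10 / 9 * (1 / D.c k)) := by
          gcongr; exact h.2.trans (by gcongr)
      _ = _ := by field_simp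

lemma c_tau (k : ℕ) (p : Torus2) : |D.c k * tau D p (mm D k) - 1| ≤
    D.c k * (∑ j ∈ Finset.range k, D.c j / D.β j) + 10 / 9 * D.β k ^ 2 + 3 * D.c k := by
  set τ := tau D p (mm D k) with hτ
  have hc := c_pos D k
  obtain ⟨h0, h1⟩ := tau_mm D k p
  rw [← hτ] at h0 h1
  have h2 := GG_main D p τ k
  rw [hτ, GG_tau, ← hτ, abs_of_nonneg h0] at h2
  have h3 := gk_bound D k p τ
  rw [abs_of_nonneg h0] at h3
  have hm1 : (mm D k : ℝ) ≤ 1 / D.c k := Nat.floor_le (by positivity)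
  have hm2 : 1 / D.c k < mm D k + 1 := Nat.lt_floor_add_one _
  have hm3 : D.c k * mm D k ≤ 1 := by
    calc _ ≤ D.c k * (1 / D.c k) := by gcongr
      _ = 1 := by field_simp
  have hm4 : 1 ≤ D.c k * mm D k + D.c k := by
    calc 1 = D.c k * (1 / D.c k) := by field_simp
      _ ≤ D.c k * (mm D k + 1) := by gcongr
      _ = _ := by ring
  have h4 : |D.c k * (mm D k - τ)| ≤ D.c k * ((∑ j ∈ Finset.range k, D.c j / D.β j) +
      τ * D.β k ^ 2 + D.c k * τ) := by
    rw [abs_mul, abs_of_pos hc]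
    apply mul_le_mul_of_nonneg_left _ hc.le
    rw [abs_le] at h2 h3 ⊢
    constructor <;> linarith [h2.1, h2.2, h3.1, h3.2]
  have h5 : D.c k * ((∑ j ∈ Finset.range k, D.c j / D.β j) + τ * D.β k ^ 2 + D.c k * τ) ≤
      D.c k * (∑ j ∈ Finset.range k, D.c j / D.β j) + 10 / 9 * D.β k ^ 2 + D.c k * (10 / 9) := by
    have e1 : D.c k * τ * D.β k ^ 2 ≤ 10 / 9 * D.β k ^ 2 := by gcongr
    have e2 : D.c k * (D.c k * τ) ≤ D.c k * (10 / 9) := by gcongr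
    nlinarith
  have h6 := abs_le.1 (h4.trans h5)
  rw [abs_le]
  constructor <;> linarith [h6.1, h6.2]

lemma bb_lim : ∃ e : ℕ → ℝ, Tendsto e atTop (𝓝 0) ∧
    ∀ k p, |bb D k p + 2 * cs (th D k p)| ≤ e k := by
  refine ⟨fun k => (∑ j ∈ Finset.range k, D.c j / D.β j * D.q j) / D.q k
    + 30 * (D.β k / D.c k) + 2 * (D.c k * (∑ j ∈ Finset.range k, D.c j / D.β j)
    + 10 / 9 * D.β k ^ 2 + 3 * D.c k), ?_, fun k p => ?_⟩
  · have h1 := D.low1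
    have h2 := β_div_c_lim D
    have h3 := low3 D
    have h4 := D.β_lim.pow 2
    have h5 := c_lim D
    have := (h1.add (h2.const_mul 30)).add (((h3.add (h4.const_mul (10 / 9))).add
      (h5.const_mul 3)).const_mul 2)
    simpa using this
  · set τ := tau D p (mm D k) with hτ
    have hc := c_pos D k
    have hb := D.β_pos k
    have hb1 := D.β_le k
    obtain ⟨h0, h1⟩ := tau_mm D k p
    rw [← hτ] at h0 h1
    have hs := (summable_gk D (p + rho D k) τ).sub (summable_gk D p τ)
    have e : bb D k p = ∑' j, (gk D j (p + rho D k) τ - gk D j p τ) := by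
      rw [bb, ← hτ, GG, GG, (summable_gk D (p + rho D k) τ).tsum_sub (summable_gk D p τ)]; ring
    have k1 := split_sum D hs k (A := fun j => D.c j / D.β j * D.q j / D.q k)
      (fun j _ => gk_rho_lt D j k p τ) (B := 2 * τ) (by linarith) (fun j _ => by
        have a1 := gk_bound D j (p + rho D k) τ
        have a2 := gk_bound D j p τ
        rw [abs_of_nonneg h0] at a1 a2
        refine (abs_sub _ _).trans ?_
        linarith)
    rw [← e, gk_rho_self, ← Finset.sum_div] at k1
    have k2 := gk_taylor D k p τ
    have k3 := c_tau D k p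
    rw [← hτ] at k3
    have k4 : |D.c k * τ * cs (th D k p) - cs (th D k p)| ≤ |D.c k * τ - 1| := by
      rw [← sub_one_mul, abs_mul]
      exact mul_le_of_le_one_right (abs_nonneg _) (abs_cs_le _)
    have k5 : 8 * D.c k * D.β k * τ ^ 2 ≤ 10 * (D.β k / D.c k) := by
      have : 8 * D.c k * D.β k * τ ^ 2 = 8 * (D.β k / D.c k) * (D.c k * τ) ^ 2 := by
        field_simp
      rw [this]
      have a1 : (D.c k * τ) ^ 2 ≤ 10 / 8 := by
        have : 0 ≤ D.c k * τ := by positivity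
        nlinarith
      calc _ ≤ 8 * (D.β k / D.c k) * (10 / 8) := by gcongr
        _ = _ := by ring
    have k6 : 2 * τ * D.β k ^ 2 ≤ 10 * (D.β k / D.c k) := by
      have : 2 * τ * D.β k ^ 2 = 2 * (D.c k * τ) * (D.β k / D.c k) * D.β k := by field_simp
      rw [this]
      calc _ ≤ 2 * (10 / 9) * (D.β k / D.c k) * 1 := by gcongr
        _ ≤ _ := by
          have : 0 < D.β k / D.c k := by positivity
          linarith
    have j1 := abs_le.1 (k1.trans (add_le_add_right k6 _))
    have j2 := abs_le.1 (k2.trans k5)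
    have j3 := abs_le.1 (k4.trans k3)
    rw [abs_le]
    constructor <;> linarith [j1.1, j1.2, j2.1, j2.2, j3.1, j3.2]

end SlowT

end SlowTSec6

noncomputable section SlowTSec7

namespace SlowT

instance instSC1 : SecondCountableTopology Torus1 := inferInstance
instance instSC2 : SecondCountableTopology Torus2 := inferInstance
instance instBorel2 : BorelSpace Torus2 := inferInstance
instance instBorel4 : BorelSpace (Torus2 × Torus2) := inferInstance
instance instBorel5 : BorelSpace ((Torus2 × Torus2) × Torus1) := inferInstance
instance instBorel6 : BorelSpace ((Torus2 × Torus2) × ℝ) := inferInstance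

/-- `L¹` distance -/
def dL {Ω : Type*} [MeasurableSpace Ω] (μ : Measure Ω) (f g : Ω → ℝ) : ℝ≥0∞ :=
  ∫⁻ x, edist (f x) (g x) ∂μ

lemma dL_comm {Ω : Type*} [MeasurableSpace Ω] (μ : Measure Ω) (f g : Ω → ℝ) :
    dL μ f g = dL μ g f := by simp only [dL, edist_comm]

lemma dL_tri {Ω : Type*} [MeasurableSpace Ω] (μ : Measure Ω) {f g h : Ω → ℝ} (hf : Measurable f)
    (hg : Measurable g) : dL μ f h ≤ dL μ f g + dL μ g h := by
  unfold dL
  rw [← lintegral_add_left (hf.edist hg)]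
  exact lintegral_mono fun x => edist_triangle _ _ _

lemma dL_unif {Ω : Type*} [MeasurableSpace Ω] (μ : Measure Ω) [IsProbabilityMeasure μ]
    {f g : Ω → ℝ} {e : ℝ} (h : ∀ x, |f x - g x| ≤ e) : dL μ f g ≤ ENNReal.ofReal e := by
  unfold dL
  calc _ ≤ ∫⁻ _, ENNReal.ofReal e ∂μ := lintegral_mono fun x => by
        rw [edist_dist, Real.dist_eq]; exact ENNReal.ofReal_le_ofReal (h x)
    _ = _ := by simp

/-- quasi-invariance with a constant -/
def QI {Ω : Type*} [MeasurableSpace Ω] (μ : Measure Ω) (C : ℝ≥0∞) (φ : Ω → Ω) : Prop :=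
  Measurable φ ∧ ∀ h : Ω → ℝ≥0∞, Measurable h → ∫⁻ x, h (φ x) ∂μ ≤ C * ∫⁻ x, h x ∂μ

lemma dL_comp {Ω : Type*} [MeasurableSpace Ω] {μ : Measure Ω} {C : ℝ≥0∞} {φ : Ω → Ω}
    (h : QI μ C φ) {f g : Ω → ℝ} (hf : Measurable f) (hg : Measurable g) :
    dL μ (fun x => f (φ x)) (fun x => g (φ x)) ≤ C * dL μ f g :=
  h.2 _ (hf.edist hg)

lemma QI.comp {Ω : Type*} [MeasurableSpace Ω] {μ : Measure Ω} {C C' : ℝ≥0∞} {φ ψ : Ω → Ω}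
    (h : QI μ C φ) (h' : QI μ C' ψ) : QI μ (C' * C) (fun x => φ (ψ x)) :=
  ⟨h.1.comp h'.1, fun g hg => (h'.2 _ (hg.comp h.1)).trans
    (by rw [mul_assoc]; exact mul_le_mul_right (h.2 g hg) _)⟩

lemma QI.prod {Ω : Type*} [MeasurableSpace Ω] {μ : Measure Ω} [SFinite μ] {C C' : ℝ≥0∞}
    {φ ψ : Ω → Ω} (h : QI μ C φ) (h' : QI μ C' ψ) :
    QI (μ.prod μ) (C * C') (fun x => (φ x.1, ψ x.2)) := by
  refine ⟨(h.1.comp measurable_fst).prodMk (h'.1.comp measurable_snd), fun g hg => ?_⟩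
  have m1 : Measurable fun x : Ω × Ω => g (φ x.1, ψ x.2) :=
    hg.comp ((h.1.comp measurable_fst).prodMk (h'.1.comp measurable_snd))
  rw [lintegral_prod _ m1.aemeasurable, lintegral_prod _ hg.aemeasurable]
  calc ∫⁻ x, ∫⁻ y, g (φ x, ψ y) ∂μ ∂μ ≤ ∫⁻ x, C' * ∫⁻ y, g (φ x, y) ∂μ ∂μ :=
        lintegral_mono fun x => h'.2 (fun y => g (φ x, y)) (hg.comp measurable_prodMk_left)
    _ = C' * ∫⁻ x, ∫⁻ y, g (φ x, y) ∂μ ∂μ := by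
        have : Measurable fun x => ∫⁻ y, g (x, y) ∂μ := hg.lintegral_prod_right'
        exact lintegral_const_mul _ (this.comp h.1)
    _ ≤ C' * (C * ∫⁻ x, ∫⁻ y, g (x, y) ∂μ ∂μ) :=
        mul_le_mul_right (h.2 (fun x => ∫⁻ y, g (x, y) ∂μ) hg.lintegral_prod_right') _
    _ = _ := by ring

lemma QI.id {Ω : Type*} [MeasurableSpace Ω] (μ : Measure Ω) : QI μ 1 (fun x => x) :=
  ⟨measurable_id, fun g _ => by rw [one_mul]⟩

variable {t : ℝ} (D : Data t)

lemma QI_fl (s : ℝ) : QI (volume : Measure Torus2) 4 (fl D s) := by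
  refine ⟨(continuous_fl D s).measurable, fun h hm => ?_⟩
  have hup : ∀ g : Torus2 → ℝ≥0∞, Measurable g → ∫⁻ p, g p ∂(mu D) ≤ 2 * ∫⁻ p, g p := by
    intro g hg
    rw [mu, lintegral_withDensity_eq_lintegral_mul _ (by
      exact (measurable_coe_nnreal_ennreal.comp (continuous_ffn D).measurable)) hg,
      ← lintegral_const_mul _ hg]
    refine lintegral_mono fun p => ?_
    have : ffn D p ≤ 2 := by
      rw [← NNReal.coe_le_coe, ffn_coe]; norm_num; linarith [(ff_bounds D p).2]
    exact mul_le_mul_left (by simpa using (ENNReal.coe_le_coe.2 this)) _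
  have hlo : ∀ g : Torus2 → ℝ≥0∞, Measurable g → ∫⁻ p, g p ≤ 2 * ∫⁻ p, g p ∂(mu D) := by
    intro g hg
    have hd : Measurable fun p => (ffn D p : ℝ≥0∞) :=
      measurable_coe_nnreal_ennreal.comp (continuous_ffn D).measurable
    rw [mu, lintegral_withDensity_eq_lintegral_mul _ hd hg,
      ← lintegral_const_mul _ (hd.mul hg)]
    refine lintegral_mono fun p => ?_
    have : 1 ≤ 2 * ffn D p := by
      rw [← NNReal.coe_le_coe]; push_cast; rw [ffn_coe]; linarith [(ff_bounds D p).1]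
    have h2 : (1 : ℝ≥0∞) ≤ 2 * (ffn D p : ℝ≥0∞) := by exact_mod_cast ENNReal.coe_le_coe.2 this
    calc g p = 1 * g p := (one_mul _).symm
      _ ≤ 2 * (ffn D p : ℝ≥0∞) * g p := mul_le_mul_left h2 _
      _ = _ := by simp [mul_assoc]
  calc ∫⁻ p, h (fl D s p) ≤ 2 * ∫⁻ p, h (fl D s p) ∂(mu D) :=
        hlo _ (hm.comp (continuous_fl D s).measurable)
    _ = 2 * ∫⁻ p, h p ∂(mu D) := by rw [(fl_mp D s).lintegral_comp hm]
    _ ≤ 2 * (2 * ∫⁻ p, h p) := mul_le_mul_right (hup h hm) _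
    _ = _ := by rw [← mul_assoc]; norm_num

lemma QI_add (e : Torus2) : QI (volume : Measure Torus2) 1 (fun p => p + e) :=
  ⟨measurable_add_const e, fun h _ => by rw [one_mul, lintegral_add_right_eq_self]⟩

/-- the phase space of the product system -/
abbrev XX : Type := Torus2 × Torus2

/-- the product measure -/
abbrev VV : Measure XX := (volume : Measure Torus2).prod (volume : Measure Torus2)

lemma exists_approx {F : XX → ℝ} (hF : Measurable F) (hb : ∀ x, |F x| ≤ 1) {ε : ℝ≥0∞}
    (hε : ε ≠ 0) : ∃ F' : XX → ℝ, Continuous F' ∧ dL VV F F' ≤ ε := by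
  have hi : Integrable F VV := Integrable.of_bound hF.aestronglyMeasurable 1
    (Eventually.of_forall hb)
  obtain ⟨g, hg, -⟩ := hi.exists_boundedContinuous_lintegral_sub_le hε
  refine ⟨g, g.continuous, ?_⟩
  unfold dL
  simpa only [edist_eq_enorm_sub] using hg

/-- equidistribution -/
lemma equi {g : XX × Torus1 → ℝ} (hg : Continuous g) {η : ℝ} (hη : 0 < η) :
    ∀ᶠ k in atTop, ∫⁻ y, ENNReal.ofReal (g y) ∂(VV.prod (volume : Measure Torus1)) ≤
      ENNReal.ofReal η + ∫⁻ x, ENNReal.ofReal (g (x, th D k x.1)) ∂VV := by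
  have huc : UniformContinuous g := CompactSpace.uniformContinuous_of_continuous hg
  obtain ⟨δ, hδ, hd⟩ := Metric.uniformContinuous_iff.1 huc η hη
  have hlim : Tendsto (fun k => 1 / (D.q k : ℝ)) atTop (𝓝 0) := by
    simp only [one_div]; exact D.q_lim.inv_tendsto_atTop
  filter_upwards [hlim.eventually (gt_mem_nhds hδ)] with k hk
  have hq := one_le_q (D := D) k
  have cth := continuous_th D k
  have hgm : Measurable fun y : XX × Torus1 => ENNReal.ofReal (g y) :=
    hg.measurable.ennreal_ofReal
  have c2 : Continuous fun y : XX × Torus1 => (y.1, th D k y.1.1 + y.2) := by fun_prop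
  have hgm2 : Measurable fun y : XX × Torus1 => ENNReal.ofReal (g (y.1, th D k y.1.1 + y.2)) :=
    hgm.comp c2.measurable
  have e1 : ∫⁻ y, ENNReal.ofReal (g y) ∂(VV.prod (volume : Measure Torus1)) =
      ∫⁻ θ : Torus1, ∫⁻ x, ENNReal.ofReal (g (x, th D k x.1 + θ)) ∂VV := by
    rw [lintegral_prod _ hgm.aemeasurable]
    rw [← lintegral_lintegral_swap
      (f := fun (x : XX) (θ : Torus1) => ENNReal.ofReal (g (x, th D k x.1 + θ))) hgm2.aemeasurable]
    refine lintegral_congr fun x => ?_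
    exact (lintegral_add_left_eq_self (fun θ : Torus1 => ENNReal.ofReal (g (x, θ))) _).symm
  rw [e1]
  have key : ∀ θ : Torus1, ∫⁻ x, ENNReal.ofReal (g (x, th D k x.1 + θ)) ∂VV ≤
      ENNReal.ofReal η + ∫⁻ x, ENNReal.ofReal (g (x, th D k x.1)) ∂VV := by
    intro θ
    obtain ⟨u, rfl, hu⟩ := exists_norm_rep θ
    have hu2 : |u| ≤ 1 / 2 := by
      rw [hu]; simpa using AddCircle.norm_le_half_period (1 : ℝ) one_ne_zero (x := (u : Torus1))
    set e : Torus2 := (((u / D.q k : ℝ) : Torus1), 0) with he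
    have hth : th D k e = (u : Torus1) := by
      rw [th_apply, he]
      simp only [smul_zero, sub_zero]
      rw [← AddCircle.coe_nsmul, nsmul_eq_mul, mul_div_cancel₀ _ (by positivity)]
    have hne : ‖e‖ < δ := by
      refine lt_of_le_of_lt ?_ hk
      rw [he, Prod.norm_def]
      simp only [norm_zero]
      rw [max_eq_left (norm_nonneg _)]
      refine (norm_coe_le _).trans ?_
      rw [abs_div, Nat.abs_cast]
      gcongr
      linarith
    have h1 := ((QI_add e).prod (QI.id (volume : Measure Torus2))).2
      (fun x => ENNReal.ofReal (g (x, th D k x.1)))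
      (by
        have : Continuous fun x : XX => (x, th D k x.1) := by fun_prop
        exact hgm.comp this.measurable)
    rw [one_mul, one_mul] at h1
    refine le_trans ?_ (add_le_add_right h1 _)
    rw [← show ∫⁻ _ : XX, ENNReal.ofReal η ∂VV = ENNReal.ofReal η by simp,
      ← lintegral_add_left measurable_const]
    refine lintegral_mono fun x => ?_
    refine le_trans ?_ ENNReal.ofReal_add_le
    refine ENNReal.ofReal_le_ofReal ?_
    have h3 := @hd (x, th D k x.1 + (u : Torus1)) ((x.1 + e, x.2), th D k (x.1 + e)) (by
      rw [map_add, hth, Prod.dist_eq, Prod.dist_eq, dist_self, dist_self, dist_self_add_right]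
      simpa using hne)
    rw [Real.dist_eq] at h3
    have := (abs_lt.1 h3).2
    dsimp only
    linarith
  calc _ ≤ ∫⁻ _ : Torus1, (ENNReal.ofReal η +
        ∫⁻ x, ENNReal.ofReal (g (x, th D k x.1)) ∂VV) := lintegral_mono key
    _ = _ := by simp

end SlowT

end SlowTSec7

noncomputable section SlowTSec8

namespace SlowT

variable {t : ℝ} (D : Data t)

lemma rho_norm_lim : Tendsto (fun k => ‖rho D k‖) atTop (𝓝 0) := by
  have hlim : Tendsto (fun k => (D.q k : ℝ)⁻¹) atTop (𝓝 0) := D.q_lim.inv_tendsto_atTop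
  refine squeeze_zero (fun k => norm_nonneg _) (fun k => ?_) hlim
  have hq := one_le_q (D := D) k
  rw [rho, Prod.norm_def]
  simp only [norm_zero]
  rw [max_eq_left (norm_nonneg _)]
  refine (norm_coe_le _).trans ?_
  rw [abs_of_nonneg (by positivity), one_div]
  gcongr; linarith

/-- the flow applied in the first coordinate for time depending on an angle -/
def PhiM (y : XX × Torus1) : XX := (fl D (-(2 * cs y.2)) y.1.1, y.1.2)

lemma continuous_PhiM : Continuous (PhiM D) := by
  refine Continuous.prodMk ?_ (continuous_snd.comp continuous_fst)
  exact cont_fl_comp D (continuous_fst.comp continuous_fst)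
    (continuous_const.mul (continuous_cs.comp continuous_snd)).neg

lemma PhiM_dL {f g : XX → ℝ} (hf : Measurable f) (hg : Measurable g) :
    dL (VV.prod (volume : Measure Torus1)) (fun y => f (PhiM D y)) (fun y => g (PhiM D y)) ≤
      4 * dL VV f g := by
  unfold dL
  have hm := (hf.edist hg).comp (continuous_PhiM D).measurable
  change ∫⁻ y, edist (f (PhiM D y)) (g (PhiM D y)) ∂(VV.prod (volume : Measure Torus1)) ≤ _
  rw [lintegral_prod_symm (fun y => edist (f (PhiM D y)) (g (PhiM D y))) hm.aemeasurable]
  calc _ ≤ ∫⁻ _ : Torus1, 4 * ∫⁻ x, edist (f x) (g x) ∂VV := by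
        refine lintegral_mono fun θ => ?_
        have := ((QI_fl D (-(2 * cs θ))).prod (QI.id (volume : Measure Torus2))).2 _ (hf.edist hg)
        rw [mul_one] at this
        exact this
    _ = _ := by simp

lemma core_est {F : XX → ℝ} (hF : Measurable F) (hb : ∀ x, |F x| ≤ 1)
    (hinv : ∀ (n : ℕ) (p p' : Torus2), F (fl D n p, fl D n p') = F (p, p')) {ε : ℝ} (hε : 0 < ε) :
    dL (VV.prod (volume : Measure Torus1)) (fun y => F (PhiM D y)) (fun y => F y.1) ≤
      72 * ENNReal.ofReal ε := by
  set E := ENNReal.ofReal ε with hE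
  have hE0 : E ≠ 0 := by simpa [hE] using hε
  obtain ⟨F', hF', hd⟩ := exists_approx hF hb hE0
  have mF' := hF'.measurable
  have cP := continuous_PhiM D
  have mP := cP.measurable
  -- the angle function
  have cg : Continuous fun y : XX × Torus1 => |F' (PhiM D y) - F' y.1| :=
    ((hF'.comp cP).sub (hF'.comp continuous_fst)).abs
  have ev1 := equi D cg hε
  -- uniform continuity
  have cK : Continuous fun z : ℝ × XX => F' (fl D z.1 z.2.1, z.2.2) := by
    refine hF'.comp (Continuous.prodMk ?_ (continuous_snd.comp continuous_snd))
    exact cont_fl_comp D (continuous_fst.comp continuous_snd) continuous_fst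
  have uK := ((isCompact_Icc (a := (-3 : ℝ)) (b := 3)).prod
    (isCompact_univ (X := XX))).uniformContinuousOn_of_continuous cK.continuousOn
  obtain ⟨δ, hδ, hdK⟩ := Metric.uniformContinuousOn_iff.1 uK ε hε
  have uF := CompactSpace.uniformContinuous_of_continuous hF'
  obtain ⟨δ', hδ', hdF⟩ := Metric.uniformContinuous_iff.1 uF ε hε
  obtain ⟨e, he, hbb⟩ := bb_lim D
  have ev2 := he.eventually (gt_mem_nhds (lt_min hδ one_pos))
  have ev3 := (rho_norm_lim D).eventually (gt_mem_nhds (lt_min hδ hδ'))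
  obtain ⟨k, h1, h2, h3⟩ := (ev1.and (ev2.and ev3)).exists
  have cfl := fun s => continuous_fl D s
  set Ξ : XX → XX := fun x => (fl D (bb D k x.1) (x.1 + rho D k), x.2) with hΞ
  have hΞ2 : ∀ x, Ξ x = (fl D (-(mm D k : ℝ)) (fl D (mm D k) x.1 + rho D k), x.2) := fun x => by
    rw [hΞ]; simp only; rw [Xi_eq]
  have qΞ : QI VV 16 Ξ := by
    have h := (((QI_fl D (-(mm D k : ℝ))).comp ((QI_add (rho D k)).comp
      (QI_fl D (mm D k)))).prod (QI.id (volume : Measure Torus2)))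
    have e1 : (fun x : XX => (fl D (-(mm D k : ℝ)) (fl D (mm D k) x.1 + rho D k), x.2)) = Ξ := by
      ext1 x; exact (hΞ2 x).symm
    rw [e1] at h
    convert h using 1
    norm_num
  have qm : QI VV 16 (fun x => (fl D (mm D k) x.1, fl D (mm D k) x.2)) := by
    have h := (QI_fl D (mm D k)).prod (QI_fl D (mm D k))
    convert h using 1; norm_num
  have qR : QI VV 1 (fun x => (x.1 + rho D k, x.2)) := by
    have h := (QI_add (rho D k)).prod (QI.id (volume : Measure Torus2))
    convert h using 1; norm_num
  set R : XX → XX := fun x => (x.1 + rho D k, x.2) with hR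
  have mΞ := qΞ.1
  have mR : Measurable R := qR.1
  have hdc : dL VV F' F ≤ E := by rw [dL_comm]; exact hd
  -- F ∘ R vs F
  have a1 : dL VV (fun x => F (R x)) F ≤ 3 * E := by
    calc _ ≤ dL VV (fun x => F (R x)) (fun x => F' (R x)) + dL VV (fun x => F' (R x)) F :=
          dL_tri _ (hF.comp mR) (mF'.comp mR)
      _ ≤ dL VV (fun x => F (R x)) (fun x => F' (R x)) + (dL VV (fun x => F' (R x)) F'
          + dL VV F' F) := by gcongr; exact dL_tri _ (mF'.comp mR) mF'
      _ ≤ 1 * E + (E + E) := by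
          gcongr
          · exact (dL_comp qR hF mF').trans (by gcongr)
          · refine dL_unif _ fun x => ?_
            have := @hdF (R x) x (by
              rw [hR, Prod.dist_eq, dist_self, dist_self_add_left]
              rw [max_eq_left (norm_nonneg _)]
              exact h3.trans_le (min_le_right _ _))
            exact this.le
      _ = 3 * E := by ring
  have a2 : dL VV (fun x => F (Ξ x)) F ≤ 48 * E := by
    have e1 : ∀ x, F (Ξ x) = F (R (fl D (mm D k) x.1, fl D (mm D k) x.2)) := fun x => by
      rw [hΞ2, ← hinv (mm D k), ← fl_add]
      simp [hR, fl_zero]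
    have e2 : ∀ x : XX, F x = F (fl D (mm D k) x.1, fl D (mm D k) x.2) := fun x => (hinv _ _ _).symm
    have := dL_comp qm (hF.comp mR) hF
    simp only [Function.comp_apply, ← e1, ← e2] at this
    calc _ ≤ 16 * dL VV (F ∘ R) F := this
      _ ≤ 16 * (3 * E) := by gcongr; exact a1
      _ = _ := by ring
  have a3 : dL VV (fun x => F' (Ξ x)) F' ≤ 65 * E := by
    calc _ ≤ dL VV (fun x => F' (Ξ x)) (fun x => F (Ξ x)) + dL VV (fun x => F (Ξ x)) F' :=
          dL_tri _ (mF'.comp mΞ) (hF.comp mΞ)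
      _ ≤ dL VV (fun x => F' (Ξ x)) (fun x => F (Ξ x)) + (dL VV (fun x => F (Ξ x)) F +
          dL VV F F') := by gcongr; exact dL_tri _ (hF.comp mΞ) hF
      _ ≤ 16 * E + (48 * E + E) := by
          gcongr
          exact (dL_comp qΞ mF' hF).trans (by gcongr)
      _ = _ := by ring
  have a4 : dL VV (fun x => F' (PhiM D (x, th D k x.1))) F' ≤ 66 * E := by
    have c1 : Continuous fun x : XX => PhiM D (x, th D k x.1) :=
      cP.comp (continuous_id.prodMk ((continuous_th D k).comp continuous_fst))
    calc _ ≤ dL VV (fun x => F' (PhiM D (x, th D k x.1))) (fun x => F' (Ξ x)) +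
          dL VV (fun x => F' (Ξ x)) F' := dL_tri _ (mF'.comp c1.measurable) (mF'.comp mΞ)
      _ ≤ E + 65 * E := by
          gcongr
          refine dL_unif _ fun x => ?_
          have hc := abs_le.1 (abs_cs_le (th D k x.1))
          have hbx := (hbb k x.1).trans_lt h2
          have hb1 := abs_lt.1 (hbx.trans_le (min_le_right _ _))
          have := hdK (-(2 * cs (th D k x.1)), x) ⟨⟨by simp only; linarith, by simp only; linarith⟩, mem_univ _⟩
            (bb D k x.1, (x.1 + rho D k, x.2)) ⟨⟨by simp only; linarith, by simp only; linarith⟩, mem_univ _⟩ (by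
              rw [Prod.dist_eq, Prod.dist_eq, dist_self, dist_self_add_right]
              simp only
              rw [max_eq_left (norm_nonneg _), max_lt_iff]
              refine ⟨?_, h3.trans_le (min_le_left _ _)⟩
              rw [dist_comm, Real.dist_eq, sub_neg_eq_add]
              exact hbx.trans_le (min_le_left _ _))
          exact this.le
      _ = _ := by ring
  have a5 : dL (VV.prod (volume : Measure Torus1)) (fun y => F' (PhiM D y)) (fun y => F' y.1) ≤
      67 * E := by
    have : dL (VV.prod (volume : Measure Torus1)) (fun y => F' (PhiM D y)) (fun y => F' y.1) ≤
      E + dL VV (fun x => F' (PhiM D (x, th D k x.1))) F' := by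
      unfold dL
      simp only [edist_dist, Real.dist_eq]
      exact h1
    calc _ ≤ _ := this
      _ ≤ E + 66 * E := by gcongr
      _ = _ := by ring
  calc _ ≤ dL (VV.prod (volume : Measure Torus1)) (fun y => F (PhiM D y)) (fun y => F' (PhiM D y)) +
      dL (VV.prod (volume : Measure Torus1)) (fun y => F' (PhiM D y)) (fun y => F y.1) :=
        dL_tri _ (hF.comp mP) (mF'.comp mP)
    _ ≤ dL (VV.prod (volume : Measure Torus1)) (fun y => F (PhiM D y)) (fun y => F' (PhiM D y)) +
      (dL (VV.prod (volume : Measure Torus1)) (fun y => F' (PhiM D y)) (fun y => F' y.1) +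
      dL (VV.prod (volume : Measure Torus1)) (fun y => F' y.1) (fun y => F y.1)) := by
        gcongr; exact dL_tri _ (mF'.comp mP) (mF'.comp measurable_fst)
    _ ≤ 4 * E + (67 * E + E) := by
        gcongr
        · exact (PhiM_dL D hF mF').trans (by gcongr)
        · unfold dL
          have m := (mF'.edist hF)
          rw [lintegral_prod (fun y : XX × Torus1 => edist (F' y.1) (F y.1))
            (m.comp measurable_fst).aemeasurable]
          simpa [dL] using hdc
    _ = _ := by ring

lemma core_ae {F : XX → ℝ} (hF : Measurable F) (hb : ∀ x, |F x| ≤ 1)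
    (hinv : ∀ (n : ℕ) (p p' : Torus2), F (fl D n p, fl D n p') = F (p, p')) :
    ∀ᵐ θ : Torus1, ∀ᵐ x ∂VV, F (fl D (-(2 * cs θ)) x.1, x.2) = F x := by
  have h0 : dL (VV.prod (volume : Measure Torus1)) (fun y => F (PhiM D y)) (fun y => F y.1) = 0 := by
    refine le_antisymm (ENNReal.le_of_forall_pos_le_add fun ε hε _ => ?_) zero_le
    refine (core_est D hF hb hinv (ε := ε / 72) (by positivity)).trans ?_
    rw [zero_add, ENNReal.ofReal_div_of_pos (by norm_num), ENNReal.ofReal_coe_nnreal]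
    rw [show ENNReal.ofReal 72 = 72 by simp, ENNReal.mul_div_cancel (by norm_num) (by norm_num)]
  unfold dL at h0
  have mP := (continuous_PhiM D).measurable
  have m1 : Measurable fun y : XX × Torus1 => F (PhiM D y) := hF.comp mP
  have m2 : Measurable fun y : XX × Torus1 => F y.1 := hF.comp measurable_fst
  rw [lintegral_eq_zero_iff (m1.edist m2)] at h0
  have h1 : ∀ᵐ y ∂(VV.prod (volume : Measure Torus1)), F (PhiM D y) = F y.1 := by
    filter_upwards [h0] with y hy
    exact edist_eq_zero.1 hy
  have ms : MeasurableSet {y : XX × Torus1 | F (PhiM D y) = F y.1} := measurableSet_eq_fun m1 m2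
  have h2 := Measure.ae_ae_of_ae_prod h1
  rw [Measure.ae_ae_comm ms] at h2
  exact h2

end SlowT

end SlowTSec8

noncomputable section SlowTSec9

namespace SlowT

lemma lip_null {f : ℝ → ℝ} {K : ℝ≥0} (hf : LipschitzWith K f) {N : Set ℝ} (hN : volume N = 0) :
    volume (f '' N) = 0 := by
  have h := hf.hausdorffMeasure_image_le (d := 1) zero_le_one N
  rw [hausdorffMeasure_real, hN, mul_zero] at h
  exact le_antisymm h zero_le

variable {t : ℝ} (D : Data t)

lemma ae_time {F : XX → ℝ} (hF : Measurable F) (hb : ∀ x, |F x| ≤ 1)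
    (hinv : ∀ (n : ℕ) (p p' : Torus2), F (fl D n p, fl D n p') = F (p, p')) :
    ∀ᵐ s : ℝ, ∀ᵐ x ∂VV, s ∈ Ioo (-2 : ℝ) 2 → F (fl D s x.1, x.2) = F x := by
  have h := core_ae D hF hb hinv
  have h1 := (AddCircle.measurePreserving_mk (1 : ℝ) 0).quasiMeasurePreserving.ae h
  rw [ae_restrict_iff' measurableSet_Ioc] at h1
  set N := {x : ℝ | ¬ (x ∈ Ioc (0 : ℝ) (0 + 1) →
    ∀ᵐ y ∂VV, F (fl D (-(2 * cs (x : Torus1))) y.1, y.2) = F y)} with hN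
  have hN0 : volume N = 0 := h1
  have h2 : volume ((fun x : ℝ => -(2 * Real.cos (2 * Real.pi * x))) '' N) = 0 := by
    refine addHaar_image_eq_zero_of_differentiableOn_of_addHaar_eq_zero volume ?_ hN0
    fun_prop
  rw [ae_iff]
  refine measure_mono_null (fun s hs => ?_) h2
  have hs' : ¬ ∀ᵐ x ∂VV, s ∈ Ioo (-2 : ℝ) 2 → F (fl D s x.1, x.2) = F x := hs
  have hsI : s ∈ Ioo (-2 : ℝ) 2 := by
    by_contra hc
    exact hs' (Eventually.of_forall fun x h => absurd h hc)
  have hpi := Real.pi_pos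
  have hcos : Real.cos (2 * Real.pi * (Real.arccos (-s / 2) / (2 * Real.pi))) = -s / 2 := by
    rw [mul_div_cancel₀ _ (by positivity), Real.cos_arccos (by linarith [hsI.2])
      (by linarith [hsI.1])]
  refine ⟨Real.arccos (-s / 2) / (2 * Real.pi), ?_, ?_⟩
  · rw [hN]
    simp only [mem_ofPred_eq]
    intro hc
    apply hs'
    have := hc ⟨div_pos (Real.arccos_pos.2 (by linarith [hsI.1])) (by positivity), by
      rw [div_le_iff₀ (by positivity)]
      have := Real.arccos_le_pi (-s / 2)
      linarith⟩
    rw [cs_coe, hcos] at this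
    filter_upwards [this] with x hx _
    rw [← hx]; congr 3; ring
  · simp only [hcos]; ring

lemma ae_trans {F : XX → ℝ} (hF : Measurable F) (hb : ∀ x, |F x| ≤ 1)
    (hinv : ∀ (n : ℕ) (p p' : Torus2), F (fl D n p, fl D n p') = F (p, p')) :
    ∀ᵐ a : ℝ, ∀ᵐ x ∂VV, a ∈ Ioo (-1 : ℝ) 1 → F (x.1 + vv D a, x.2) = F x := by
  have h := ae_time D hF hb hinv
  have c1 : Continuous fun y : ℝ × XX => (fl D y.1 y.2.1, y.2.2) :=
    Continuous.prodMk (cont_fl_comp D (continuous_fst.comp continuous_snd) continuous_fst)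
      (continuous_snd.comp continuous_snd)
  have c2 : Continuous fun y : XX × ℝ => (y.1.1 + vv D y.2, y.1.2) :=
    Continuous.prodMk ((continuous_fst.comp continuous_fst).add
      (cont_vv_comp D continuous_snd)) (continuous_snd.comp continuous_fst)
  have m1 : MeasurableSet {y : ℝ × XX | y.1 ∈ Ioo (-2 : ℝ) 2 → F (fl D y.1 y.2.1, y.2.2) = F y.2} := by
    have e : {y : ℝ × XX | y.1 ∈ Ioo (-2 : ℝ) 2 → F (fl D y.1 y.2.1, y.2.2) = F y.2} =
        {y : ℝ × XX | y.1 ∈ Ioo (-2 : ℝ) 2}ᶜ ∪ {y : ℝ × XX | F (fl D y.1 y.2.1, y.2.2) = F y.2} := by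
      ext y; simp only [mem_ofPred_eq, mem_union, mem_compl_iff]; tauto
    rw [e]
    exact (measurable_fst measurableSet_Ioo).compl.union
      (measurableSet_eq_fun (hF.comp c1.measurable) (hF.comp measurable_snd))
  have m2 : MeasurableSet {y : XX × ℝ | y.2 ∈ Ioo (-1 : ℝ) 1 → F (y.1.1 + vv D y.2, y.1.2) = F y.1} := by
    have e : {y : XX × ℝ | y.2 ∈ Ioo (-1 : ℝ) 1 → F (y.1.1 + vv D y.2, y.1.2) = F y.1} =
        {y : XX × ℝ | y.2 ∈ Ioo (-1 : ℝ) 1}ᶜ ∪ {y : XX × ℝ | F (y.1.1 + vv D y.2, y.1.2) = F y.1} := by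
      ext y; simp only [mem_ofPred_eq, mem_union, mem_compl_iff]; tauto
    rw [e]
    exact (measurable_snd measurableSet_Ioo).compl.union
      (measurableSet_eq_fun (hF.comp c2.measurable) (hF.comp measurable_fst))
  rw [Measure.ae_ae_comm m1] at h
  rw [← Measure.ae_ae_comm m2]
  filter_upwards [h] with x hx
  have hl : LipschitzWith (10 / 9) (tau D x.1) := LipschitzWith.of_dist_le_mul fun s s' => by
    have := tau_diff D x.1 x.1 s s'
    rw [sub_self, abs_zero, add_zero] at this
    rw [Real.dist_eq, Real.dist_eq]
    simpa using this
  have h0 := lip_null hl (N := {s | ¬ (s ∈ Ioo (-2 : ℝ) 2 → F (fl D s x.1, x.2) = F x)}) hx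
  rw [ae_iff]
  refine measure_mono_null (fun a ha => ?_) h0
  have ha' : ¬ (a ∈ Ioo (-1 : ℝ) 1 → F (x.1 + vv D a, x.2) = F x) := ha
  refine ⟨GG D x.1 a, ?_, tau_GG D _ _⟩
  simp only [mem_ofPred_eq]
  intro hc
  apply ha'
  intro haI
  rw [← fl_GG]
  apply hc
  have hl2 := abs_le.1 (GG_lip D x.1 a 0)
  rw [GG_zero, sub_zero, sub_zero] at hl2
  have ha3 : |a| < 1 := abs_lt.2 haI
  constructor <;> linarith [hl2.1, hl2.2, haI.1, haI.2]

/-- density criterion -/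
lemma aeconst_crit {G : Type*} [AddCommGroup G] [TopologicalSpace G] [IsTopologicalAddGroup G]
    [MeasurableSpace G] [BorelSpace G] [SecondCountableTopology G] [R1Space G]
    {μ : Measure G} [IsFiniteMeasure μ] [μ.InnerRegular] [μ.IsAddLeftInvariant] {s : Set G}
    (hs : MeasurableSet s) {E : Set G} (hE : ∀ g ∈ E, ∀ᵐ x ∂μ, (x + g ∈ s ↔ x ∈ s))
    (hd : (AddSubgroup.closure E).topologicalClosure = ⊤) : EventuallyConst s (ae μ) := by
  refine aeconst_of_dense_aestabilizer_vadd (G := G) hs.nullMeasurableSet ?_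
  have h1 : AddSubgroup.closure E ≤ AddAction.aestabilizer G μ s := by
    rw [AddSubgroup.closure_le]
    intro g hg
    rw [SetLike.mem_coe, ← neg_mem_iff, AddAction.mem_aestabilizer]
    rw [Filter.eventuallyEq_set]
    filter_upwards [hE g hg] with x hx
    rw [← hx, Set.mem_vadd_set_iff_neg_vadd_mem, neg_neg, vadd_eq_add, add_comm]
  refine Dense.mono h1 ?_
  rw [dense_iff_closure_eq, ← AddSubgroup.topologicalClosure_coe, hd]; rfl

/-- the full translation density -/
lemma dense_top {E : Set XX} {M1 M2 : Set ℝ} (h1 : ∀ᵐ a : ℝ, a ∈ Ioo (-1 : ℝ) 1 → a ∈ M1)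
    (h2 : ∀ᵐ a : ℝ, a ∈ Ioo (-1 : ℝ) 1 → a ∈ M2)
    (hE1 : ∀ a ∈ M1, (vv D a, (0 : Torus2)) ∈ E)
    (hE2 : ∀ a ∈ M2, ((0 : Torus2), vv D a) ∈ E) :
    (AddSubgroup.closure E).topologicalClosure = ⊤ := by
  set S := (AddSubgroup.closure E).topologicalClosure with hS
  have hES : E ⊆ S := AddSubgroup.subset_closure.trans (AddSubgroup.le_topologicalClosure _)
  -- one-dimensional statement
  have key : ∀ (ι : Torus2 →+ XX), Continuous ι → ∀ M : Set ℝ,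
      (∀ᵐ a : ℝ, a ∈ Ioo (-1 : ℝ) 1 → a ∈ M) → (∀ a ∈ M, ι (vv D a) ∈ E) → ∀ p, ι p ∈ S := by
    intro ι hι M hM hME
    set S' := S.comap ι with hS'
    have hcl : IsClosed (S' : Set Torus2) :=
      (AddSubgroup.isClosed_topologicalClosure _).preimage hι
    have hclv : IsClosed {a : ℝ | vv D a ∈ S'} := hcl.preimage (continuous_vv D)
    have i1 : Ioo (-1 : ℝ) 1 ⊆ {a : ℝ | vv D a ∈ S'} := by
      have hM' : ∀ᵐ a ∂(volume.restrict (Ioo (-1 : ℝ) 1)), a ∈ M := by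
        rwa [ae_restrict_iff' measurableSet_Ioo]
      intro a ha
      by_contra hna
      have hop : IsOpen ({a : ℝ | vv D a ∈ S'}ᶜ ∩ Ioo (-1 : ℝ) 1) := hclv.isOpen_compl.inter isOpen_Ioo
      have hpos := hop.measure_pos volume ⟨a, hna, ha⟩
      rw [ae_iff] at hM
      refine hpos.ne' (measure_mono_null ?_ hM)
      rintro b ⟨hb1, hb2⟩ hb3
      exact hb1 (hES (hME b (hb3 hb2)))
    have i2 : ∀ a : ℝ, vv D a ∈ S' := by
      intro a
      obtain ⟨n, hn⟩ := exists_nat_gt |a|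
      have hn0 : (0 : ℝ) < n := (abs_nonneg a).trans_lt hn
      have h3 : vv D (a / n) ∈ S' := i1 (by
        rw [mem_Ioo, ← abs_lt, abs_div, Nat.abs_cast, div_lt_one hn0]; exact hn)
      have h4 : ∀ m : ℕ, vv D (m * (a / n)) ∈ S' := by
        intro m
        induction m with
        | zero => simp [vv_zero, zero_mem]
        | succ m ih => rw [Nat.cast_succ, add_mul, one_mul, vv_add]; exact add_mem ih h3
      have := h4 n
      rwa [mul_div_cancel₀ _ hn0.ne'] at this
    have i3 : ∀ x : Torus1, ((x, 0) : Torus2) ∈ S' := by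
      have hdn : DenseRange fun n : ℤ => n • ((D.α : ℝ) : Torus1) := by
        rw [AddCircle.denseRange_zsmul_coe_iff]
        simpa using D.α_irr
      intro x
      have hcl' : IsClosed {x : Torus1 | ((x, 0) : Torus2) ∈ S'} :=
        hcl.preimage (Continuous.prodMk continuous_id continuous_const)
      have : range (fun n : ℤ => n • ((D.α : ℝ) : Torus1)) ⊆ {x : Torus1 | ((x, 0) : Torus2) ∈ S'} := by
        rintro _ ⟨n, rfl⟩
        have := i2 n
        have e : vv D n = (n • ((D.α : ℝ) : Torus1), 0) := by
          rw [vv]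
          congr 1
          · rw [← AddCircle.coe_zsmul, zsmul_eq_mul, mul_comm]
          · rw [AddCircle.coe_eq_zero_iff]; exact ⟨n, by simp⟩
        rw [e] at this
        exact this
      have h5 := hcl'.closure_subset_iff.2 this
      rw [hdn.closure_range] at h5
      exact h5 (mem_univ x)
    rintro ⟨x, y⟩
    obtain ⟨y, rfl⟩ := exists_rep y
    have : ((x, (y : Torus1)) : Torus2) = vv D y + (x - ((D.α * y : ℝ) : Torus1), 0) := by
      rw [vv]; ext1 <;> simp
    have h6 : ((x, (y : Torus1)) : Torus2) ∈ S' := by rw [this]; exact add_mem (i2 y) (i3 _)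
    exact h6
  rw [eq_top_iff]
  rintro ⟨p, p'⟩ -
  have a1 := key (AddMonoidHom.inl Torus2 Torus2) (Continuous.prodMk continuous_id continuous_const)
    M1 h1 hE1 p
  have a2 := key (AddMonoidHom.inr Torus2 Torus2) (Continuous.prodMk continuous_const continuous_id)
    M2 h2 hE2 p'
  have := add_mem a1 a2
  simpa using this

lemma fl_aeconst {A : Set XX} (hA : MeasurableSet A)
    (hinv : ∀ (n : ℕ) (p p' : Torus2), (fl D n p, fl D n p') ∈ A ↔ (p, p') ∈ A) :
    EventuallyConst A (ae VV) := by
  classical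
  have gen : ∀ B : Set XX, MeasurableSet B →
      (∀ (n : ℕ) (p p' : Torus2), (fl D n p, fl D n p') ∈ B ↔ (p, p') ∈ B) →
      ∀ᵐ a : ℝ, a ∈ Ioo (-1 : ℝ) 1 → ∀ᵐ x ∂VV, ((x.1 + vv D a, x.2) ∈ B ↔ x ∈ B) := by
    intro B hB hBi
    have := ae_trans D (F := B.indicator 1) (measurable_one.indicator hB) (fun x => by
      by_cases hx : x ∈ B <;> simp [hx]) (fun n p p' => by
      simp only [indicator_apply, hBi, Pi.one_apply])
    filter_upwards [this] with a ha haI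
    filter_upwards [ha] with x hx
    have := hx haI
    simp only [indicator_apply, Pi.one_apply] at this
    by_cases h1 : (x.1 + vv D a, x.2) ∈ B <;> by_cases h2 : x ∈ B <;>
      simp only [h1, h2, if_true, if_false] at this ⊢
    · exact absurd this one_ne_zero
    · exact absurd this.symm one_ne_zero
  have g1 := gen A hA hinv
  have g2 := gen (Prod.swap ⁻¹' A) (measurable_swap hA) (fun n p p' => hinv n p' p)
  refine aeconst_crit hA (E := {g | ∀ᵐ x ∂VV, (x + g ∈ A ↔ x ∈ A)}) (fun g hg => hg)
    (dense_top D g1 g2 ?_ ?_)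
  · intro a ha
    filter_upwards [ha] with x hx
    rw [← hx]
    have : x + (vv D a, 0) = (x.1 + vv D a, x.2) := by ext1 <;> simp
    rw [this]
  · intro a ha
    have := (Measure.measurePreserving_swap (μ := (volume : Measure Torus2))
      (ν := (volume : Measure Torus2))).quasiMeasurePreserving.ae ha
    filter_upwards [this] with x hx
    have e : x + (0, vv D a) = (x.1, x.2 + vv D a) := by ext1 <;> simp
    rw [e]
    exact hx

end SlowT

end SlowTSec9

noncomputable section SlowTSec9b

namespace SlowT

variable {t : ℝ} (D : Data t)

lemma Tm_wm : WeaklyMixing (Tm D 1) (volume : Measure Torus2) := by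
  refine ⟨(Tm_mp D 1).prod (Tm_mp D 1), ⟨fun B hB hBi => ?_⟩⟩
  have mPs := (continuous_Psi D).measurable
  have hit : ∀ (n : ℕ) (P P' : Torus2), (Tm D n P, Tm D n P') ∈ B ↔ (P, P') ∈ B := by
    intro n
    induction n with
    | zero =>
      intro P P'
      have e : ∀ P, Tm D ((0 : ℕ) : ℝ) P = P := fun P => by
        rw [← Tm_iter, Function.iterate_zero_apply]
      rw [e, e]
    | succ n ih =>
      intro P P'
      rw [← ih P P']
      have e : ∀ P, Tm D ((n + 1 : ℕ) : ℝ) P = Tm D 1 (Tm D n P) := fun P => by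
        rw [← Tm_iter, ← Tm_iter, Function.iterate_succ_apply']
      rw [e, e]
      have h3 := Set.ext_iff.1 hBi (Tm D n P, Tm D n P')
      rwa [Set.mem_preimage] at h3
  set A : Set XX := (fun x => (Psi D x.1, Psi D x.2)) ⁻¹' B with hA
  have mA : MeasurableSet A := hB.preimage ((mPs.comp measurable_fst).prodMk (mPs.comp measurable_snd))
  have hAc := fl_aeconst D mA (fun n p p' => by
    have := hit n (Psi D p) (Psi D p')
    simp only [Tm, Psii_Psi] at this
    rw [hA, Set.mem_preimage, Set.mem_preimage]
    exact this)
  have hac : mu D ≪ (volume : Measure Torus2) := withDensity_absolutelyContinuous _ _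
  have hmp : MeasurePreserving (fun x : XX => (Psii D x.1, Psii D x.2)) VV ((mu D).prod (mu D)) :=
    (Psii_mp D).prod (Psii_mp D)
  have qPP : Measure.QuasiMeasurePreserving (fun x : XX => (Psii D x.1, Psii D x.2)) VV VV :=
    hmp.quasiMeasurePreserving.mono_right (hac.prod hac)
  have hBA : B = (fun x : XX => (Psii D x.1, Psii D x.2)) ⁻¹' A := by
    rw [hA]; ext x; simp [Psi_Psii]
  rw [hBA]
  have h9 : EventuallyConst (A ∘ fun x : XX => (Psii D x.1, Psii D x.2)) (ae VV) := hAc.comp_tendsto qPP.tendsto_ae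
  exact h9

end SlowT

end SlowTSec9b

noncomputable section SlowTSec10

namespace SlowT

variable {t : ℝ} (D : Data t)

lemma sn_second (θ : Torus1) (u h : ℝ) :
    |sn (θ + (h : Torus1) + (u : Torus1)) - sn (θ + (h : Torus1)) -
      (sn (θ + (u : Torus1)) - sn θ)| ≤ (2 * Real.pi) ^ 2 * |u| * |h| := by
  obtain ⟨x, rfl⟩ := exists_rep θ
  simp only [← AddCircle.coe_add, sn_coe]
  have h1 : ∀ a b : ℝ, |Real.cos a - Real.cos b| ≤ |a - b| := fun a b => by
    have := sin_sub_sin_le (a + Real.pi / 2) (b + Real.pi / 2)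
    simpa [Real.sin_add_pi_div_two] using this
  have e : Real.sin (2 * Real.pi * (x + h + u)) - Real.sin (2 * Real.pi * (x + h)) -
      (Real.sin (2 * Real.pi * (x + u)) - Real.sin (2 * Real.pi * x)) =
      2 * Real.sin (Real.pi * u) * (Real.cos (2 * Real.pi * (x + h) + Real.pi * u) -
        Real.cos (2 * Real.pi * x + Real.pi * u)) := by
    rw [Real.sin_sub_sin, Real.sin_sub_sin]
    rw [show (2 * Real.pi * (x + h + u) - 2 * Real.pi * (x + h)) / 2 = Real.pi * u by ring,
      show (2 * Real.pi * (x + u) - 2 * Real.pi * x) / 2 = Real.pi * u by ring,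
      show (2 * Real.pi * (x + h + u) + 2 * Real.pi * (x + h)) / 2 =
        2 * Real.pi * (x + h) + Real.pi * u by ring,
      show (2 * Real.pi * (x + u) + 2 * Real.pi * x) / 2 = 2 * Real.pi * x + Real.pi * u by ring]
    ring
  rw [e, abs_mul, abs_mul, abs_two]
  have h2 : |Real.sin (Real.pi * u)| ≤ Real.pi * |u| := by
    refine Real.abs_sin_le_abs.trans ?_
    rw [abs_mul, abs_of_pos Real.pi_pos]
  have h3 := h1 (2 * Real.pi * (x + h) + Real.pi * u) (2 * Real.pi * x + Real.pi * u)
  rw [show 2 * Real.pi * (x + h) + Real.pi * u - (2 * Real.pi * x + Real.pi * u) =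
    2 * Real.pi * h by ring, abs_mul, abs_of_pos Real.two_pi_pos] at h3
  calc _ ≤ 2 * (Real.pi * |u|) * (2 * Real.pi * |h|) := by gcongr
    _ = _ := by ring

lemma min_interp {τ b s : ℝ} (hτ : 0 ≤ τ) (hb : 0 < b) (hs0 : 0 < s) (hs1 : s ≤ 1) :
    min τ (1 / b) ≤ τ ^ s * b ^ (s - 1) := by
  have e : b ^ (s - 1) = (1 / b) ^ (1 - s) := by
    rw [one_div, Real.inv_rpow hb.le, ← Real.rpow_neg hb.le]; congr 1; ring
  rw [e]
  have h1b : 0 < 1 / b := by positivity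
  rcases le_total τ (1 / b) with h | h
  · rw [min_eq_left h]
    calc τ = τ ^ s * τ ^ (1 - s) := by
          rw [← Real.rpow_add_of_nonneg hτ hs0.le (by linarith)]; simp
      _ ≤ _ := by gcongr
  · rw [min_eq_right h]
    calc 1 / b = (1 / b) ^ s * (1 / b) ^ (1 - s) := by
          rw [← Real.rpow_add h1b]; simp
      _ ≤ _ := by gcongr

/-- horizontal shift -/
def hor (h : ℝ) : Torus2 := ((h : Torus1), 0)

lemma th_hor (k : ℕ) (h : ℝ) : th D k (hor h) = ((D.q k * h : ℝ) : Torus1) := by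
  rw [th_apply, hor]
  simp only [smul_zero, sub_zero]
  rw [← AddCircle.coe_nsmul, nsmul_eq_mul]

lemma gk_hdiff {δ : ℝ} (hδ : 0 < δ) (hs : t + δ ≤ 1) (k : ℕ) (p : Torus2) (h τ : ℝ) (hτ : 0 ≤ τ) :
    |gk D k (p + hor h) τ - gk D k p τ| ≤ 7 * |h| * τ ^ (t + δ) * (D.q k * D.β k ^ δ) := by
  have hb := D.β_pos k
  have hc := c_pos D k
  have hq := one_le_q (D := D) k
  have hpi := Real.pi_pos
  have hpi2 : Real.pi ≤ 3.5 := by linarith [Real.pi_lt_d2]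
  have hco := coef_pos D k
  have ht := D.t_pos
  simp only [gk, map_add, th_hor]
  rw [← mul_sub, abs_mul, abs_of_pos hco]
  have b1 := sn_second (th D k p) (D.β k * τ) (D.q k * h)
  have b2 : |sn (th D k p + ((D.q k * h : ℝ) : Torus1) + ((D.β k * τ : ℝ) : Torus1)) -
      sn (th D k p + ((D.q k * h : ℝ) : Torus1)) -
      (sn (th D k p + ((D.β k * τ : ℝ) : Torus1)) - sn (th D k p))| ≤
      4 * Real.pi * (D.q k * |h|) := by
    have h1 := sn_diff (th D k p + ((D.β k * τ : ℝ) : Torus1)) (D.q k * h) 0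
    have h2 := sn_diff (th D k p) (D.q k * h) 0
    rw [AddCircle.coe_zero, add_zero, sub_zero, abs_mul (D.q k : ℝ), Nat.abs_cast] at h1 h2
    rw [add_right_comm (th D k p)]
    rw [abs_le] at h1 h2 ⊢
    constructor <;> linarith [h1.1, h1.2, h2.1, h2.2]
  rw [abs_mul, abs_mul, abs_of_pos hb, abs_of_nonneg hτ, Nat.abs_cast] at b1
  set X := |sn (th D k p + ((D.q k * h : ℝ) : Torus1) + ((D.β k * τ : ℝ) : Torus1)) -
      sn (th D k p + ((D.q k * h : ℝ) : Torus1)) -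
      (sn (th D k p + ((D.β k * τ : ℝ) : Torus1)) - sn (th D k p))| with hX
  have b3 : D.c k / (2 * Real.pi * D.β k) * X ≤ 7 * (D.c k * D.q k * |h|) * min τ (1 / D.β k) := by
    rcases le_total τ (1 / D.β k) with hh | hh
    · rw [min_eq_left hh]
      calc _ ≤ D.c k / (2 * Real.pi * D.β k) * ((2 * Real.pi) ^ 2 * (D.β k * τ) * (D.q k * |h|)) := by
            gcongr
        _ = (2 * Real.pi) * (D.c k * D.q k * |h|) * τ := by field_simp
        _ ≤ _ := by gcongr; linarith
    · rw [min_eq_right hh]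
      calc _ ≤ D.c k / (2 * Real.pi * D.β k) * (4 * Real.pi * (D.q k * |h|)) := by
            gcongr
        _ = 2 * (D.c k * D.q k * |h|) * (1 / D.β k) := by field_simp; ring
        _ ≤ _ := by gcongr; norm_num
  refine b3.trans ?_
  calc _ ≤ 7 * (D.c k * D.q k * |h|) * (τ ^ (t + δ) * D.β k ^ (t + δ - 1)) := by
        gcongr; exact min_interp hτ hb (by linarith) hs
    _ = 7 * |h| * τ ^ (t + δ) * (D.q k * (D.β k ^ (1 - t) * D.β k ^ (t + δ - 1))) := by
        rw [D.hc]; ring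
    _ = _ := by
        rw [← Real.rpow_add hb]; congr 4; ring

/-- The distortion constant. -/
def QQ (δ : ℝ) : ℝ := ∑' k, (D.q k : ℝ) * D.β k ^ δ

lemma QQ_nonneg (δ : ℝ) : 0 ≤ QQ D δ :=
  tsum_nonneg fun k => mul_nonneg (Nat.cast_nonneg _) (Real.rpow_nonneg (D.β_pos k).le _)

lemma GG_hdiff {δ : ℝ} (hδ : 0 < δ) (hs : t + δ ≤ 1) (p : Torus2) (h τ : ℝ) (hτ : 0 ≤ τ) :
    |GG D (p + hor h) τ - GG D p τ| ≤ 7 * |h| * τ ^ (t + δ) * QQ D δ := by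
  have e : GG D (p + hor h) τ - GG D p τ = ∑' k, (gk D k (p + hor h) τ - gk D k p τ) := by
    rw [(summable_gk D _ τ).tsum_sub (summable_gk D p τ)]; simp only [GG]; ring
  have hsum := (D.qβ_summable δ hδ).mul_left (7 * |h| * τ ^ (t + δ))
  rw [e, ← Real.norm_eq_abs, QQ, ← tsum_mul_left]
  exact tsum_of_norm_bounded hsum.hasSum fun k => gk_hdiff D hδ hs k p h τ hτ

end SlowT

end SlowTSec10

noncomputable section SlowTSec11

namespace SlowT

lemma bowen_lt {X : Type*} [PseudoMetricSpace X] (T : X → X) (n : ℕ) (x y : X) {ε : ℝ}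
    (hε : 0 < ε) : bowenDist T n x y < ε ↔ ∀ i < n, dist (T^[i] x) (T^[i] y) < ε := by
  lift ε to ℝ≥0 using hε.le
  unfold bowenDist
  rw [NNReal.coe_lt_coe, Finset.sup_lt_iff (by simpa using hε)]
  simp only [Finset.mem_range, ← NNReal.coe_lt_coe, coe_nndist]

lemma exists_rep01 (θ : Torus1) : ∃ x : ℝ, (x : Torus1) = θ ∧ 0 ≤ x ∧ x < 1 := by
  obtain ⟨x, rfl⟩ := exists_rep θ
  refine ⟨Int.fract x, ?_, Int.fract_nonneg _, Int.fract_lt_one _⟩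
  rw [Int.fract, AddCircle.coe_sub, sub_eq_self, AddCircle.coe_eq_zero_iff]
  exact ⟨⌊x⌋, by simp⟩

lemma exists_grid {x R : ℝ} (hx : 0 ≤ x) (hxR : x < R) {J : ℕ} (hJ : 0 < J) :
    ∃ j : ℕ, (j : ℝ) < R * J ∧ |x - j / J| ≤ 1 / J := by
  have hJ' : (0 : ℝ) < J := by exact_mod_cast hJ
  have h1 := Nat.floor_le (mul_nonneg hx hJ'.le)
  have h2 := Nat.lt_floor_add_one (x * J)
  refine ⟨⌊x * J⌋₊, h1.trans_lt (by gcongr), ?_⟩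
  rw [show x - (⌊x * J⌋₊ : ℝ) / J = (x * J - ⌊x * J⌋₊) / J by field_simp, abs_div,
    abs_of_pos hJ', abs_of_nonneg (by linarith)]
  gcongr; linarith

variable {t : ℝ} (D : Data t)

lemma fl_param (p : Torus2) : ∃ z σ : ℝ, 0 ≤ z ∧ z < 1 ∧ 0 ≤ σ ∧ σ < 2 ∧ p = fl D σ (hor z) := by
  obtain ⟨y, hy, hy0, hy1⟩ := exists_rep01 p.2
  obtain ⟨z, hz, hz0, hz1⟩ := exists_rep01 (p.1 - ((D.α * y : ℝ) : Torus1))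
  have hl := GG_lip D (hor z) y 0
  rw [GG_zero, sub_zero, sub_zero, abs_of_nonneg hy0, abs_le] at hl
  refine ⟨z, GG D (hor z) y, hz0, hz1, by linarith, by linarith, ?_⟩
  rw [fl_GG, hor, vv]
  ext1 <;> simp [hz, hy]

lemma fl_dist {δ : ℝ} (hδ : 0 < δ) (hs : t + δ ≤ 1) (z' h σ σ' : ℝ) (hσ' : 0 ≤ σ')
    (hσ'' : σ' ≤ 2) {i n : ℕ} (hin : i < n) :
    ‖fl D i (fl D σ (hor z' + hor h)) - fl D i (fl D σ' (hor z'))‖ ≤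
      3 * |σ - σ'| + |h| * (n : ℝ) ^ (t + δ) * (1 + 64 * QQ D δ) := by
  have ht := D.t_pos
  have hQ := QQ_nonneg D δ
  have hi : (i : ℝ) + 1 ≤ n := by exact_mod_cast hin
  have hi0 : (0 : ℝ) ≤ i := Nat.cast_nonneg i
  rw [← fl_add, ← fl_add, fl, fl]
  set p' := hor z'
  set τ' := tau D p' (σ' + i) with hτ'
  set τ := tau D (p' + hor h) (σ + i) with hτ
  have hb := tau_bounds D p' (σ' + i) (by positivity)
  rw [← hτ'] at hb
  have hτ0 : 0 ≤ τ' := by linarith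
  have hτ4 : τ' ≤ 4 * n := by linarith
  have hd := tau_diff D (p' + hor h) p' (σ + i) (σ' + i)
  rw [← hτ, ← hτ', add_sub_add_right_eq_sub] at hd
  have hg := GG_hdiff D hδ hs p' h τ' hτ0
  have h4 : τ' ^ (t + δ) ≤ 4 * (n : ℝ) ^ (t + δ) := by
    calc τ' ^ (t + δ) ≤ (4 * n : ℝ) ^ (t + δ) := by gcongr
      _ = (4 : ℝ) ^ (t + δ) * (n : ℝ) ^ (t + δ) := Real.mul_rpow (by norm_num) (by positivity)
      _ ≤ 4 ^ (1 : ℝ) * (n : ℝ) ^ (t + δ) := by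
          gcongr
          norm_num
      _ = _ := by norm_num
  have hn1 : (1 : ℝ) ≤ (n : ℝ) ^ (t + δ) := Real.one_le_rpow (by linarith) (by linarith)
  have e : p' + hor h + vv D τ - (p' + vv D τ') = hor h + vv D (τ - τ') := by
    have : vv D τ = vv D (τ - τ') + vv D τ' := by rw [← vv_add]; congr 1; ring
    rw [this]; abel
  rw [e]
  have hh : ‖hor h‖ ≤ |h| := by
    rw [hor, Prod.norm_def]; simp only [norm_zero]
    rw [max_eq_left (norm_nonneg _)]; exact norm_coe_le h
  have hg2 : 7 * |h| * τ' ^ (t + δ) * QQ D δ ≤ 28 * (|h| * (n : ℝ) ^ (t + δ) * QQ D δ) := by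
    calc _ ≤ 7 * |h| * (4 * (n : ℝ) ^ (t + δ)) * QQ D δ := by gcongr
      _ = _ := by ring
  have hW : 0 ≤ |h| * (n : ℝ) ^ (t + δ) * QQ D δ := by positivity
  have h5 : |h| ≤ |h| * (n : ℝ) ^ (t + δ) := le_mul_of_one_le_right (abs_nonneg _) hn1
  have h6 := abs_nonneg (σ - σ')
  calc _ ≤ ‖hor h‖ + ‖vv D (τ - τ')‖ := norm_add_le _ _
    _ ≤ |h| + 2 * |τ - τ'| := add_le_add hh (norm_vv_le D _)
    _ ≤ |h| + 2 * (10 / 9 * (|σ - σ'| + 28 * (|h| * (n : ℝ) ^ (t + δ) * QQ D δ))) := by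
        have := hg.trans hg2
        linarith
    _ ≤ _ := by nlinarith

lemma upper_cover {δ : ℝ} (hδ : 0 < δ) (hs : t + δ ≤ 1) {ε : ℝ} (hε : 0 < ε) :
    ∃ C : ℝ, 0 < C ∧ ∀ n : ℕ, 1 ≤ n → ∃ F : Finset Torus2, (F.card : ℝ) ≤ C * (n : ℝ) ^ (t + δ) ∧
      ∀ y, ∃ x ∈ F, bowenDist (Tm D 1) n x y < ε := by
  classical
  obtain ⟨L, hL, hLip⟩ := Psi_lip D
  have ht := D.t_pos
  have hQ := QQ_nonneg D δ
  set A := 1 + 64 * QQ D δ with hA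
  have hA0 : 0 < A := by positivity
  obtain ⟨M, hM⟩ := exists_nat_gt (6 * L / ε)
  have hM0 : (0 : ℝ) < M := lt_trans (by positivity) hM
  have hM0' : 0 < M := by exact_mod_cast hM0
  refine ⟨(2 * M + 1) * (2 * A * L / ε + 2), by positivity, fun n hn => ?_⟩
  have hn1' : (1 : ℝ) ≤ n := by exact_mod_cast hn
  have hn1 : (1 : ℝ) ≤ (n : ℝ) ^ (t + δ) := Real.one_le_rpow hn1' (by linarith)
  set W := (n : ℝ) ^ (t + δ) with hW
  set J := ⌈A * W * (2 * L) / ε⌉₊ + 1 with hJ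
  have hJ0 : 0 < J := Nat.succ_pos _
  have hJ0' : (0 : ℝ) < J := by exact_mod_cast hJ0
  have hJ1 : A * W * (2 * L) / ε < J := by
    rw [hJ]; push_cast; linarith [Nat.le_ceil (A * W * (2 * L) / ε)]
  have hJ2 : (J : ℝ) ≤ (2 * A * L / ε + 2) * W := by
    have : (J : ℝ) ≤ A * W * (2 * L) / ε + 2 := by
      rw [hJ]; push_cast; linarith [Nat.ceil_lt_add_one (a := A * W * (2 * L) / ε) (by positivity)]
    refine this.trans ?_
    have e : (2 * A * L / ε + 2) * W = A * W * (2 * L) / ε + 2 * W := by ring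
    linarith
  refine ⟨((Finset.range (2 * M + 1)) ×ˢ (Finset.range J)).image
    fun ab => Psi D (fl D ((ab.1 : ℝ) / M) (hor ((ab.2 : ℝ) / J))), ?_, ?_⟩
  · have h1 := Finset.card_image_le (s := (Finset.range (2 * M + 1)) ×ˢ (Finset.range J))
      (f := fun ab => Psi D (fl D ((ab.1 : ℝ) / M) (hor ((ab.2 : ℝ) / J))))
    rw [Finset.card_product, Finset.card_range, Finset.card_range] at h1
    have h2 : ((((Finset.range (2 * M + 1)) ×ˢ (Finset.range J)).image
      fun ab => Psi D (fl D ((ab.1 : ℝ) / M) (hor ((ab.2 : ℝ) / J)))).card : ℝ) ≤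
        (2 * M + 1) * J := by exact_mod_cast h1
    refine h2.trans ?_
    rw [mul_assoc]
    gcongr
  · intro y
    obtain ⟨z, σ, hz0, hz1, hσ0, hσ2, hp⟩ := fl_param D (Psii D y)
    obtain ⟨a, ha, ha'⟩ := exists_grid hσ0 hσ2 hM0'
    obtain ⟨b, hb, hb'⟩ := exists_grid hz0 hz1 hJ0
    have ha2 : a < 2 * M + 1 := by
      have : a < 2 * M := by exact_mod_cast ha
      omega
    have hb2 : b < J := by
      have : (b : ℝ) < J := by linarith
      exact_mod_cast this
    refine ⟨_, Finset.mem_image.2 ⟨(a, b), Finset.mem_product.2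
      ⟨Finset.mem_range.2 ha2, Finset.mem_range.2 hb2⟩, rfl⟩, ?_⟩
    rw [bowen_lt _ _ _ _ hε]
    intro i hi
    rw [Tm_iter, dist_comm, dist_eq_norm, Tm, Tm, Psii_Psi, hp]
    have hz : hor z = hor ((b : ℝ) / J) + hor (z - b / J) := by
      simp only [hor, Prod.mk_add_mk, ← AddCircle.coe_add, add_zero]
      congr 2; ring
    rw [hz]
    have ha3 : (a : ℝ) / M ≤ 2 := by rw [div_le_iff₀ hM0]; exact ha.le
    have h3 := fl_dist D hδ hs ((b : ℝ) / J) (z - b / J) σ ((a : ℝ) / M) (by positivity) ha3 hi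
    rw [← hW, ← hA] at h3
    have h4 := hLip (fl D i (fl D σ (hor ((b : ℝ) / J) + hor (z - b / J))))
      (fl D i (fl D ((a : ℝ) / M) (hor ((b : ℝ) / J))))
    refine h4.trans_lt ?_
    calc _ ≤ L * (3 * (1 / M) + 1 / J * W * A) := by
          refine mul_le_mul_of_nonneg_left (h3.trans ?_) hL.le
          gcongr
      _ = 3 * L / M + A * W * L / J := by field_simp
      _ < ε / 2 + ε / 2 := by
          apply add_lt_add
          · rw [div_lt_iff₀ hM0]
            rw [div_lt_iff₀ hε] at hM
            linarith
          · rw [div_lt_iff₀ hJ0']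
            rw [div_lt_iff₀ hε] at hJ1
            linarith
      _ = ε := by ring

lemma upper_num {δ : ℝ} (hδ : 0 < δ) (hs : t + δ ≤ 1) {ε : ℝ} (hε : 0 < ε) :
    ∃ C : ℝ, 0 < C ∧ ∀ n : ℕ, 1 ≤ n →
      (bowenCoverNum (Tm D 1) n ε : ℝ) ≤ C * (n : ℝ) ^ (t + δ) := by
  obtain ⟨C, hC, h⟩ := upper_cover D hδ hs hε
  refine ⟨C, hC, fun n hn => ?_⟩
  obtain ⟨F, hF, hF2⟩ := h n hn
  refine le_trans ?_ hF
  have : bowenCoverNum (Tm D 1) n ε ≤ F.card := Nat.sInf_le ⟨F, rfl, hF2⟩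
  exact_mod_cast this

lemma exists_min_cover {ε : ℝ} (hε : 0 < ε) {n : ℕ} (hn : 1 ≤ n) :
    ∃ F : Finset Torus2, F.card = bowenCoverNum (Tm D 1) n ε ∧
      ∀ y, ∃ x ∈ F, bowenDist (Tm D 1) n x y < ε := by
  have ht := D.t_le
  obtain ⟨C, hC, h⟩ := upper_cover D (δ := 1 / 2) (by norm_num) (by linarith) hε
  obtain ⟨F, hF, hF2⟩ := h n hn
  exact Nat.sInf_mem (s := {N : ℕ | ∃ F : Finset Torus2, F.card = N ∧
    ∀ y, ∃ x ∈ F, bowenDist (Tm D 1) n x y < ε}) ⟨F.card, F, rfl, hF2⟩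

lemma upper_limsup {ε : ℝ} (hε : 0 < ε) {u : ℝ} (hu : t < u) :
    ¬ 0 < Filter.atTop.limsup fun n =>
      (bowenCoverNum (Tm D 1) n ε : ℝ≥0∞) / ENNReal.ofReal (polScale n u) := by
  have ht := D.t_le
  set δ := min ((u - t) / 2) (1 / 2) with hδ
  have hδ0 : 0 < δ := lt_min (by linarith) (by norm_num)
  have hδ1 : t + δ ≤ 1 := by linarith [min_le_right ((u - t) / 2) (1 / 2 : ℝ)]
  have hδ2 : t + δ < u := by linarith [min_le_left ((u - t) / 2) (1 / 2 : ℝ)]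
  obtain ⟨C, hC, h⟩ := upper_num D hδ0 hδ1 hε
  have hlim : Tendsto (fun n : ℕ => ENNReal.ofReal (C * (n : ℝ) ^ (-(u - (t + δ)))))
      atTop (𝓝 0) := by
    have h1 : Tendsto (fun n : ℕ => C * (n : ℝ) ^ (-(u - (t + δ)))) atTop (𝓝 (C * 0)) :=
      ((tendsto_rpow_neg_atTop (by linarith)).comp tendsto_natCast_atTop_atTop).const_mul C
    have := ENNReal.tendsto_ofReal h1
    simpa using this
  have hle : Tendsto (fun n : ℕ =>
      (bowenCoverNum (Tm D 1) n ε : ℝ≥0∞) / ENNReal.ofReal (polScale n u)) atTop (𝓝 0) := by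
    refine tendsto_of_tendsto_of_tendsto_of_le_of_le' tendsto_const_nhds hlim
      (Eventually.of_forall fun _ => zero_le) ?_
    filter_upwards [eventually_ge_atTop 1] with n hn
    have hn0 : (0 : ℝ) < n := by exact_mod_cast hn
    have hp : 0 < polScale n u := Real.rpow_pos_of_pos hn0 _
    rw [← ENNReal.ofReal_natCast, ← ENNReal.ofReal_div_of_pos hp]
    refine ENNReal.ofReal_le_ofReal ?_
    rw [div_le_iff₀ hp]
    refine (h n hn).trans (le_of_eq ?_)
    rw [polScale, mul_assoc, ← Real.rpow_add hn0]
    congr 2; ring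
  rw [hle.limsup_eq]
  exact lt_irrefl _

end SlowT

end SlowTSec11

noncomputable section SlowTSec12

namespace SlowT

lemma sin_ge_half {x : ℝ} (h1 : 1 / 12 ≤ x) (h2 : x ≤ 5 / 12) :
    1 / 2 ≤ Real.sin (2 * Real.pi * x) := by
  have hp := Real.pi_pos
  rw [← Real.cos_pi_div_two_sub, ← Real.cos_abs, ← Real.cos_pi_div_three]
  apply Real.cos_le_cos_of_nonneg_of_le_pi (abs_nonneg _) (by linarith)
  rw [abs_le]
  constructor <;> nlinarith

variable {t : ℝ} (D : Data t)

lemma hor_zero : hor 0 = 0 := by simp [hor]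

lemma gk_ge (k : ℕ) (τ : ℝ) (h1 : 1 / 12 ≤ D.β k * τ) (h2 : D.β k * τ ≤ 5 / 12) :
    0.0793 * (D.c k / D.β k) ≤ gk D k 0 τ := by
  have hs := sin_ge_half h1 h2
  have hb := D.β_pos k
  have hc := c_pos D k
  rw [gk, map_zero, zero_add, sn_coe, show (0 : Torus1) = ((0 : ℝ) : Torus1) by simp, sn_coe]
  simp only [mul_zero, Real.sin_zero, sub_zero]
  have hp := Real.pi_pos
  have hp2 := Real.pi_lt_d2
  calc 0.0793 * (D.c k / D.β k) ≤ D.c k / (2 * Real.pi * D.β k) * (1 / 2) := by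
        rw [show D.c k / (2 * Real.pi * D.β k) * (1 / 2) = (1 / (4 * Real.pi)) * (D.c k / D.β k) by
          field_simp; norm_num]
        have : 0.0793 ≤ 1 / (4 * Real.pi) := by
          rw [le_div_iff₀ (by positivity)]; linarith
        gcongr
    _ ≤ _ := mul_le_mul_of_nonneg_left hs (coef_pos D k).le

/-- the special time -/
def mk (k : ℕ) : ℕ := ⌊1 / (4 * D.β k)⌋₊

lemma spread_ev : ∀ᶠ k in atTop, 1 / 10 * ((mk D k + 1 : ℕ) : ℝ) ^ t ≤
    tau D (rho D k) (mk D k) - tau D 0 (mk D k) := by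
  have e1 := D.low2.eventually (ge_mem_nhds (show (0 : ℝ) < 0.005 by norm_num))
  have e2 := D.β_lim.eventually (ge_mem_nhds (show (0 : ℝ) < 0.01 by norm_num))
  filter_upwards [e1, e2] with k h1 h2
  have hb := D.β_pos k
  have hc := c_pos D k
  have hcb : 0 < D.c k / D.β k := by positivity
  rw [div_le_iff₀ hcb] at h1
  set m := mk D k with hm
  have hm1 : (m : ℝ) * D.β k ≤ 1 / 4 := by
    have : (m : ℝ) ≤ 1 / (4 * D.β k) := Nat.floor_le (by positivity)
    rw [le_div_iff₀ (by positivity)] at this; linarith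
  have hm2 : 1 / 4 ≤ ((m : ℝ) + 1) * D.β k := by
    have : 1 / (4 * D.β k) < (m : ℝ) + 1 := Nat.lt_floor_add_one _
    rw [div_lt_iff₀ (by positivity)] at this; linarith
  have key : ∀ p : Torus2, 1 / 12 ≤ D.β k * tau D p m ∧ D.β k * tau D p m ≤ 5 / 12 ∧
      |m - tau D p m - gk D k p (tau D p m)| ≤ 0.01 * (D.c k / D.β k) := by
    intro p
    obtain ⟨b1, b2⟩ := tau_bounds D p m (Nat.cast_nonneg _)
    have c1 : D.β k * (10 / 11 * m) ≤ D.β k * tau D p m := by gcongr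
    have c2 : D.β k * tau D p m ≤ D.β k * (10 / 9 * m) := by gcongr
    refine ⟨by nlinarith, by nlinarith, ?_⟩
    have hg := GG_main D p (tau D p m) k
    rw [GG_tau] at hg
    refine hg.trans ?_
    have t0 : 0 ≤ tau D p m := le_trans (by positivity) b1
    rw [abs_of_nonneg t0]
    have hle : 1 ≤ D.c k / D.β k := by
      rw [← inv_div, β_div_c]
      apply (one_le_inv₀ (Real.rpow_pos_of_pos hb _)).2
      exact Real.rpow_le_one hb.le (D.β_le k) D.t_pos.le
    have : tau D p m * D.β k ^ 2 ≤ 5 / 12 * 0.01 := by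
      rw [show tau D p m * D.β k ^ 2 = (D.β k * tau D p m) * D.β k by ring]
      gcongr; nlinarith
    norm_num at this h1 ⊢
    linarith
  obtain ⟨a1, a2, a3⟩ := key 0
  obtain ⟨b1, b2, b3⟩ := key (rho D k)
  have g1 := gk_ge D k _ a1 a2
  have g2 := gk_ge D k _ b1 b2
  have g3 := gk_rho_self D k 0 (tau D (rho D k) m)
  rw [zero_add] at g3
  rw [abs_le] at a3 b3
  have hn : ((m + 1 : ℕ) : ℝ) ^ t ≤ D.c k / D.β k := by
    rw [← inv_div, β_div_c, ← Real.inv_rpow hb.le]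
    have ht := D.t_pos.le
    gcongr
    push_cast
    rw [← one_div, le_div_iff₀ hb]; nlinarith
  norm_num at *
  linarith

lemma close_of_bowen {L ε : ℝ} (hL : ∀ p p', ‖Psii D p - Psii D p'‖ ≤ L * ‖p - p'‖)
    (hL0 : 0 < L) (hε : 0 < ε) (hLε : 2 * L * ε ≤ 1 / 10) {n : ℕ} {x : Torus2} {z z' : ℝ}
    (h : bowenDist (Tm D 1) n x (Psi D (hor z)) < ε)
    (h' : bowenDist (Tm D 1) n x (Psi D (hor z')) < ε) :
    ∀ i < n, |tau D (hor z) i - tau D (hor z') i| ≤ 1 / 10 := by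
  rw [bowen_lt _ _ _ _ hε] at h h'
  have hn : ∀ i < n, ‖((tau D (hor z) i - tau D (hor z') i : ℝ) : Torus1)‖ ≤ 1 / 10 := by
    intro i hi
    have h1 := h i hi
    have h2 := h' i hi
    have h3 : ‖(Tm D 1)^[i] (Psi D (hor z)) - (Tm D 1)^[i] (Psi D (hor z'))‖ ≤ 2 * ε := by
      rw [← dist_eq_norm]
      have := dist_triangle_left ((Tm D 1)^[i] (Psi D (hor z))) ((Tm D 1)^[i] (Psi D (hor z')))
        ((Tm D 1)^[i] x)
      linarith
    have h4 := hL ((Tm D 1)^[i] (Psi D (hor z))) ((Tm D 1)^[i] (Psi D (hor z')))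
    rw [Tm_iter, Tm, Tm, Psii_Psi, Psii_Psi, Psii_Psi, Psii_Psi, fl, fl, vv, vv, hor, hor] at h4
    rw [Tm_iter, Tm, Tm, Psii_Psi, Psii_Psi, fl, fl, vv, vv, hor, hor] at h3
    have h5 := (norm_snd_le _).trans h4
    simp only [Prod.snd_sub, Prod.snd_add, zero_add] at h5
    rw [← AddCircle.coe_sub] at h5
    refine h5.trans (le_trans ?_ hLε)
    rw [mul_comm 2 L, mul_assoc]
    exact mul_le_mul_of_nonneg_left h3 hL0.le
  intro i
  induction i with
  | zero => intro _; simp [tau_zero]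
  | succ i ih =>
    intro hi
    have h1 := ih (by omega)
    have h2 := hn (i + 1) hi
    have b1 := tau_bounds D (fl D i (hor z)) 1 zero_le_one
    have b2 := tau_bounds D (fl D i (hor z')) 1 zero_le_one
    rw [norm_coe_eq] at h2
    · exact h2
    · push_cast
      rw [tau_add, tau_add, abs_le]
      rw [abs_le] at h1
      constructor <;> linarith

lemma lower_num : ∃ ε₀ : ℝ, 0 < ε₀ ∧ ∀ ε, 0 < ε → ε ≤ ε₀ → ∀ᶠ k in atTop,
    1 / 2 * ((mk D k + 1 : ℕ) : ℝ) ^ t ≤ bowenCoverNum (Tm D 1) (mk D k + 1) ε := by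
  obtain ⟨L, hL, hLip⟩ := Psii_lip D
  refine ⟨1 / (20 * L), by positivity, fun ε hε hε' => ?_⟩
  rw [le_div_iff₀ (by positivity)] at hε'
  filter_upwards [spread_ev D] with k hk
  set m := mk D k with hm
  set ℓ := 1 / 10 * ((m + 1 : ℕ) : ℝ) ^ t with hℓ
  have hℓ0 : 0 ≤ ℓ := by positivity
  obtain ⟨F, hF, hcov⟩ := exists_min_cover D hε (n := m + 1) (by omega)
  rw [← hF]
  set J := ⌊5 * ℓ⌋₊ with hJ
  have hJ1 : (J : ℝ) ≤ 5 * ℓ := Nat.floor_le (by positivity)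
  have hJ2 : 5 * ℓ < J + 1 := Nat.lt_floor_add_one _
  have hcont : Continuous fun z : ℝ => tau D (hor z) m := by
    apply cont_tau_comp D _ continuous_const
    unfold hor
    exact (AddCircle.continuous_mk' 1).prodMk continuous_const
  have hz2 : (0 : ℝ) ≤ 1 / (2 * D.q k) := by positivity
  have hivt := intermediate_value_Icc hz2 hcont.continuousOn
  have hr : hor (1 / (2 * D.q k)) = rho D k := rfl
  rw [hor_zero, hr] at hivt
  have hz : ∀ j : ℕ, j ≤ J → ∃ z : ℝ, tau D (hor z) m = tau D 0 m + j / 5 := by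
    intro j hj
    have hj' : (j : ℝ) ≤ J := by exact_mod_cast hj
    have : tau D 0 m + (j : ℝ) / 5 ∈ Icc (tau D 0 m) (tau D (rho D k) m) := by
      constructor
      · have : (0 : ℝ) ≤ j / 5 := by positivity
        linarith
      · linarith
    obtain ⟨z, _, hz⟩ := hivt this
    exact ⟨z, hz⟩
  have hz' : ∀ j : ℕ, ∃ z : ℝ, j ≤ J → tau D (hor z) m = tau D 0 m + j / 5 := by
    intro j
    by_cases hj : j ≤ J
    · obtain ⟨z, h⟩ := hz j hj
      exact ⟨z, fun _ => h⟩
    · exact ⟨0, fun h => absurd h hj⟩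
  choose z hzz using hz'
  choose ctr hctr hctr2 using fun j => hcov (Psi D (hor (z j)))
  have hcard : J + 1 ≤ F.card := by
    have := Finset.card_le_card_of_injOn (s := Finset.range (J + 1)) (t := F) ctr
      (fun j _ => hctr j) ?_
    · simpa using this
    · intro i hi j hj hij
      simp only [Finset.coe_range, mem_Iio] at hi hj
      have h2 := hctr2 j
      rw [← hij] at h2
      have := close_of_bowen D hLip hL hε (by linarith) (hctr2 i) h2 m (by omega)
      rw [hzz i (by omega), hzz j (by omega), abs_le] at this
      have h3 : (i : ℝ) - j < 1 := by linarith
      have h4 : (j : ℝ) - i < 1 := by linarith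
      have h5 : i < j + 1 := by exact_mod_cast (show (i : ℝ) < j + 1 by linarith)
      have h6 : j < i + 1 := by exact_mod_cast (show (j : ℝ) < i + 1 by linarith)
      omega
  have : ((J : ℝ) + 1) ≤ F.card := by exact_mod_cast hcard
  linarith

lemma mk_lim : Tendsto (fun k => mk D k + 1) atTop atTop := by
  have h1 : Tendsto (fun k => 4 * D.β k) atTop (𝓝[>] 0) := by
    rw [tendsto_nhdsWithin_iff]
    refine ⟨by simpa using D.β_lim.const_mul 4, Eventually.of_forall fun k => ?_⟩
    have := D.β_pos k
    simp only [mem_Ioi]; positivity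
  have h2 : Tendsto (fun k => 1 / (4 * D.β k)) atTop atTop := by
    simp only [one_div]
    exact tendsto_inv_nhdsGT_zero.comp h1
  exact tendsto_atTop_mono (fun k => Nat.le_succ (mk D k)) (tendsto_nat_floor_atTop.comp h2)

lemma lower_limsup : ∃ ε₀ : ℝ, 0 < ε₀ ∧ ∀ ε, 0 < ε → ε ≤ ε₀ →
    0 < Filter.atTop.limsup fun n =>
      (bowenCoverNum (Tm D 1) n ε : ℝ≥0∞) / ENNReal.ofReal (polScale n t) := by
  obtain ⟨ε₀, h0, h⟩ := lower_num D
  refine ⟨ε₀, h0, fun ε hε hε' => ?_⟩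
  have hk := h ε hε hε'
  refine lt_of_lt_of_le (b := ENNReal.ofReal (1 / 2)) (by simp) ?_
  refine Filter.le_limsup_of_frequently_le ?_
  refine (mk_lim D).frequently (Eventually.frequently ?_)
  filter_upwards [hk] with k hk
  have hp : 0 < polScale (mk D k + 1) t := Real.rpow_pos_of_pos (by positivity) _
  rw [← ENNReal.ofReal_natCast, ← ENNReal.ofReal_div_of_pos hp]
  refine ENNReal.ofReal_le_ofReal ?_
  rw [le_div_iff₀ hp]
  exact hk

lemma ent_eq : Tendsto (topSlowEntFun (Tm D 1) polScale) (𝓝[>] (0 : ℝ)) (𝓝 t) := by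
  obtain ⟨ε₀, h0, h⟩ := lower_limsup D
  refine tendsto_const_nhds.congr' ?_
  filter_upwards [Ioc_mem_nhdsGT h0] with ε hε
  symm
  have : IsGreatest {u : ℝ | 0 < u ∧ 0 < Filter.atTop.limsup fun n =>
      (bowenCoverNum (Tm D 1) n ε : ℝ≥0∞) / ENNReal.ofReal (polScale n u)} t := by
    refine ⟨⟨D.t_pos, h ε hε.1 hε.2⟩, fun u hu => ?_⟩
    by_contra hlt
    exact upper_limsup D hε.1 (not_le.1 hlt) hu.2
  exact this.csSup_eq

end SlowT

end SlowTSec12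

/-- For every integer `K > 1` there exists a weakly mixing `C^K`
volume-preserving diffeomorphism `T` of `𝕋²` whose upper topological slow entropy `E`
with respect to the polynomial scaling family `a^{pol}_m(t) = m^t` satisfies
`1/K⁵ ≤ E < 1/(K⁵ - 2)`. -/
theorem stmt2 (K : ℕ) (hK : 1 < K) :
    ∃ T : Torus2 → Torus2,
      IsCkTorusDiffeo (K : ℕ∞) T ∧
      MeasurePreserving T (volume : Measure Torus2) volume ∧
      WeaklyMixing T (volume : Measure Torus2) ∧
      ∃ E : ℝ,
        Filter.Tendsto (topSlowEntFun T polScale) (𝓝[>] (0 : ℝ)) (𝓝 E) ∧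
        1 / (K : ℝ) ^ 5 ≤ E ∧ E < 1 / ((K : ℝ) ^ 5 - 2) := by
  have hK2 : (2 : ℝ) ≤ K := by exact_mod_cast hK
  have h32 : (32 : ℝ) ≤ (K : ℝ) ^ 5 := by
    calc (32 : ℝ) = 2 ^ 5 := by norm_num
      _ ≤ (K : ℝ) ^ 5 := by gcongr
  have ht0 : 0 < 1 / (K : ℝ) ^ 5 := by positivity
  have ht1 : 1 / (K : ℝ) ^ 5 ≤ 1 / 2 := by
    apply one_div_le_one_div_of_le <;> linarith
  refine ⟨SlowT.Tm (SlowT.mkData ht0 ht1) 1, SlowT.Tm_diffeo _ (by omega), SlowT.Tm_mp _ 1,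
    SlowT.Tm_wm _, 1 / (K : ℝ) ^ 5, SlowT.ent_eq _, le_refl _, ?_⟩
  apply one_div_lt_one_div_of_lt <;> linarith
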